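/- arXiv:1411.5244 — 2 statements merged into one kernel-verified Lean document; each statement's English description precedes it below -/
import Mathlib

section
/- Let v : D̄₁⁺(0) → ℝ be continuous, C¹ on D₁⁺(0), with v = 0 on {x₁ = 0} and ∫_{D₁⁺(0)} |∇v|² dx < ∞. Then ∫_{∂D₁⁺(0)} v² dσ ≤ ∫_{D₁⁺(0)} |∇v|² dx, and equality holds if and only if v(x₁,x₂) = c·x₁ for some constant c ∈ ℝ. In particular the infimum of ∫_{D₁⁺(0)} |∇w|² dx over all such w with ∫_{∂D₁⁺(0)} w² dσ = 1 equals 1 and is attained by w(x) = √(2/π)·x₁. -/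
/-!
The inequality follows from horizontal slicing. At height `y ∈ (-1, 1)` the slice of the half-disk
is the interval `(0, a)` with `a = √(1 - y²)`, and `v` vanishes at its left end, so Cauchy–Schwarz
gives `v(a, y)² / a ≤ ∫₀ᵃ (∂₁v)² dx₁` (`slice_le`). Integrating over `y` with Fubini
(`halfDisk1_fubini`), the right side becomes `∫ (∂₁v)²`, which is at most the Dirichlet energy. With
`y = sin θ`, `a = cos θ` and `dy = cos θ dθ`, the left side becomes exactly the trace `∫ v² dσ`
(`bdry_subst`).

In the equality case `∂₂v = 0`, so `v` is a function of `x₁` alone, and almost every slice is an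
equality case of Cauchy–Schwarz, so that `v` is linear on it (`slice_eq`). Any two abscissas in
`(0, 1)` lie on a common such slice close to the axis, hence the slope is one constant
(`Admissible.linear_of_eq`); continuity extends the formula to the closure. Conversely, for `c·x₁`
every step above is an equality, and its trace is `c² π / 2`, which fixes the normalization
`√(2/π)`.
-/

open MeasureTheory Real Set

noncomputable section

/-- The open half-disk `D₁⁺(0) = {x ∈ ℝ² : |x| < 1, x₁ > 0}` (with `ℝ² = ℂ`). -/
def halfDisk1 : Set ℂ := {x : ℂ | dist x 0 < 1 ∧ 0 < x.re}

/-- Arclength integral of `f` over the circular part `∂D₁⁺(0)` of the boundary,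
parametrized by the angle `θ ∈ (−π/2, π/2)`. -/
def bdryIntR (f : ℂ → ℝ) : ℝ :=
  ∫ θ in Ioo (-(π / 2)) (π / 2), f (circleMap 0 1 θ)

/-- Dirichlet energy `∫_{D₁⁺(0)} |∇v|² dx`. -/
def dirEnergy (v : ℂ → ℝ) : ℝ :=
  ∫ x in halfDisk1, ((fderiv ℝ v x 1) ^ 2 + (fderiv ℝ v x Complex.I) ^ 2)

/-- Admissibility: continuous on the closed half-disk, `C¹` inside, vanishing on the
diameter `{x₁ = 0}`, with finite Dirichlet energy. -/
def Admissible (v : ℂ → ℝ) : Prop :=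
  ContinuousOn v (closure halfDisk1) ∧ ContDiffOn ℝ 1 v halfDisk1 ∧
    (∀ x ∈ closure halfDisk1, x.re = 0 → v x = 0) ∧
    IntegrableOn (fun x => (fderiv ℝ v x 1) ^ 2 + (fderiv ℝ v x Complex.I) ^ 2) halfDisk1

/-! ### One-dimensional slices -/

/-- Integrability of the derivative, deduced from that of its square on a bounded interval. -/
lemma integrableOn_of_sq {f' : ℝ → ℝ} {a : ℝ} (hm : Measurable f')
    (hi : IntegrableOn (fun x => f' x ^ 2) (Ioo 0 a)) : IntegrableOn f' (Ioo 0 a) := by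
  have h2 : MemLp f' 2 (volume.restrict (Ioo 0 a)) :=
    (memLp_two_iff_integrable_sq hm.aestronglyMeasurable).2 hi
  exact h2.integrable (by norm_num)

lemma setIntegral_Ioo_deriv {f f' : ℝ → ℝ} {a : ℝ} (ha : 0 ≤ a) (hc : ContinuousOn f (Icc 0 a))
    (hd : ∀ x ∈ Ioo 0 a, HasDerivAt f (f' x) x) (h0 : f 0 = 0)
    (hi : IntegrableOn f' (Ioo 0 a)) : ∫ x in Ioo 0 a, f' x = f a := by
  rw [← integral_Ioc_eq_integral_Ioo, ← intervalIntegral.integral_of_le ha,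
    intervalIntegral.integral_eq_sub_of_hasDerivAt_of_le ha hc hd
      ((intervalIntegrable_iff_integrableOn_Ioo_of_le ha).2 hi), h0, sub_zero]

/-- The defect in the Cauchy–Schwarz inequality `f(a)² ≤ a ∫ f'²`, for `f(0) = 0`. -/
lemma slice_identity {f f' : ℝ → ℝ} {a : ℝ} (ha : 0 < a) (hc : ContinuousOn f (Icc 0 a))
    (hd : ∀ x ∈ Ioo 0 a, HasDerivAt f (f' x) x) (h0 : f 0 = 0) (hm : Measurable f')
    (hi : IntegrableOn (fun x => f' x ^ 2) (Ioo 0 a)) :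
    IntegrableOn (fun x => (f' x - f a / a) ^ 2) (Ioo 0 a) ∧
    ∫ x in Ioo 0 a, (f' x - f a / a) ^ 2 = (∫ x in Ioo 0 a, f' x ^ 2) - f a ^ 2 / a := by
  have h1 := integrableOn_of_sq hm hi
  have e1 := setIntegral_Ioo_deriv ha.le hc hd h0 h1
  set m := f a / a with hmdef
  have hconst : IntegrableOn (fun _ : ℝ => m ^ 2) (Ioo 0 a) := by simp
  have hlin : IntegrableOn (fun x => 2 * m * f' x) (Ioo 0 a) := h1.const_mul _
  have hexp : (fun x => (f' x - m) ^ 2) = fun x => f' x ^ 2 - 2 * m * f' x + m ^ 2 := by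
    ext x; ring
  rw [hexp]
  refine ⟨(hi.sub hlin).add hconst, ?_⟩
  have hadd := integral_add (hi.sub hlin) hconst
  simp only [Pi.sub_apply] at hadd
  rw [hadd, integral_sub hi hlin, integral_const_mul, e1]
  simp only [integral_const, MeasurableSet.univ, measureReal_restrict_apply, univ_inter,
    Real.volume_real_Ioo_of_le ha.le, smul_eq_mul]
  rw [hmdef]; field_simp; ring

lemma slice_le {f f' : ℝ → ℝ} {a : ℝ} (ha : 0 < a) (hc : ContinuousOn f (Icc 0 a))
    (hd : ∀ x ∈ Ioo 0 a, HasDerivAt f (f' x) x) (h0 : f 0 = 0) (hm : Measurable f')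
    (hi : IntegrableOn (fun x => f' x ^ 2) (Ioo 0 a)) :
    f a ^ 2 / a ≤ ∫ x in Ioo 0 a, f' x ^ 2 := by
  have h := (slice_identity ha hc hd h0 hm hi).2
  have : 0 ≤ ∫ x in Ioo 0 a, (f' x - f a / a) ^ 2 := integral_nonneg fun x => sq_nonneg _
  linarith

/-- Equality on a slice makes `f'` almost everywhere constant, hence `f` linear. -/
lemma slice_eq {f f' : ℝ → ℝ} {a : ℝ} (ha : 0 < a) (hc : ContinuousOn f (Icc 0 a))
    (hd : ∀ x ∈ Ioo 0 a, HasDerivAt f (f' x) x) (h0 : f 0 = 0) (hm : Measurable f')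
    (hi : IntegrableOn (fun x => f' x ^ 2) (Ioo 0 a))
    (he : f a ^ 2 / a = ∫ x in Ioo 0 a, f' x ^ 2) :
    ∀ x ∈ Ioo 0 a, f x = f a / a * x := by
  obtain ⟨h1, h2⟩ := slice_identity ha hc hd h0 hm hi
  rw [he, sub_self] at h2
  have h3 := (integral_eq_zero_iff_of_nonneg (fun x => sq_nonneg _) h1).1 h2
  intro x hx
  have hsub : Ioo 0 x ⊆ Ioo 0 a := Ioo_subset_Ioo le_rfl hx.2.le
  rw [← setIntegral_Ioo_deriv hx.1.le (hc.mono (Icc_subset_Icc le_rfl hx.2.le))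
    (fun y hy => hd y (hsub hy)) h0 ((integrableOn_of_sq hm hi).mono_set hsub)]
  have h4 : ∀ᵐ y ∂(volume.restrict (Ioo 0 x)), f' y = f a / a := by
    filter_upwards [ae_restrict_of_ae_restrict_of_subset hsub h3] with y hy
    have := pow_eq_zero_iff (two_ne_zero) |>.1 hy
    linarith
  rw [integral_congr_ae h4]
  simp [hx.1.le, mul_comm]

/-! ### Geometry of the half-disk -/

lemma mem_halfDisk1 {z : ℂ} : z ∈ halfDisk1 ↔ z.re ^ 2 + z.im ^ 2 < 1 ∧ 0 < z.re := by
  simp only [halfDisk1, mem_ofPred_eq, dist_zero_right]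
  rw [← sq_lt_one_iff₀ (norm_nonneg z), Complex.sq_norm, Complex.normSq_apply, sq, sq]

lemma isOpen_halfDisk1 : IsOpen halfDisk1 :=
  (isOpen_lt (continuous_id.dist continuous_const) continuous_const).inter
    (isOpen_lt continuous_const Complex.continuous_re)

lemma mem_closure_halfDisk1 {z : ℂ} (h1 : z.re ^ 2 + z.im ^ 2 ≤ 1) (h0 : 0 ≤ z.re) :
    z ∈ closure halfDisk1 := by
  -- the points `(1 - t) z + t / 2` lie in the open half-disk and tend to `z` as `t → 0⁺`
  have hcont : Continuous fun t : ℝ => (1 - t : ℂ) * z + t * (1 / 2) := by fun_prop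
  have ht : Filter.Tendsto (fun t : ℝ => (1 - t : ℂ) * z + t * (1 / 2)) (nhdsWithin 0 (Ioi 0))
      (nhds z) := by
    have := (hcont.tendsto 0).mono_left (nhdsWithin_le_nhds (s := Ioi 0))
    simpa using this
  refine mem_closure_of_tendsto ht ?_
  filter_upwards [Ioo_mem_nhdsGT (show (0 : ℝ) < 1 by norm_num)] with t ht
  obtain ⟨ht0, ht1⟩ := ht
  rw [mem_halfDisk1]
  have hre : ((1 - t : ℂ) * z + t * (1 / 2)).re = (1 - t) * z.re + t / 2 := by
    simp; ring
  have him : ((1 - t : ℂ) * z + t * (1 / 2)).im = (1 - t) * z.im := by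
    simp
  rw [hre, him]
  have hz : z.re ≤ 1 := by nlinarith [sq_nonneg z.im]
  constructor
  · nlinarith [mul_nonneg (sq_nonneg (1 - t)) (sub_nonneg.2 h1), mul_pos ht0 (sub_pos.2 ht1),
      mul_nonneg (mul_pos ht0 (sub_pos.2 ht1)).le (sub_nonneg.2 hz), mul_pos ht0 ht0]
  · have := mul_nonneg (sub_pos.2 ht1).le h0
    linarith

/-- The horizontal slice of the half-disk at height `y` is `(0, √(1 - y²))`; it is empty when
`1 ≤ |y|`, where the square root is `0`. -/
lemma mem_halfDisk1_slice {x y : ℝ} : (⟨x, y⟩ : ℂ) ∈ halfDisk1 ↔ x ∈ Ioo 0 (√(1 - y ^ 2)) := by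
  rw [mem_halfDisk1, mem_Ioo]
  constructor
  · rintro ⟨h, h0⟩
    exact ⟨h0, Real.lt_sqrt_of_sq_lt (by simp at h; linarith)⟩
  · rintro ⟨h0, h⟩
    have := (Real.lt_sqrt h0.le).1 h
    exact ⟨by simp; linarith, h0⟩

lemma mem_closure_slice {x y : ℝ} (hy : y ∈ Ioo (-1 : ℝ) 1) (hx : x ∈ Icc 0 (√(1 - y ^ 2))) :
    (⟨x, y⟩ : ℂ) ∈ closure halfDisk1 := by
  have h := (Real.le_sqrt' (y := 1 - y ^ 2) (x := √(1 - y ^ 2))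
    (Real.sqrt_pos.2 (by nlinarith [hy.1, hy.2]))).1 le_rfl
  refine mem_closure_halfDisk1 ?_ hx.1
  have := hx.1; have := hx.2
  simp only
  nlinarith

/-! ### Fubini and the change of variables on the arc -/

/-- Fubini on the half-disk, integrating over horizontal slices first. -/
lemma halfDisk1_fubini {F : ℂ → ℝ} (hF : IntegrableOn F halfDisk1) :
    (∀ᵐ y : ℝ, IntegrableOn (fun x : ℝ => F ⟨x, y⟩) (Ioo 0 (√(1 - y ^ 2)))) ∧
    Integrable (fun y : ℝ => ∫ x in Ioo 0 (√(1 - y ^ 2)), F ⟨x, y⟩) ∧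
    ∫ z in halfDisk1, F z = ∫ y : ℝ, ∫ x in Ioo 0 (√(1 - y ^ 2)), F ⟨x, y⟩ := by
  have hmp := Complex.volume_preserving_equiv_real_prod.symm
  have hemb := Complex.measurableEquivRealProd.symm.measurableEmbedding
  have hmD := isOpen_halfDisk1.measurableSet
  set G : ℝ × ℝ → ℝ := fun p => halfDisk1.indicator F ⟨p.1, p.2⟩ with hG
  have hGi : Integrable G (volume.prod volume) :=
    (hmp.integrable_comp_emb hemb).2 ((integrable_indicator_iff hmD).2 hF)
  have hslice : ∀ y : ℝ, (fun x => G (x, y)) =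
      (Ioo 0 (√(1 - y ^ 2))).indicator fun x : ℝ => F ⟨x, y⟩ := by
    intro y; ext x
    by_cases hx : x ∈ Ioo 0 (√(1 - y ^ 2))
    · rw [indicator_of_mem hx]
      exact indicator_of_mem (mem_halfDisk1_slice.2 hx) F
    · rw [indicator_of_notMem hx]
      exact indicator_of_notMem (fun h => hx (mem_halfDisk1_slice.1 h)) F
  have hint : ∀ y : ℝ, ∫ x, G (x, y) = ∫ x in Ioo 0 (√(1 - y ^ 2)), F ⟨x, y⟩ := by
    intro y
    rw [← integral_indicator measurableSet_Ioo, ← hslice y]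
  refine ⟨?_, ?_, ?_⟩
  · filter_upwards [hGi.prod_left_ae] with y hy
    rw [hslice y] at hy
    exact (integrable_indicator_iff measurableSet_Ioo).1 hy
  · simpa only [hint] using hGi.integral_prod_right
  · rw [← integral_indicator hmD, ← hmp.integral_comp hemb]
    simp only [← hint]
    exact integral_prod_symm G hGi

lemma circleMap_zero_one (θ : ℝ) : circleMap 0 1 θ = ⟨cos θ, sin θ⟩ := by
  apply Complex.ext <;> simp [circleMap, Complex.exp_ofReal_mul_I_re, Complex.exp_ofReal_mul_I_im]

lemma sin_image_Ioo : sin '' Ioo (-(π / 2)) (π / 2) = Ioo (-1) 1 := by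
  ext y
  constructor
  · rintro ⟨θ, hθ, rfl⟩
    have hc := Real.cos_pos_of_mem_Ioo hθ
    have := Real.sin_sq_add_cos_sq θ
    constructor <;> nlinarith
  · intro hy
    exact ⟨arcsin y, ⟨Real.neg_pi_div_two_lt_arcsin.2 hy.1, Real.arcsin_lt_pi_div_two.2 hy.2⟩,
      Real.sin_arcsin hy.1.le hy.2.le⟩

/-- The trace of `v²` on the arc, in terms of the height `y = sin θ`: as `dy = cos θ dθ` and
`√(1 - y²) = cos θ`, the arclength element is `dy / √(1 - y²)`. -/
lemma bdry_subst {v : ℂ → ℝ} (hv : ContinuousOn v (closure halfDisk1)) :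
    IntegrableOn (fun y : ℝ => v ⟨√(1 - y ^ 2), y⟩ ^ 2 / √(1 - y ^ 2)) (Ioo (-1) 1) ∧
    bdryIntR (fun z => v z ^ 2) =
      ∫ y in Ioo (-1 : ℝ) 1, v ⟨√(1 - y ^ 2), y⟩ ^ 2 / √(1 - y ^ 2) := by
  have hinj : InjOn sin (Ioo (-(π / 2)) (π / 2)) := Real.injOn_sin.mono Ioo_subset_Icc_self
  have hder : ∀ θ ∈ Ioo (-(π / 2)) (π / 2),
      HasDerivWithinAt sin (cos θ) (Ioo (-(π / 2)) (π / 2)) θ :=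
    fun θ _ => (Real.hasDerivAt_sin θ).hasDerivWithinAt
  have hcongr : EqOn (fun θ => |cos θ| • (v ⟨√(1 - sin θ ^ 2), sin θ⟩ ^ 2 / √(1 - sin θ ^ 2)))
      (fun θ => v (circleMap 0 1 θ) ^ 2) (Ioo (-(π / 2)) (π / 2)) := by
    intro θ hθ
    have hc := Real.cos_pos_of_mem_Ioo hθ
    have hs : √(1 - sin θ ^ 2) = cos θ := by
      rw [← Real.cos_sq', Real.sqrt_sq hc.le]
    simp only [hs, circleMap_zero_one, smul_eq_mul, abs_of_pos hc]
    field_simp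
  have hcont : ContinuousOn (fun θ => v (circleMap 0 1 θ) ^ 2) (Icc (-(π / 2)) (π / 2)) := by
    refine (hv.comp (continuous_circleMap 0 1).continuousOn fun θ hθ => ?_).pow 2
    rw [circleMap_zero_one]
    exact mem_closure_halfDisk1 (Real.cos_sq_add_sin_sq θ).le
      (Real.cos_nonneg_of_neg_pi_div_two_le_of_le hθ.1 hθ.2)
  rw [← sin_image_Ioo, integrableOn_image_iff_integrableOn_abs_deriv_smul measurableSet_Ioo hder
    hinj, integral_image_eq_integral_abs_deriv_smul measurableSet_Ioo hder hinj,
    integrableOn_congr_fun hcongr measurableSet_Ioo, setIntegral_congr_fun measurableSet_Ioo hcongr]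
  exact ⟨(hcont.integrableOn_Icc).mono_set Ioo_subset_Icc_self, rfl⟩

/-! ### Slices of an admissible function -/

lemma hasDerivAt_mk_re (x y : ℝ) : HasDerivAt (fun t : ℝ => (⟨t, y⟩ : ℂ)) 1 x := by
  have h : (fun t : ℝ => (⟨t, y⟩ : ℂ)) = fun t : ℝ => (t : ℂ) + y * Complex.I := by
    ext t; exact Complex.mk_eq_add_mul_I t y
  rw [h]
  simpa using (Complex.ofRealCLM.hasDerivAt (x := x)).add_const (y * Complex.I)

lemma hasDerivAt_mk_im (x y : ℝ) : HasDerivAt (fun t : ℝ => (⟨x, t⟩ : ℂ)) Complex.I y := by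
  have h : (fun t : ℝ => (⟨x, t⟩ : ℂ)) = fun t : ℝ => (x : ℂ) + t * Complex.I := by
    ext t; exact Complex.mk_eq_add_mul_I x t
  rw [h]
  simpa using ((Complex.ofRealCLM.hasDerivAt (x := y)).mul_const Complex.I).const_add (x : ℂ)

lemma continuous_mk_re (y : ℝ) : Continuous fun t : ℝ => (⟨t, y⟩ : ℂ) :=
  continuous_iff_continuousAt.2 fun x => (hasDerivAt_mk_re x y).continuousAt

lemma Admissible.hasFDerivAt {v : ℂ → ℝ} (hv : Admissible v) {z : ℂ} (hz : z ∈ halfDisk1) :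
    HasFDerivAt v (fderiv ℝ v z) z :=
  ((hv.2.1.contDiffAt (isOpen_halfDisk1.mem_nhds hz)).differentiableAt one_ne_zero).hasFDerivAt

lemma Admissible.slice_continuousOn {v : ℂ → ℝ} (hv : Admissible v) {y : ℝ}
    (hy : y ∈ Ioo (-1 : ℝ) 1) : ContinuousOn (fun x : ℝ => v ⟨x, y⟩) (Icc 0 (√(1 - y ^ 2))) :=
  hv.1.comp (continuous_mk_re y).continuousOn fun _ hx => mem_closure_slice hy hx

lemma Admissible.slice_hasDerivAt {v : ℂ → ℝ} (hv : Admissible v) {y : ℝ} :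
    ∀ x ∈ Ioo 0 (√(1 - y ^ 2)),
      HasDerivAt (fun x : ℝ => v ⟨x, y⟩) (fderiv ℝ v ⟨x, y⟩ 1) x := fun x hx =>
  (hv.hasFDerivAt (mem_halfDisk1_slice.2 hx)).comp_hasDerivAt x (hasDerivAt_mk_re x y)

lemma Admissible.slice_zero {v : ℂ → ℝ} (hv : Admissible v) {y : ℝ} (hy : y ∈ Ioo (-1 : ℝ) 1) :
    v ⟨0, y⟩ = 0 :=
  hv.2.2.1 _ (mem_closure_slice hy ⟨le_rfl, Real.sqrt_nonneg _⟩) rfl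

lemma slice_measurable (v : ℂ → ℝ) (y : ℝ) : Measurable fun x : ℝ => fderiv ℝ v ⟨x, y⟩ 1 :=
  (measurable_fderiv_apply_const ℝ v 1).comp (continuous_mk_re y).measurable

lemma sqrt_one_sub_sq_pos {y : ℝ} (hy : y ∈ Ioo (-1 : ℝ) 1) : 0 < √(1 - y ^ 2) :=
  Real.sqrt_pos.2 (by nlinarith [hy.1, hy.2])

lemma Admissible.integrableOn_fst {v : ℂ → ℝ} (hv : Admissible v) :
    IntegrableOn (fun z => (fderiv ℝ v z 1) ^ 2) halfDisk1 := by
  refine hv.2.2.2.mono' ((measurable_fderiv_apply_const ℝ v 1).pow_const 2).aestronglyMeasurable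
    (Filter.Eventually.of_forall fun z => ?_)
  rw [Real.norm_eq_abs, abs_of_nonneg (sq_nonneg _)]
  linarith [sq_nonneg (fderiv ℝ v z Complex.I)]

lemma Admissible.integrableOn_snd {v : ℂ → ℝ} (hv : Admissible v) :
    IntegrableOn (fun z => (fderiv ℝ v z Complex.I) ^ 2) halfDisk1 := by
  refine hv.2.2.2.mono'
    ((measurable_fderiv_apply_const ℝ v Complex.I).pow_const 2).aestronglyMeasurable
    (Filter.Eventually.of_forall fun z => ?_)
  rw [Real.norm_eq_abs, abs_of_nonneg (sq_nonneg _)]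
  linarith [sq_nonneg (fderiv ℝ v z 1)]

lemma Admissible.dirEnergy_eq {v : ℂ → ℝ} (hv : Admissible v) :
    dirEnergy v = (∫ z in halfDisk1, (fderiv ℝ v z 1) ^ 2) +
      ∫ z in halfDisk1, (fderiv ℝ v z Complex.I) ^ 2 :=
  integral_add hv.integrableOn_fst hv.integrableOn_snd

/-- The horizontal part of the energy as an iterated integral. The slices with `1 ≤ |y|` are
empty, so the outer integral runs over `(-1, 1)`. -/
lemma Admissible.energy_fst {v : ℂ → ℝ} (hv : Admissible v) :
    IntegrableOn (fun y : ℝ => ∫ x in Ioo 0 (√(1 - y ^ 2)), (fderiv ℝ v ⟨x, y⟩ 1) ^ 2)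
      (Ioo (-1) 1) ∧
    ∫ z in halfDisk1, (fderiv ℝ v z 1) ^ 2 =
      ∫ y in Ioo (-1 : ℝ) 1, ∫ x in Ioo 0 (√(1 - y ^ 2)), (fderiv ℝ v ⟨x, y⟩ 1) ^ 2 := by
  obtain ⟨-, h2, h3⟩ := halfDisk1_fubini hv.integrableOn_fst
  refine ⟨h2.integrableOn, h3.trans (setIntegral_eq_integral_of_forall_compl_eq_zero ?_).symm⟩
  intro y hy
  have h0 : √(1 - y ^ 2) = 0 := by
    refine Real.sqrt_eq_zero_of_nonpos ?_
    by_contra h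
    exact hy (abs_lt.1 ((sq_lt_one_iff_abs_lt_one y).1 (by linarith)))
  simp [h0]

/-- The sharp one-dimensional inequality on almost every slice; the derivative is square-integrable
on the slice only for almost every height. -/
lemma Admissible.ae_slice_le {v : ℂ → ℝ} (hv : Admissible v) :
    ∀ᵐ y ∂(volume.restrict (Ioo (-1 : ℝ) 1)), v ⟨√(1 - y ^ 2), y⟩ ^ 2 / √(1 - y ^ 2) ≤
      ∫ x in Ioo 0 (√(1 - y ^ 2)), (fderiv ℝ v ⟨x, y⟩ 1) ^ 2 := by
  filter_upwards [ae_restrict_mem measurableSet_Ioo,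
    ae_restrict_of_ae (halfDisk1_fubini hv.integrableOn_fst).1] with y hy hi
  exact slice_le (f := fun x => v ⟨x, y⟩) (sqrt_one_sub_sq_pos hy) (hv.slice_continuousOn hy)
    hv.slice_hasDerivAt (hv.slice_zero hy) (slice_measurable v y) hi

lemma Admissible.bdry_le_fst {v : ℂ → ℝ} (hv : Admissible v) :
    bdryIntR (fun z => v z ^ 2) ≤ ∫ z in halfDisk1, (fderiv ℝ v z 1) ^ 2 := by
  rw [(bdry_subst hv.1).2, hv.energy_fst.2]
  exact integral_mono_ae (bdry_subst hv.1).1 hv.energy_fst.1 hv.ae_slice_le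

lemma Admissible.bdry_le {v : ℂ → ℝ} (hv : Admissible v) :
    bdryIntR (fun z => v z ^ 2) ≤ dirEnergy v := by
  have h1 := hv.bdry_le_fst
  have h2 : 0 ≤ ∫ z in halfDisk1, (fderiv ℝ v z Complex.I) ^ 2 :=
    integral_nonneg fun z => sq_nonneg _
  rw [hv.dirEnergy_eq]; linarith

/-! ### The equality case -/

/-- If the vertical derivative vanishes, then `v` depends on the abscissa only. -/
lemma Admissible.eq_of_snd_eq_zero {v : ℂ → ℝ} (hv : Admissible v)
    (h : ∀ z ∈ halfDisk1, fderiv ℝ v z Complex.I = 0) {x y : ℝ}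
    (hxy : (⟨x, y⟩ : ℂ) ∈ halfDisk1) : v ⟨x, y⟩ = v ⟨x, 0⟩ := by
  have hmem : ∀ t ∈ Icc (0 : ℝ) 1, (⟨x, t * y⟩ : ℂ) ∈ halfDisk1 := by
    intro t ht
    rw [mem_halfDisk1] at hxy ⊢
    refine ⟨?_, hxy.2⟩
    have := hxy.1
    simp only at this ⊢
    have ht2 : t ^ 2 ≤ 1 := by nlinarith [ht.1, ht.2]
    nlinarith [mul_le_mul_of_nonneg_right ht2 (sq_nonneg y)]
  have hder : ∀ t ∈ Icc (0 : ℝ) 1, HasDerivAt (fun t : ℝ => v ⟨x, t * y⟩) 0 t := by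
    intro t ht
    have h1 := (hv.hasFDerivAt (hmem t ht)).comp_hasDerivAt (t * y) (hasDerivAt_mk_im x (t * y))
    rw [h _ (hmem t ht)] at h1
    have h2 := HasDerivAt.comp t h1 ((hasDerivAt_id t).mul_const y)
    simpa [Function.comp_def] using h2
  have := constant_of_has_deriv_right_zero
    (fun t ht => (hder t ht).continuousAt.continuousWithinAt)
    (fun t ht => (hder t (Ico_subset_Icc_self ht)).hasDerivWithinAt) 1 (by simp)
  simpa using this

/-- Equality forces the vertical energy to vanish and almost every horizontal slice to be linear;
since `v` does not depend on the height, all slices have the same slope. -/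
lemma Admissible.linear_of_eq {v : ℂ → ℝ} (hv : Admissible v)
    (he : bdryIntR (fun z => v z ^ 2) = dirEnergy v) :
    ∃ c : ℝ, EqOn v (fun z => c * z.re) (closure halfDisk1) := by
  have h1 := hv.bdry_le_fst
  have h2 : 0 ≤ ∫ z in halfDisk1, (fderiv ℝ v z Complex.I) ^ 2 :=
    integral_nonneg fun z => sq_nonneg _
  rw [hv.dirEnergy_eq] at he
  have hsnd : ∫ z in halfDisk1, (fderiv ℝ v z Complex.I) ^ 2 = 0 := by linarith
  have hfst : bdryIntR (fun z => v z ^ 2) = ∫ z in halfDisk1, (fderiv ℝ v z 1) ^ 2 := by linarith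
  -- the vertical derivative vanishes a.e., hence everywhere by continuity
  have hI : ∀ z ∈ halfDisk1, fderiv ℝ v z Complex.I = 0 := by
    have hae := (integral_eq_zero_iff_of_nonneg (fun z => sq_nonneg _) hv.integrableOn_snd).1 hsnd
    have hcont : ContinuousOn (fun z => fderiv ℝ v z Complex.I) halfDisk1 :=
      (hv.2.1.continuousOn_fderiv_of_isOpen isOpen_halfDisk1 le_rfl).clm_apply continuousOn_const
    refine Measure.eqOn_open_of_ae_eq (μ := volume) ?_ isOpen_halfDisk1 hcont continuousOn_const
    filter_upwards [hae] with z hz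
    exact (pow_eq_zero_iff two_ne_zero).1 hz
  have hvert := fun {x y : ℝ} => hv.eq_of_snd_eq_zero hI (x := x) (y := y)
  -- almost every horizontal slice is an equality case of Cauchy–Schwarz
  have hae : ∀ᵐ y ∂(volume.restrict (Ioo (-1 : ℝ) 1)), ∀ x ∈ Ioo 0 (√(1 - y ^ 2)),
      v ⟨x, y⟩ = v ⟨√(1 - y ^ 2), y⟩ / √(1 - y ^ 2) * x := by
    rw [(bdry_subst hv.1).2, hv.energy_fst.2] at hfst
    filter_upwards [ae_restrict_mem measurableSet_Ioo,
      ae_restrict_of_ae (halfDisk1_fubini hv.integrableOn_fst).1,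
      (integral_eq_iff_of_ae_le (bdry_subst hv.1).1 hv.energy_fst.1 hv.ae_slice_le).1 hfst]
      with y hy hi hey
    exact slice_eq (f := fun x => v ⟨x, y⟩) (sqrt_one_sub_sq_pos hy) (hv.slice_continuousOn hy)
      hv.slice_hasDerivAt (hv.slice_zero hy) (slice_measurable v y) hi hey
  -- any two abscissas are reached by a common good slice, close enough to the axis `y = 0`
  have hprop : ∀ x ∈ Ioo (0 : ℝ) 1, v ⟨x, 0⟩ = 2 * v ⟨1 / 2, 0⟩ * x := by
    intro x hx
    set m := max x (1 / 2) with hm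
    have hm1 : m < 1 := max_lt hx.2 (by norm_num)
    have hxm : x ≤ m := le_max_left _ _
    have hhm : 1 / 2 ≤ m := le_max_right _ _
    have hsub : Ioo 0 (1 - m) ⊆ Ioo (-1 : ℝ) 1 := Ioo_subset_Ioo (by norm_num) (by linarith)
    have hne : (ae (volume.restrict (Ioo 0 (1 - m)))).NeBot := by
      rw [ae_neBot, Ne, Measure.restrict_eq_zero, Real.volume_Ioo]
      simpa using hm1
    obtain ⟨y, hy, hlin⟩ := ((ae_restrict_mem measurableSet_Ioo).and
      (ae_restrict_of_ae_restrict_of_subset hsub hae)).exists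
    have hms : m < √(1 - y ^ 2) := by
      refine Real.lt_sqrt_of_sq_lt ?_
      nlinarith [hy.1, hy.2]
    have hx' : x ∈ Ioo 0 (√(1 - y ^ 2)) := ⟨hx.1, hxm.trans_lt hms⟩
    have hh' : (1 / 2 : ℝ) ∈ Ioo 0 (√(1 - y ^ 2)) := ⟨by norm_num, hhm.trans_lt hms⟩
    rw [← hvert (mem_halfDisk1_slice.2 hx'), ← hvert (mem_halfDisk1_slice.2 hh'), hlin x hx',
      hlin _ hh']
    ring
  refine ⟨2 * v ⟨1 / 2, 0⟩, Set.EqOn.of_subset_closure (s := halfDisk1) ?_ hv.1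
    (by fun_prop) subset_closure subset_rfl⟩
  rintro ⟨x, y⟩ hz
  have hz' := mem_halfDisk1.1 hz
  simp only at hz'
  rw [hvert hz]
  exact hprop x ⟨hz'.2, by nlinarith [hz'.1, hz'.2, sq_nonneg y]⟩

lemma fderiv_const_mul_re (c : ℝ) (z : ℂ) :
    fderiv ℝ (fun x : ℂ => c * x.re) z = c • Complex.reCLM :=
  (Complex.reCLM.hasFDerivAt.const_mul c).fderiv

lemma volume_halfDisk1_ne_top : volume halfDisk1 ≠ ⊤ :=
  measure_ne_top_of_subset (s := Metric.ball (0 : ℂ) 1) (fun z (hz : z ∈ halfDisk1) => hz.1)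
    measure_ball_lt_top.ne

lemma admissible_const_mul_re (c : ℝ) : Admissible fun z : ℂ => c * z.re := by
  refine ⟨by fun_prop, ?_, fun z _ hz => by simp [hz], ?_⟩
  · exact (contDiff_const.mul Complex.reCLM.contDiff).contDiffOn
  · simp only [fderiv_const_mul_re]
    exact integrableOn_const volume_halfDisk1_ne_top (by simp)

/-- For a multiple of `x₁` the energy is computed by the same slicing, in which every slice is an
equality case. -/
lemma bdry_eq_energy_const_mul_re (c : ℝ) :
    bdryIntR (fun z : ℂ => (c * z.re) ^ 2) = dirEnergy fun z : ℂ => c * z.re := by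
  have hv := admissible_const_mul_re c
  rw [hv.dirEnergy_eq, hv.energy_fst.2, (bdry_subst hv.1).2]
  simp only [fderiv_const_mul_re]
  simp only [smul_apply, Complex.reCLM_apply, Complex.one_re, Complex.I_re]
  simp only [smul_eq_mul, mul_one, mul_zero, integral_const, measureReal_restrict_apply,
    MeasurableSet.univ, univ_inter, Real.volume_real_Ioo_of_le (Real.sqrt_nonneg _), sub_zero]
  simp only [ne_eq, OfNat.ofNat_ne_zero, not_false_eq_true, zero_pow, mul_zero, add_zero]
  refine setIntegral_congr_fun measurableSet_Ioo fun y hy => ?_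
  have := sqrt_one_sub_sq_pos hy
  field_simp

lemma bdryIntR_const_mul_re (c : ℝ) :
    bdryIntR (fun z : ℂ => (c * z.re) ^ 2) = c ^ 2 * (π / 2) := by
  have h : ∀ θ : ℝ, (c * (circleMap 0 1 θ).re) ^ 2 = c ^ 2 * cos θ ^ 2 := by
    intro θ; rw [circleMap_zero_one]; ring
  simp only [bdryIntR, h]
  rw [← integral_Ioc_eq_integral_Ioo, ← intervalIntegral.integral_of_le (by linarith [Real.pi_pos]),
    intervalIntegral.integral_const_mul, integral_cos_sq]
  simp

lemma eq_of_linear {v : ℂ → ℝ} {c : ℝ} (h : EqOn v (fun z => c * z.re) (closure halfDisk1)) :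
    bdryIntR (fun z => v z ^ 2) = dirEnergy v := by
  have h1 : bdryIntR (fun z => v z ^ 2) = bdryIntR (fun z : ℂ => (c * z.re) ^ 2) := by
    refine setIntegral_congr_fun measurableSet_Ioo fun θ hθ => ?_
    simp only
    rw [h]
    rw [circleMap_zero_one]
    exact mem_closure_halfDisk1 (Real.cos_sq_add_sin_sq θ).le (Real.cos_pos_of_mem_Ioo hθ).le
  have h2 : dirEnergy v = dirEnergy fun z : ℂ => c * z.re := by
    refine setIntegral_congr_fun isOpen_halfDisk1.measurableSet fun z hz => ?_
    have : v =ᶠ[nhds z] fun z => c * z.re := by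
      filter_upwards [isOpen_halfDisk1.mem_nhds hz] with w hw using h (subset_closure hw)
    simp only [this.fderiv_eq]
  rw [h1, h2, bdry_eq_energy_const_mul_re]

/-- Trace inequality `∫_{∂D₁⁺(0)} v² dσ ≤ ∫_{D₁⁺(0)} |∇v|² dx` on the unit half-disk
for functions vanishing on the diameter, with equality iff `v = c·x₁`.  In particular
the infimum of the Dirichlet energy over admissible functions of unit boundary trace
is `1`, attained by `w(x) = √(2/π)·x₁`. -/
theorem trace_inequality_unit_halfDisk
    (v : ℂ → ℝ) (hv : Admissible v) :
    bdryIntR (fun x => (v x) ^ 2) ≤ dirEnergy v ∧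
    (bdryIntR (fun x => (v x) ^ 2) = dirEnergy v ↔
      ∃ c : ℝ, Set.EqOn v (fun x => c * x.re) (closure halfDisk1)) ∧
    IsLeast { t : ℝ | ∃ w : ℂ → ℝ, Admissible w ∧
      bdryIntR (fun x => (w x) ^ 2) = 1 ∧ t = dirEnergy w } 1 ∧
    (Admissible (fun x : ℂ => Real.sqrt (2 / π) * x.re) ∧
      bdryIntR (fun x => (Real.sqrt (2 / π) * x.re) ^ 2) = 1 ∧
      dirEnergy (fun x : ℂ => Real.sqrt (2 / π) * x.re) = 1) := by
  have hb : bdryIntR (fun x => (Real.sqrt (2 / π) * x.re) ^ 2) = 1 := by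
    rw [bdryIntR_const_mul_re, Real.sq_sqrt (by positivity)]
    field_simp
  have hE : dirEnergy (fun x : ℂ => Real.sqrt (2 / π) * x.re) = 1 := by
    rw [← bdry_eq_energy_const_mul_re, hb]
  refine ⟨hv.bdry_le, ⟨hv.linear_of_eq, fun ⟨c, hc⟩ => eq_of_linear hc⟩, ⟨?_, ?_⟩,
    admissible_const_mul_re _, hb, hE⟩
  · exact ⟨_, admissible_const_mul_re _, hb, hE.symm⟩
  · rintro t ⟨w, hw, hw1, rfl⟩
    rw [← hw1]
    exact hw.bdry_le

end
end

section
/- Let φ be as in the standing hypotheses and satisfy the vanishing expansion of order 1/2 at a with coefficients c₁, d₁, and let M_a be the limit of the ∂D_ε(a)-boundary integrals (which exists). Then for every r with a₁ < r < r₀ the following Pohozaev-type identity holds: (r/2)·∫_{∂D_r⁺(π(a))} { |(i∇+A_a)φ|² − 2|(i∇+A_a)φ·ν|² − λ p |φ|² } dσ + λ·∫_{D_r⁺(π(a))} |φ|²·( p + ∇p·(x−π(a))/2 ) dx + M_a = 0, where ν is the outward unit normal. -/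
/-!
The proof applies the divergence theorem to the Pohozaev vector field
`V = Re[(i∇+A)φ · conj((i∇+A)φ·X)] − ½|(i∇+A)φ|²X + ½λp|φ|²X` with `X = x − π(a)`
(`pohoField1`, `pohoField2`). Since `A_a` is irrotational away from `a` and `φ` solves the equation,
`div V = λ|φ|²(p + ∇p·X/2)` off `a` (`pohoField_div`), and this density is continuous up to the
boundary. The flux of `V` through the arc is minus the arc integral of the identity
(`pohoField_arc`). The flux through `∂D_ε(a)` is the integral defining `M_a` plus a term of size
`O(ε)`, because `φ` is bounded (`pohoField_normal`). Letting `ε → 0` in the divergence theorem on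
`D_r⁺ ∖ D_ε(a)` gives the claim.

No regularity of `φ` up to the flat side `{x₁ = 0}` is assumed beyond continuity, so it has to be
proved that the flat side contributes nothing. Near `{x₁ = 0}` the potential is a gradient, `A = ∇Θ`,
and `e^{-iΘ}φ` solves `−Δw = λpw` with `w = 0` on `{x₁ = 0}`. A quadratic barrier (`barrier_abs`)
gives `|w| ≤ C x₁`; the same barrier, applied to the odd part of `w` about an interior point, gives
an interior gradient estimate (`grad_bound_fst`), hence `|∇w| ≤ C`; applied to tangential
difference quotients it gives `|∂₂w| ≤ C x₁` (`strip_bound`). So the magnetic gradient is bounded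
near the flat side and its tangential component is `O(x₁)` (`flat_bound`). Consequently the
component of `V` orthogonal to `X`, multiplied by `|X|`, is `O(x₁)` (`pohoField_flat`).

The divergence theorem on the half-disk (`halfDisk_divergence`) is obtained in polar coordinates
centred at `π(a)` on the sectors `|θ| ≤ π/2 − t`, `ρ ≥ t`: the fluxes through the two sides and the
small inner arc tend to `0` as `t → 0` by the bounds above. The singular point `a` is removed with a
smooth cutoff (`punctured_divergence`).
-/


open MeasureTheory Real Filter Set Asymptotics

noncomputable section

/-- The open half-disk `D_r⁺(c)`: points at distance `< r` from `c` with positive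
first coordinate (we identify `ℝ²` with `ℂ`). -/
def halfDisk (c : ℂ) (r : ℝ) : Set ℂ := {x : ℂ | dist x c < r ∧ 0 < x.re}

/-- Projection onto the axis `{x₁ = 0}`: `π(a) = (0, a₂)`. -/
def proj (a : ℂ) : ℂ := (a.im : ℂ) * Complex.I

/-- First partial derivative of a complex-valued function on `ℝ² = ℂ`. -/
def pd1 (u : ℂ → ℂ) (x : ℂ) : ℂ := fderiv ℝ u x 1

/-- Second partial derivative of a complex-valued function on `ℝ² = ℂ`. -/
def pd2 (u : ℂ → ℂ) (x : ℂ) : ℂ := fderiv ℝ u x Complex.I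

/-- The Aharonov–Bohm potential `A_a(x)`, encoded as the complex number whose real and
imaginary parts are its two components:
`A_a(x) = (1/2)(−(x₂−a₂)/|x−a|², (x₁−a₁)/|x−a|²) = i(x−a)/(2|x−a|²)`. -/
def abPot (a x : ℂ) : ℂ := Complex.I * (x - a) / (2 * (‖x - a‖ : ℂ) ^ 2)

/-- First component of `A_a`. -/
def abPot1 (a x : ℂ) : ℝ := (abPot a x).re

/-- Second component of `A_a`. -/
def abPot2 (a x : ℂ) : ℝ := (abPot a x).im

/-- First component of the magnetic gradient `(i∇ + A_a)u`. -/
def mg1 (a : ℂ) (u : ℂ → ℂ) (x : ℂ) : ℂ := Complex.I * pd1 u x + (abPot1 a x : ℂ) * u x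

/-- Second component of the magnetic gradient `(i∇ + A_a)u`. -/
def mg2 (a : ℂ) (u : ℂ → ℂ) (x : ℂ) : ℂ := Complex.I * pd2 u x + (abPot2 a x : ℂ) * u x

/-- `|(i∇+A_a)u|²`. -/
def mgSq (a : ℂ) (u : ℂ → ℂ) (x : ℂ) : ℝ := ‖mg1 a u x‖ ^ 2 + ‖mg2 a u x‖ ^ 2

/-- Arclength integral of `f` over the circular part `∂D_r⁺(c)` of the boundary of a
half-disk centered at a point `c` on the axis `{x₁ = 0}`, parametrized by the angle
`θ ∈ (−π/2, π/2)`. -/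
def bdryInt (c : ℂ) (r : ℝ) (f : ℂ → ℝ) : ℝ :=
  ∫ θ in Ioo (-(π / 2)) (π / 2), r * f (circleMap c r θ)

/-- The Laplacian of a complex-valued function. -/
def lapC (u : ℂ → ℂ) (x : ℂ) : ℂ :=
  fderiv ℝ (fun y => pd1 u y) x 1 + fderiv ℝ (fun y => pd2 u y) x Complex.I

/-- Divergence `∇·A_a`. -/
def divAB (a x : ℂ) : ℝ := fderiv ℝ (abPot1 a) x 1 + fderiv ℝ (abPot2 a) x Complex.I

/-- The magnetic Laplacian `(i∇+A_a)²u = −Δu + i(∇·A_a)u + 2i A_a·∇u + |A_a|²u`. -/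
def magLap (a : ℂ) (u : ℂ → ℂ) (x : ℂ) : ℂ :=
  - lapC u x + Complex.I * (divAB a x : ℂ) * u x
    + 2 * Complex.I * ((abPot1 a x : ℂ) * pd1 u x + (abPot2 a x : ℂ) * pd2 u x)
    + ((abPot1 a x ^ 2 + abPot2 a x ^ 2 : ℝ) : ℂ) * u x

/-- The Almgren energy `E(u,r,c,λ,A_a) = ∫_{D_r⁺(c)} (|(i∇+A_a)u|² − λp|u|²) dx`. -/
def Efun (a : ℂ) (u : ℂ → ℂ) (r : ℝ) (c : ℂ) (lam : ℝ) (p : ℂ → ℝ) : ℝ :=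
  ∫ x in halfDisk c r, (mgSq a u x - lam * p x * ‖u x‖ ^ 2)

/-- `H(u,r,c) = (1/r)∫_{∂D_r⁺(c)} |u|² dσ`. -/
def Hfun (u : ℂ → ℂ) (r : ℝ) (c : ℂ) : ℝ := (1 / r) * bdryInt c r fun x => ‖u x‖ ^ 2

/-- The Almgren frequency `N = E/H`. -/
def Nfun (a : ℂ) (u : ℂ → ℂ) (r : ℝ) (c : ℂ) (lam : ℝ) (p : ℂ → ℝ) : ℝ :=
  Efun a u r c lam p / Hfun u r c

/-- The Pohozaev boundary integrand at a point `x` with unit normal `ν = (ν₁,ν₂)`: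
`Re[(i∇+A_a)φ·ν · conj((i∇+A_a)φ·(x−π(a)))] − (1/2)|(i∇+A_a)φ|² (x−π(a))·ν`. -/
def pohoIntegrand (a : ℂ) (φ : ℂ → ℂ) (x : ℂ) (ν1 ν2 : ℝ) : ℝ :=
  ((mg1 a φ x * (ν1 : ℂ) + mg2 a φ x * (ν2 : ℂ)) *
      (starRingEnd ℂ) (mg1 a φ x * (((x - proj a).re : ℝ) : ℂ) +
        mg2 a φ x * (((x - proj a).im : ℝ) : ℂ))).re -
    (1 / 2) * mgSq a φ x * ((x - proj a).re * ν1 + (x - proj a).im * ν2)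

/-- The integral over the full circle `∂D_ε(a)` whose limit as `ε → 0⁺` defines the
Pohozaev remainder `M_a`. -/
def pohoBdry (a : ℂ) (φ : ℂ → ℂ) (ε : ℝ) : ℝ :=
  ∫ θ in Ioc 0 (2 * π), ε * pohoIntegrand a φ (circleMap a ε θ) (Real.cos θ) (Real.sin θ)

/-- The model half-integer homogeneous function
`e^{iθ_a/2}|x−a|^{1/2}( c₁ cos(θ_a/2) + d₁ sin(θ_a/2) )`, written in the branch-free form
`|x−a|^{1/2}( c₁(1+ω)/2 + d₁(ω−1)/(2i) )` with `ω = (x−a)/|x−a|`. -/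
def modelHalf (a : ℂ) (c₁ d₁ : ℝ) (x : ℂ) : ℂ :=
  (Real.sqrt ‖x - a‖ : ℂ) *
    ((c₁ : ℂ) * (1 + (x - a) / (‖x - a‖ : ℂ)) / 2 +
      (d₁ : ℂ) * ((x - a) / (‖x - a‖ : ℂ) - 1) / (2 * Complex.I))

/-! ### Barrier estimate at a flat boundary -/

lemma second_deriv_nonpos_of_isLocalMax {f f1 : ℝ → ℝ} {t c : ℝ} (hmax : IsLocalMax f t)
    (h1 : ∀ᶠ s in nhds t, HasDerivAt f (f1 s) s) (h2 : HasDerivAt f1 c t) : c ≤ 0 := by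
  by_contra hc
  push Not at hc
  have hd : deriv f =ᶠ[nhds t] f1 := h1.mono fun s hs => hs.deriv
  have hdd : deriv (deriv f) t = c := by rw [hd.deriv_eq, h2.deriv]
  have hmin : IsLocalMin f t :=
    isLocalMin_of_deriv_deriv_pos (by rw [hdd]; exact hc) hmax.deriv_eq_zero
      h1.self_of_nhds.continuousAt
  have hconst : f =ᶠ[nhds t] fun _ => f t := by
    filter_upwards [hmax, hmin] with s h h' using le_antisymm h h'
  have h3 : deriv f =ᶠ[nhds t] fun _ => 0 := by
    have := hconst.deriv
    simpa using this
  have : deriv (deriv f) t = 0 := by rw [h3.deriv_eq]; simp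
  linarith

/-- Boundary barrier. A function with `Δv ≥ -N` and `v ≤ M` on `[0,δ] × [y0-δ, y0+δ]`, vanishing on
the side `s = 0`, is compared with `(M/δ²)(y-y0)² + Bs - Ks²`, where `K = M/δ² + N` and
`B = 2M/δ + Nδ`. This dominates `v` on the boundary of the rectangle and has Laplacian `-2N`, so the
difference has no interior maximum. -/
lemma barrier_upper {v v1 v11 v2 v22 : ℝ → ℝ → ℝ} {δ y0 M N : ℝ} (hδ : 0 < δ) (hN : 0 < N)
    (hc : ContinuousOn (Function.uncurry v) (Icc 0 δ ×ˢ Icc (y0 - δ) (y0 + δ)))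
    (h1 : ∀ s ∈ Ioo 0 δ, ∀ y ∈ Ioo (y0 - δ) (y0 + δ), HasDerivAt (fun s => v s y) (v1 s y) s)
    (h11 : ∀ s ∈ Ioo 0 δ, ∀ y ∈ Ioo (y0 - δ) (y0 + δ), HasDerivAt (fun s => v1 s y) (v11 s y) s)
    (h2 : ∀ s ∈ Ioo 0 δ, ∀ y ∈ Ioo (y0 - δ) (y0 + δ), HasDerivAt (fun y => v s y) (v2 s y) y)
    (h22 : ∀ s ∈ Ioo 0 δ, ∀ y ∈ Ioo (y0 - δ) (y0 + δ), HasDerivAt (fun y => v2 s y) (v22 s y) y)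
    (hL : ∀ s ∈ Ioo 0 δ, ∀ y ∈ Ioo (y0 - δ) (y0 + δ), -N ≤ v11 s y + v22 s y)
    (hM : ∀ s ∈ Icc 0 δ, ∀ y ∈ Icc (y0 - δ) (y0 + δ), v s y ≤ M)
    (h0 : ∀ y ∈ Icc (y0 - δ) (y0 + δ), v 0 y = 0) :
    ∀ s ∈ Icc 0 δ, v s y0 ≤ (2 * M / δ + N * δ) * s := by
  have hM0 : 0 ≤ M := by
    have := hM 0 ⟨le_rfl, hδ.le⟩ y0 ⟨by linarith, by linarith⟩
    rwa [h0 y0 ⟨by linarith, by linarith⟩] at this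
  set K := M / δ ^ 2 + N with hK
  set B := 2 * M / δ + N * δ with hB
  have hBK : B = M / δ + K * δ := by rw [hB, hK]; field_simp; ring
  have hK0 : 0 ≤ K := by positivity
  set z : ℝ × ℝ → ℝ := fun q =>
    v q.1 q.2 - (M / δ ^ 2 * (q.2 - y0) ^ 2 + B * q.1 - K * q.1 ^ 2) with hz
  have hzc : ContinuousOn z (Icc 0 δ ×ˢ Icc (y0 - δ) (y0 + δ)) := by
    refine ContinuousOn.sub hc ?_
    fun_prop
  obtain ⟨⟨s0, t0⟩, hq, hmax⟩ := (isCompact_Icc.prod isCompact_Icc).exists_isMaxOn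
    (⟨(0, y0), ⟨le_rfl, hδ.le⟩, by constructor <;> simp [hδ.le]⟩ :
      (Icc 0 δ ×ˢ Icc (y0 - δ) (y0 + δ)).Nonempty) hzc
  have hs0 : s0 ∈ Icc 0 δ := hq.1
  have ht0 : t0 ∈ Icc (y0 - δ) (y0 + δ) := hq.2
  have key : z (s0, t0) ≤ 0 := by
    have hpos : 0 ≤ B * s0 - K * s0 ^ 2 := by
      have : B * s0 - K * s0 ^ 2 = s0 * (M / δ + K * (δ - s0)) := by rw [hBK]; ring
      rw [this]
      exact mul_nonneg hs0.1 (add_nonneg (by positivity) (mul_nonneg hK0 (by linarith [hs0.2])))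
    have hsq : 0 ≤ M / δ ^ 2 * (t0 - y0) ^ 2 := by positivity
    simp only [hz]
    rcases eq_or_lt_of_le hs0.1 with h | hs0pos
    · rw [← h] at hpos ⊢
      rw [h0 t0 ht0]; linarith
    rcases eq_or_lt_of_le hs0.2 with h | hs0lt
    · have : B * s0 - K * s0 ^ 2 = M := by rw [hBK, h]; field_simp; ring
      linarith [hM s0 hs0 t0 ht0]
    have hside : (t0 - y0) ^ 2 = δ ^ 2 → v s0 t0 - (M / δ ^ 2 * (t0 - y0) ^ 2 + B * s0 -
        K * s0 ^ 2) ≤ 0 := by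
      intro h
      have : M / δ ^ 2 * (t0 - y0) ^ 2 = M := by rw [h]; field_simp
      linarith [hM s0 hs0 t0 ht0]
    rcases eq_or_lt_of_le ht0.1 with h | ht0l
    · exact hside (by rw [← h]; ring)
    rcases eq_or_lt_of_le ht0.2 with h | ht0r
    · exact hside (by rw [h]; ring)
    -- interior maximum: both pure second derivatives are nonpositive
    exfalso
    have hs : Ioo 0 δ ∈ nhds s0 := Ioo_mem_nhds hs0pos hs0lt
    have ht : Ioo (y0 - δ) (y0 + δ) ∈ nhds t0 := Ioo_mem_nhds ht0l ht0r
    have hA : v11 s0 t0 + 2 * K ≤ 0 := by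
      refine second_deriv_nonpos_of_isLocalMax (f := fun s => z (s, t0))
        (f1 := fun s => v1 s t0 - (B - K * (2 * s))) (t := s0) ?_ ?_ ?_
      · filter_upwards [hs] with s h
        exact hmax (show (s, t0) ∈ _ from ⟨Ioo_subset_Icc_self h, ht0⟩)
      · filter_upwards [hs] with s h
        have := (h1 s h t0 ⟨ht0l, ht0r⟩).sub
          ((((hasDerivAt_id s).const_mul B).const_add (M / δ ^ 2 * (t0 - y0) ^ 2)).sub
            (((hasDerivAt_id s).pow 2).const_mul K))
        exact this.congr_deriv (by simp)
      · have := (h11 s0 ⟨hs0pos, hs0lt⟩ t0 ⟨ht0l, ht0r⟩).sub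
          ((((hasDerivAt_id s0).const_mul 2).const_mul K).const_sub B)
        exact this.congr_deriv (by ring)
    have hB' : v22 s0 t0 - M / δ ^ 2 * 2 ≤ 0 := by
      refine second_deriv_nonpos_of_isLocalMax (f := fun y => z (s0, y))
        (f1 := fun y => v2 s0 y - M / δ ^ 2 * (2 * (y - y0))) (t := t0) ?_ ?_ ?_
      · filter_upwards [ht] with s h
        exact hmax (show (s0, s) ∈ _ from ⟨hs0, Ioo_subset_Icc_self h⟩)
      · filter_upwards [ht] with y h
        have := (h2 s0 ⟨hs0pos, hs0lt⟩ y h).sub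
          ((((((hasDerivAt_id y).sub_const y0).pow 2).const_mul (M / δ ^ 2)).add_const
            (B * s0)).sub_const (K * s0 ^ 2))
        exact this.congr_deriv (by simp)
      · have := (h22 s0 ⟨hs0pos, hs0lt⟩ t0 ⟨ht0l, ht0r⟩).sub
          ((((hasDerivAt_id t0).sub_const y0).const_mul 2).const_mul (M / δ ^ 2))
        exact this.congr_deriv (by simp)
    have := hL s0 ⟨hs0pos, hs0lt⟩ t0 ⟨ht0l, ht0r⟩
    linarith
  intro s hs
  have := hmax (show (s, y0) ∈ _ from ⟨hs, by constructor <;> linarith⟩)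
  have h3 : z (s, y0) ≤ 0 := le_trans this key
  simp only [hz, sub_self] at h3
  nlinarith [mul_nonneg hK0 (sq_nonneg s)]

lemma barrier_abs {v v1 v11 v2 v22 : ℝ → ℝ → ℝ} {δ y0 M N : ℝ} (hδ : 0 < δ) (hN : 0 < N)
    (hc : ContinuousOn (Function.uncurry v) (Icc 0 δ ×ˢ Icc (y0 - δ) (y0 + δ)))
    (h1 : ∀ s ∈ Ioo 0 δ, ∀ y ∈ Ioo (y0 - δ) (y0 + δ), HasDerivAt (fun s => v s y) (v1 s y) s)
    (h11 : ∀ s ∈ Ioo 0 δ, ∀ y ∈ Ioo (y0 - δ) (y0 + δ), HasDerivAt (fun s => v1 s y) (v11 s y) s)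
    (h2 : ∀ s ∈ Ioo 0 δ, ∀ y ∈ Ioo (y0 - δ) (y0 + δ), HasDerivAt (fun y => v s y) (v2 s y) y)
    (h22 : ∀ s ∈ Ioo 0 δ, ∀ y ∈ Ioo (y0 - δ) (y0 + δ), HasDerivAt (fun y => v2 s y) (v22 s y) y)
    (hL : ∀ s ∈ Ioo 0 δ, ∀ y ∈ Ioo (y0 - δ) (y0 + δ), |v11 s y + v22 s y| ≤ N)
    (hM : ∀ s ∈ Icc 0 δ, ∀ y ∈ Icc (y0 - δ) (y0 + δ), |v s y| ≤ M)
    (h0 : ∀ y ∈ Icc (y0 - δ) (y0 + δ), v 0 y = 0) :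
    ∀ s ∈ Icc 0 δ, |v s y0| ≤ (2 * M / δ + N * δ) * s := by
  intro s hs
  refine abs_le'.2 ⟨?_, ?_⟩
  · exact barrier_upper hδ hN hc h1 h11 h2 h22 (fun s hs y hy => (abs_le.1 (hL s hs y hy)).1)
      (fun s hs y hy => (abs_le.1 (hM s hs y hy)).2) h0 s hs
  · refine barrier_upper (v := fun s y => - v s y) (v1 := fun s y => - v1 s y)
      (v11 := fun s y => - v11 s y) (v2 := fun s y => - v2 s y) (v22 := fun s y => - v22 s y)
      hδ hN hc.neg (fun s hs y hy => (h1 s hs y hy).neg) (fun s hs y hy => (h11 s hs y hy).neg)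
      (fun s hs y hy => (h2 s hs y hy).neg) (fun s hs y hy => (h22 s hs y hy).neg)
      (fun s hs y hy => ?_) (fun s hs y hy => ?_) (fun y hy => by simp [h0 y hy]) s hs
    · have := (abs_le.1 (hL s hs y hy)).2
      linarith
    · have := (abs_le.1 (hM s hs y hy)).1
      linarith

/-! ### Gradient bounds near a flat boundary -/

lemma abs_deriv_le_of_linear_bound {g : ℝ → ℝ} {g' x B t : ℝ} (ht : 0 < t) (hg : HasDerivAt g g' x)
    (hb : ∀ s ∈ Ioo 0 t, |g (x + s) - g x| ≤ B * s) : |g'| ≤ B := by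
  have h := (hasDerivAt_iff_tendsto_slope_zero.1 hg).mono_left
    (nhdsWithin_mono 0 (fun s (hs : s ∈ Ioi (0 : ℝ)) => ne_of_gt hs))
  refine le_of_tendsto h.abs ?_
  filter_upwards [Ioo_mem_nhdsGT ht] with s hs
  rw [smul_eq_mul, abs_mul, abs_inv, abs_of_pos hs.1, inv_mul_le_iff₀ hs.1, mul_comm]
  exact hb s hs

/-- Interior gradient estimate in terms of bounds for `v` and `Δv`: the barrier estimate is applied
to the odd part `(v(x0+s, y) - v(x0-s, y))/2`, which vanishes at `s = 0`. -/
lemma grad_bound_fst {v v1 v11 v2 v22 : ℝ → ℝ → ℝ} {t x0 y0 M N : ℝ} (ht : 0 < t) (hN : 0 < N)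
    (hc : ContinuousOn (Function.uncurry v) (Icc (x0 - t) (x0 + t) ×ˢ Icc (y0 - t) (y0 + t)))
    (h1 : ∀ s ∈ Icc (x0 - t) (x0 + t), ∀ y ∈ Icc (y0 - t) (y0 + t),
      HasDerivAt (fun s => v s y) (v1 s y) s)
    (h11 : ∀ s ∈ Icc (x0 - t) (x0 + t), ∀ y ∈ Icc (y0 - t) (y0 + t),
      HasDerivAt (fun s => v1 s y) (v11 s y) s)
    (h2 : ∀ s ∈ Icc (x0 - t) (x0 + t), ∀ y ∈ Icc (y0 - t) (y0 + t),
      HasDerivAt (fun y => v s y) (v2 s y) y)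
    (h22 : ∀ s ∈ Icc (x0 - t) (x0 + t), ∀ y ∈ Icc (y0 - t) (y0 + t),
      HasDerivAt (fun y => v2 s y) (v22 s y) y)
    (hL : ∀ s ∈ Icc (x0 - t) (x0 + t), ∀ y ∈ Icc (y0 - t) (y0 + t), |v11 s y + v22 s y| ≤ N)
    (hM : ∀ s ∈ Icc (x0 - t) (x0 + t), ∀ y ∈ Icc (y0 - t) (y0 + t), |v s y| ≤ M) :
    |v1 x0 y0| ≤ 2 * M / t + N * t := by
  have hp : ∀ s ∈ Icc 0 t, x0 + s ∈ Icc (x0 - t) (x0 + t) := fun s hs =>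
    ⟨by linarith [hs.1], by linarith [hs.2]⟩
  have hm : ∀ s ∈ Icc 0 t, x0 - s ∈ Icc (x0 - t) (x0 + t) := fun s hs =>
    ⟨by linarith [hs.2], by linarith [hs.1]⟩
  have hy0 : y0 ∈ Icc (y0 - t) (y0 + t) := ⟨by linarith, by linarith⟩
  have hx0 : x0 ∈ Icc (x0 - t) (x0 + t) := ⟨by linarith, by linarith⟩
  have key := barrier_abs (v := fun s y => (v (x0 + s) y - v (x0 - s) y) / 2)
    (v1 := fun s y => (v1 (x0 + s) y - -v1 (x0 - s) y) / 2)
    (v11 := fun s y => (v11 (x0 + s) y - - -v11 (x0 - s) y) / 2)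
    (v2 := fun s y => (v2 (x0 + s) y - v2 (x0 - s) y) / 2)
    (v22 := fun s y => (v22 (x0 + s) y - v22 (x0 - s) y) / 2) (y0 := y0) (M := M) ht hN
    ?_ ?_ ?_ ?_ ?_ ?_ ?_ ?_
  · refine abs_deriv_le_of_linear_bound (g := fun s => (v (x0 + s) y0 - v (x0 - s) y0) / 2)
      (x := 0) ht ?_ ?_
    · have hA : HasDerivAt (fun s => v s y0) (v1 x0 y0) (x0 + 0) := by
        simpa using h1 x0 hx0 y0 hy0
      have hB : HasDerivAt (fun s => v s y0) (v1 x0 y0) (x0 - 0) := by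
        simpa using h1 x0 hx0 y0 hy0
      exact (((hA.comp_const_add x0 0).sub (hB.comp_const_sub x0 0)).div_const 2).congr_deriv
        (by ring)
    · intro s hs
      have := key s (Ioo_subset_Icc_self hs)
      simpa using this
  · refine ContinuousOn.div_const (ContinuousOn.sub ?_ ?_) 2
    · refine hc.comp (f := fun q : ℝ × ℝ => (x0 + q.1, q.2)) (by fun_prop) ?_
      exact fun q hq => ⟨hp _ hq.1, hq.2⟩
    · refine hc.comp (f := fun q : ℝ × ℝ => (x0 - q.1, q.2)) (by fun_prop) ?_
      exact fun q hq => ⟨hm _ hq.1, hq.2⟩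
  · intro s hs y hy
    have hs := Ioo_subset_Icc_self hs
    have hy := Ioo_subset_Icc_self hy
    exact (((h1 _ (hp s hs) y hy).comp_const_add x0 s).sub
      ((h1 _ (hm s hs) y hy).comp_const_sub x0 s)).div_const 2
  · intro s hs y hy
    have hs := Ioo_subset_Icc_self hs
    have hy := Ioo_subset_Icc_self hy
    exact (((h11 _ (hp s hs) y hy).comp_const_add x0 s).sub
      ((h11 _ (hm s hs) y hy).comp_const_sub x0 s).neg).div_const 2
  · intro s hs y hy
    have hs := Ioo_subset_Icc_self hs
    have hy := Ioo_subset_Icc_self hy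
    exact ((h2 _ (hp s hs) y hy).sub (h2 _ (hm s hs) y hy)).div_const 2
  · intro s hs y hy
    have hs := Ioo_subset_Icc_self hs
    have hy := Ioo_subset_Icc_self hy
    exact ((h22 _ (hp s hs) y hy).sub (h22 _ (hm s hs) y hy)).div_const 2
  · intro s hs y hy
    have hs := Ioo_subset_Icc_self hs
    have hy := Ioo_subset_Icc_self hy
    have e1 := abs_le.1 (hL _ (hp s hs) y hy)
    have e2 := abs_le.1 (hL _ (hm s hs) y hy)
    exact abs_le.2 ⟨by linarith, by linarith⟩
  · intro s hs y hy
    have e1 := abs_le.1 (hM _ (hp s hs) y hy)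
    have e2 := abs_le.1 (hM _ (hm s hs) y hy)
    exact abs_le.2 ⟨by linarith, by linarith⟩
  · intro y hy
    simp

lemma grad_bound_snd {v v1 v11 v2 v22 : ℝ → ℝ → ℝ} {t x0 y0 M N : ℝ} (ht : 0 < t) (hN : 0 < N)
    (hc : ContinuousOn (Function.uncurry v) (Icc (x0 - t) (x0 + t) ×ˢ Icc (y0 - t) (y0 + t)))
    (h1 : ∀ s ∈ Icc (x0 - t) (x0 + t), ∀ y ∈ Icc (y0 - t) (y0 + t),
      HasDerivAt (fun s => v s y) (v1 s y) s)
    (h11 : ∀ s ∈ Icc (x0 - t) (x0 + t), ∀ y ∈ Icc (y0 - t) (y0 + t),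
      HasDerivAt (fun s => v1 s y) (v11 s y) s)
    (h2 : ∀ s ∈ Icc (x0 - t) (x0 + t), ∀ y ∈ Icc (y0 - t) (y0 + t),
      HasDerivAt (fun y => v s y) (v2 s y) y)
    (h22 : ∀ s ∈ Icc (x0 - t) (x0 + t), ∀ y ∈ Icc (y0 - t) (y0 + t),
      HasDerivAt (fun y => v2 s y) (v22 s y) y)
    (hL : ∀ s ∈ Icc (x0 - t) (x0 + t), ∀ y ∈ Icc (y0 - t) (y0 + t), |v11 s y + v22 s y| ≤ N)
    (hM : ∀ s ∈ Icc (x0 - t) (x0 + t), ∀ y ∈ Icc (y0 - t) (y0 + t), |v s y| ≤ M) :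
    |v2 x0 y0| ≤ 2 * M / t + N * t := by
  refine grad_bound_fst (v := fun s y => v y s) (v1 := fun s y => v2 y s)
    (v11 := fun s y => v22 y s) (v2 := fun s y => v1 y s) (v22 := fun s y => v11 y s)
    (x0 := y0) (y0 := x0) ht hN ?_ (fun s hs y hy => h2 y hy s hs)
    (fun s hs y hy => h22 y hy s hs) (fun s hs y hy => h1 y hy s hs)
    (fun s hs y hy => h11 y hy s hs) (fun s hs y hy => by rw [add_comm]; exact hL y hy s hs)
    (fun s hs y hy => hM y hy s hs)
  exact hc.comp (f := fun q : ℝ × ℝ => (q.2, q.1)) (by fun_prop) fun q hq => ⟨hq.2, hq.1⟩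

/-- Boundary regularity for `-Δv = qv` in a strip with `v = 0` on `s = 0`: the gradient is bounded
and the tangential derivative is `O(s)`. The potential `q` is Lipschitz in the tangential variable,
so that tangential difference quotients of `v` solve an equation with bounded right-hand side. -/
lemma strip_bound {v v1 v11 v2 v22 q : ℝ → ℝ → ℝ} {c R R' d Qm Lq : ℝ} (hd : 0 < d)
    (hR : R < R')
    (hc : ContinuousOn (Function.uncurry v) (Icc 0 d ×ˢ Icc (c - R') (c + R')))
    (h0 : ∀ y ∈ Icc (c - R') (c + R'), v 0 y = 0)
    (h1 : ∀ s ∈ Ioo 0 d, ∀ y ∈ Ioo (c - R') (c + R'), HasDerivAt (fun s => v s y) (v1 s y) s)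
    (h11 : ∀ s ∈ Ioo 0 d, ∀ y ∈ Ioo (c - R') (c + R'), HasDerivAt (fun s => v1 s y) (v11 s y) s)
    (h2 : ∀ s ∈ Ioo 0 d, ∀ y ∈ Ioo (c - R') (c + R'), HasDerivAt (fun y => v s y) (v2 s y) y)
    (h22 : ∀ s ∈ Ioo 0 d, ∀ y ∈ Ioo (c - R') (c + R'), HasDerivAt (fun y => v2 s y) (v22 s y) y)
    (heq : ∀ s ∈ Ioo 0 d, ∀ y ∈ Ioo (c - R') (c + R'), v11 s y + v22 s y = -(q s y * v s y))
    (hq : ∀ s y, |q s y| ≤ Qm) (hqL : ∀ s y y', |q s y' - q s y| ≤ Lq * |y' - y|) :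
    ∃ L > 0, ∃ δ > 0, δ ≤ d ∧ ∀ s ∈ Ioo 0 δ, ∀ y ∈ Icc (c - R) (c + R),
      |v1 s y| ≤ L ∧ |v2 s y| ≤ L * s := by
  obtain ⟨M0, hM0⟩ := (isCompact_Icc.prod isCompact_Icc).exists_bound_of_continuousOn hc
  set M := max M0 0 with hMdef
  have hM : ∀ s ∈ Icc 0 d, ∀ y ∈ Icc (c - R') (c + R'), |v s y| ≤ M := fun s hs y hy =>
    le_trans (hM0 (s, y) ⟨hs, hy⟩) (le_max_left _ _)
  have hMn : 0 ≤ M := le_max_right _ _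
  have hQ : 0 ≤ Qm := le_trans (abs_nonneg _) (hq 0 0)
  have hLq : 0 ≤ Lq := by
    have := hqL 0 0 1
    have h' := abs_nonneg (q 0 1 - q 0 0)
    simp at this
    linarith
  set N := Qm * M + 1 with hN
  have hNpos : 0 < N := by positivity
  have hLap : ∀ s ∈ Ioo 0 d, ∀ y ∈ Ioo (c - R') (c + R'), |v11 s y + v22 s y| ≤ N := by
    intro s hs y hy
    rw [heq s hs y hy, abs_neg, abs_mul]
    have := mul_le_mul (hq s y) (hM s (Ioo_subset_Icc_self hs) y (Ioo_subset_Icc_self hy))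
      (abs_nonneg _) hQ
    linarith
  set η := (R' - R) / 4 with hη
  have hηpos : 0 < η := by rw [hη]; linarith
  have hR' : R' = R + 4 * η := by rw [hη]; ring
  set δ1 := min d η with hδ1
  have hδ1pos : 0 < δ1 := lt_min hd hηpos
  have hδ1d : δ1 ≤ d := min_le_left _ _
  have hδ1η : δ1 ≤ η := min_le_right _ _
  set B1 := 2 * M / δ1 + N * δ1 with hB1
  have hB1n : 0 ≤ B1 := by positivity
  -- linear vanishing of `v` from the barrier
  have step1 : ∀ s ∈ Icc 0 δ1, ∀ y ∈ Icc (c - (R + 3 * η)) (c + (R + 3 * η)),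
      |v s y| ≤ B1 * s := by
    intro s hs y hy
    have sub : ∀ y' ∈ Icc (y - δ1) (y + δ1), y' ∈ Icc (c - R') (c + R') := fun y' h =>
      ⟨by linarith [h.1, hy.1], by linarith [h.2, hy.2]⟩
    have sub' : ∀ y' ∈ Ioo (y - δ1) (y + δ1), y' ∈ Ioo (c - R') (c + R') := fun y' h =>
      ⟨by linarith [h.1, hy.1], by linarith [h.2, hy.2]⟩
    have ss : ∀ s ∈ Icc 0 δ1, s ∈ Icc 0 d := fun s h => ⟨h.1, h.2.trans hδ1d⟩
    have ss' : ∀ s ∈ Ioo 0 δ1, s ∈ Ioo 0 d := fun s h => ⟨h.1, h.2.trans_le hδ1d⟩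
    exact barrier_abs hδ1pos hNpos (hc.mono fun q hq => ⟨ss _ hq.1, sub _ hq.2⟩)
      (fun s hs y hy => h1 s (ss' s hs) y (sub' y hy))
      (fun s hs y hy => h11 s (ss' s hs) y (sub' y hy))
      (fun s hs y hy => h2 s (ss' s hs) y (sub' y hy))
      (fun s hs y hy => h22 s (ss' s hs) y (sub' y hy))
      (fun s hs y hy => hLap s (ss' s hs) y (sub' y hy))
      (fun s hs y hy => hM s (ss s hs) y (sub y hy))
      (fun y hy => h0 y (sub y hy)) s hs
  set L1 := 6 * B1 + N * δ1 with hL1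
  have hL1n : 0 ≤ L1 := by positivity
  set δ2 := δ1 / 2 with hδ2
  have hδ2pos : 0 < δ2 := by positivity
  -- interior gradient estimate on a square of half-width `s/2`, where `|v| ≤ 3/2 * B1 * s`
  have step2 : ∀ s ∈ Ioc 0 δ2, ∀ y ∈ Icc (c - (R + 2 * η)) (c + (R + 2 * η)),
      |v1 s y| ≤ L1 ∧ |v2 s y| ≤ L1 := by
    intro s hs y hy
    have hs0 := hs.1
    have hs2 : s ≤ δ1 / 2 := hs.2
    have ss : ∀ x ∈ Icc (s - s / 2) (s + s / 2), x ∈ Ioo 0 δ1 := fun x h =>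
      ⟨by linarith [h.1], by linarith [h.2]⟩
    have ss' : ∀ x ∈ Icc (s - s / 2) (s + s / 2), x ∈ Ioo 0 d := fun x h =>
      ⟨(ss x h).1, (ss x h).2.trans_le hδ1d⟩
    have sy : ∀ x ∈ Icc (y - s / 2) (y + s / 2), x ∈ Icc (c - (R + 3 * η)) (c + (R + 3 * η)) :=
      fun x h => ⟨by linarith [h.1, hy.1], by linarith [h.2, hy.2]⟩
    have sy' : ∀ x ∈ Icc (y - s / 2) (y + s / 2), x ∈ Ioo (c - R') (c + R') :=
      fun x h => ⟨by linarith [(sy x h).1], by linarith [(sy x h).2]⟩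
    have hMs : ∀ x ∈ Icc (s - s / 2) (s + s / 2), ∀ z ∈ Icc (y - s / 2) (y + s / 2),
        |v x z| ≤ B1 * (3 / 2 * s) := by
      intro x hx z hz
      refine (step1 x (Ioo_subset_Icc_self (ss x hx)) z (sy z hz)).trans ?_
      exact mul_le_mul_of_nonneg_left (by linarith [hx.2]) hB1n
    have hcs : ContinuousOn (Function.uncurry v)
        (Icc (s - s / 2) (s + s / 2) ×ˢ Icc (y - s / 2) (y + s / 2)) :=
      hc.mono fun q hq => ⟨Ioo_subset_Icc_self (ss' _ hq.1), Ioo_subset_Icc_self (sy' _ hq.2)⟩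
    have hfin : 2 * (B1 * (3 / 2 * s)) / (s / 2) + N * (s / 2) ≤ L1 := by
      have e : 2 * (B1 * (3 / 2 * s)) / (s / 2) = 6 * B1 := by field_simp; ring
      rw [e, hL1]
      have : N * (s / 2) ≤ N * δ1 := mul_le_mul_of_nonneg_left (by linarith) hNpos.le
      linarith
    constructor
    · exact (grad_bound_fst (half_pos hs0) hNpos hcs
        (fun s hs y hy => h1 s (ss' s hs) y (sy' y hy))
        (fun s hs y hy => h11 s (ss' s hs) y (sy' y hy))
        (fun s hs y hy => h2 s (ss' s hs) y (sy' y hy))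
        (fun s hs y hy => h22 s (ss' s hs) y (sy' y hy))
        (fun s hs y hy => hLap s (ss' s hs) y (sy' y hy)) hMs).trans hfin
    · exact (grad_bound_snd (half_pos hs0) hNpos hcs
        (fun s hs y hy => h1 s (ss' s hs) y (sy' y hy))
        (fun s hs y hy => h11 s (ss' s hs) y (sy' y hy))
        (fun s hs y hy => h2 s (ss' s hs) y (sy' y hy))
        (fun s hs y hy => h22 s (ss' s hs) y (sy' y hy))
        (fun s hs y hy => hLap s (ss' s hs) y (sy' y hy)) hMs).trans hfin
  have hδ2δ1 : δ2 < δ1 := by rw [hδ2]; linarith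
  have s2d : ∀ s ∈ Ioc 0 δ2, s ∈ Ioo 0 d := fun s h => ⟨h.1, by linarith [h.2]⟩
  set N3 := Qm * L1 + Lq * M + 1 with hN3
  have hN3pos : 0 < N3 := by positivity
  set B3 := 2 * L1 / δ2 + N3 * δ2 with hB3
  have lip : ∀ s ∈ Ioc 0 δ2, ∀ y h, y ∈ Icc (c - (R + η)) (c + (R + η)) → h ∈ Ioo 0 η →
      |v s (y + h) - v s y| ≤ L1 * h := by
    intro s hs y h hy hh
    have := (convex_Icc (c - (R + 2 * η)) (c + (R + 2 * η))).norm_image_sub_le_of_norm_hasDerivWithin_le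
      (f := fun y => v s y) (f' := fun y => v2 s y) (C := L1) (x := y) (y := y + h)
      (fun x hx => (h2 s (s2d s hs) x ⟨by linarith [hx.1], by linarith [hx.2]⟩).hasDerivWithinAt)
      (fun x hx => (step2 s hs x hx).2)
      ⟨by linarith [hy.1], by linarith [hy.2]⟩
      ⟨by linarith [hy.1, hh.1], by linarith [hy.2, hh.2]⟩
    simpa [abs_of_pos hh.1] using this
  -- the barrier applied to the tangential difference quotients, uniformly in the increment
  have step3 : ∀ s ∈ Ioo 0 δ2, ∀ y ∈ Icc (c - R) (c + R), |v2 s y| ≤ B3 * s := by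
    intro s hs y hy
    have hs' := Ioo_subset_Ioc_self hs
    refine abs_deriv_le_of_linear_bound hηpos
      (h2 s (s2d s hs') y ⟨by linarith [hy.1], by linarith [hy.2]⟩) ?_
    intro h hh
    have hh0 := hh.1
    have sy : ∀ x ∈ Icc (y - δ2) (y + δ2), x ∈ Icc (c - (R + η)) (c + (R + η)) :=
      fun x h => ⟨by linarith [h.1, hy.1], by linarith [h.2, hy.2]⟩
    have sy0 : ∀ x ∈ Icc (y - δ2) (y + δ2), x ∈ Ioo (c - R') (c + R') :=
      fun x h => ⟨by linarith [(sy x h).1], by linarith [(sy x h).2]⟩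
    have syh : ∀ x ∈ Icc (y - δ2) (y + δ2), x + h ∈ Ioo (c - R') (c + R') :=
      fun x h => ⟨by linarith [(sy x h).1], by linarith [(sy x h).2, hh.2]⟩
    have ss : ∀ s ∈ Icc 0 δ2, s ∈ Icc 0 d := fun s h => ⟨h.1, by linarith [h.2]⟩
    have ss' : ∀ s ∈ Ioo 0 δ2, s ∈ Ioo 0 d := fun s h => ⟨h.1, by linarith [h.2]⟩
    have key := barrier_abs (v := fun s y => (v s (y + h) - v s y) / h)
      (v1 := fun s y => (v1 s (y + h) - v1 s y) / h)
      (v11 := fun s y => (v11 s (y + h) - v11 s y) / h)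
      (v2 := fun s y => (v2 s (y + h) - v2 s y) / h)
      (v22 := fun s y => (v22 s (y + h) - v22 s y) / h) (δ := δ2) (y0 := y) (M := L1) (N := N3)
      hδ2pos hN3pos ?_ ?_ ?_ ?_ ?_ ?_ ?_ ?_ s (Ioo_subset_Icc_self hs)
    · rw [abs_div, abs_of_pos hh0, div_le_iff₀ hh0] at key
      exact key
    · refine ContinuousOn.div_const (ContinuousOn.sub ?_ ?_) h
      · refine hc.comp (f := fun q : ℝ × ℝ => (q.1, q.2 + h)) (by fun_prop) ?_
        exact fun q hq => ⟨ss _ hq.1, Ioo_subset_Icc_self (syh _ hq.2)⟩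
      · exact hc.mono fun q hq => ⟨ss _ hq.1, Ioo_subset_Icc_self (sy0 _ hq.2)⟩
    · intro s hs x hx
      have hx := Ioo_subset_Icc_self hx
      exact ((h1 s (ss' s hs) _ (syh x hx)).sub (h1 s (ss' s hs) _ (sy0 x hx))).div_const h
    · intro s hs x hx
      have hx := Ioo_subset_Icc_self hx
      exact ((h11 s (ss' s hs) _ (syh x hx)).sub (h11 s (ss' s hs) _ (sy0 x hx))).div_const h
    · intro s hs x hx
      have hx := Ioo_subset_Icc_self hx
      exact (((h2 s (ss' s hs) _ (syh x hx)).comp_add_const x h).sub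
        (h2 s (ss' s hs) _ (sy0 x hx))).div_const h
    · intro s hs x hx
      have hx := Ioo_subset_Icc_self hx
      exact (((h22 s (ss' s hs) _ (syh x hx)).comp_add_const x h).sub
        (h22 s (ss' s hs) _ (sy0 x hx))).div_const h
    · intro s hs x hx
      have hx := Ioo_subset_Icc_self hx
      have e : (v11 s (x + h) - v11 s x) / h + (v22 s (x + h) - v22 s x) / h =
          -(q s (x + h) * (v s (x + h) - v s x) + (q s (x + h) - q s x) * v s x) / h := by
        have e1 := heq s (ss' s hs) _ (syh x hx)
        have e2 := heq s (ss' s hs) _ (sy0 x hx)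
        rw [← add_div]
        congr 1
        linear_combination e1 - e2
      rw [e, abs_div, abs_of_pos hh0, div_le_iff₀ hh0, abs_neg]
      refine (abs_add_le _ _).trans ?_
      rw [abs_mul, abs_mul]
      have b1 := mul_le_mul (hq s (x + h))
        (lip s (Ioo_subset_Ioc_self hs) x h (sy x hx) hh) (abs_nonneg _) hQ
      have b2 := mul_le_mul (hqL s x (x + h))
        (hM s (Ioo_subset_Icc_self (ss' s hs)) x (Ioo_subset_Icc_self (sy0 x hx)))
        (abs_nonneg _) (by positivity)
      rw [add_sub_cancel_left, abs_of_pos hh0] at b2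
      have : N3 * h = Qm * (L1 * h) + Lq * h * M + h := by rw [hN3]; ring
      linarith
    · intro s hs x hx
      rw [abs_div, abs_of_pos hh0, div_le_iff₀ hh0]
      rcases eq_or_lt_of_le hs.1 with h' | h'
      · rw [← h', h0 _ (Ioo_subset_Icc_self (syh x hx)), h0 _ (Ioo_subset_Icc_self (sy0 x hx))]
        simp only [sub_self, abs_zero]; positivity
      · exact lip s ⟨h', hs.2⟩ x h (sy x hx) hh
    · intro x hx
      show (v 0 (x + h) - v 0 x) / h = 0
      rw [h0 _ (Ioo_subset_Icc_self (syh x hx)), h0 _ (Ioo_subset_Icc_self (sy0 x hx))]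
      simp
  refine ⟨max L1 B3 + 1, by positivity, δ2, hδ2pos, by linarith, fun s hs y hy => ⟨?_, ?_⟩⟩
  · have := (step2 s (Ioo_subset_Ioc_self hs) y
      ⟨by linarith [hy.1], by linarith [hy.2]⟩).1
    linarith [le_max_left L1 B3]
  · refine (step3 s hs y hy).trans (mul_le_mul_of_nonneg_right ?_ hs.1.le)
    linarith [le_max_right L1 B3]

/-! ### Polar coordinates and the divergence theorem -/

lemma hasDerivAt_circleMap_radius (c : ℂ) (ρ θ : ℝ) :
    HasDerivAt (fun ρ : ℝ => circleMap c ρ θ) ((Real.cos θ : ℂ) + Real.sin θ * Complex.I) ρ := by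
  have h : (fun ρ : ℝ => circleMap c ρ θ) = fun ρ : ℝ => c + (ρ : ℂ) * Complex.exp (θ * Complex.I) := by
    ext; rfl
  rw [h]
  have := ((Complex.ofRealCLM.hasDerivAt (x := ρ)).mul_const (Complex.exp (θ * Complex.I))).const_add c
  refine this.congr_deriv ?_
  simp [Complex.exp_mul_I]

lemma circleMap_eq (c : ℂ) (ρ θ : ℝ) :
    circleMap c ρ θ = c + ρ * ((Real.cos θ : ℂ) + Real.sin θ * Complex.I) := by
  simp [circleMap, Complex.exp_mul_I]

lemma hasDerivAt_circleMap_angle (c : ℂ) (ρ θ : ℝ) :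
    HasDerivAt (fun θ : ℝ => circleMap c ρ θ)
      ((ρ : ℂ) * (-(Real.sin θ : ℂ) + Real.cos θ * Complex.I)) θ := by
  refine (hasDerivAt_circleMap c ρ θ).congr_deriv ?_
  rw [circleMap_eq, zero_add]
  linear_combination (ρ : ℂ) * Real.sin θ * Complex.I_mul_I

lemma differentiable_circleMap_prod (c : ℂ) :
    Differentiable ℝ (fun q : ℝ × ℝ => circleMap c q.1 q.2) := by
  have h : (fun q : ℝ × ℝ => circleMap c q.1 q.2) =
      fun q : ℝ × ℝ => c + (q.1 : ℂ) * Complex.exp (q.2 * Complex.I) := by ext; rfl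
  rw [h]
  have h1 : Differentiable ℝ (fun q : ℝ × ℝ => (q.1 : ℂ)) :=
    Complex.ofRealCLM.differentiable.comp differentiable_fst
  have h2 : Differentiable ℝ (fun q : ℝ × ℝ => (q.2 : ℂ)) :=
    Complex.ofRealCLM.differentiable.comp differentiable_snd
  exact (h1.mul (h2.mul_const _).cexp).const_add c

lemma fderiv_apply_eq (W : ℂ → ℝ) (x : ℂ) (s t : ℝ) :
    fderiv ℝ W x ((s : ℂ) + t * Complex.I) = s * fderiv ℝ W x 1 + t * fderiv ℝ W x Complex.I := by
  have : ((s : ℂ) + t * Complex.I) = s • (1 : ℂ) + t • Complex.I := by simp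
  rw [this, map_add, map_smul, map_smul, smul_eq_mul, smul_eq_mul]

/-- Divergence theorem for the image of a rectangle `[ρ0, R] × [α, β]` under polar coordinates
centred at `c`; the first two terms on the right are the fluxes through the straight sides. -/
lemma polar_divergence (W1 W2 H : ℂ → ℝ) (c : ℂ) {ρ0 R α β : ℝ} (hR : ρ0 ≤ R)
    (hαβ : α ≤ β)
    (hd1 : ∀ ρ ∈ Icc ρ0 R, ∀ θ ∈ Icc α β, DifferentiableAt ℝ W1 (circleMap c ρ θ))
    (hd2 : ∀ ρ ∈ Icc ρ0 R, ∀ θ ∈ Icc α β, DifferentiableAt ℝ W2 (circleMap c ρ θ))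
    (hH : ∀ ρ ∈ Icc ρ0 R, ∀ θ ∈ Icc α β, fderiv ℝ W1 (circleMap c ρ θ) 1 +
      fderiv ℝ W2 (circleMap c ρ θ) Complex.I = H (circleMap c ρ θ))
    (hHc : ContinuousOn (fun q : ℝ × ℝ => H (circleMap c q.1 q.2)) (Icc ρ0 R ×ˢ Icc α β)) :
    ∫ q in Icc ρ0 R ×ˢ Icc α β, q.1 * H (circleMap c q.1 q.2) =
      (∫ ρ in ρ0..R, (-Real.sin β * W1 (circleMap c ρ β) + Real.cos β * W2 (circleMap c ρ β))) -
      (∫ ρ in ρ0..R, (-Real.sin α * W1 (circleMap c ρ α) + Real.cos α * W2 (circleMap c ρ α))) +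
      (∫ θ in α..β, R * (Real.cos θ * W1 (circleMap c R θ) + Real.sin θ * W2 (circleMap c R θ))) -
      ∫ θ in α..β, ρ0 * (Real.cos θ * W1 (circleMap c ρ0 θ) +
        Real.sin θ * W2 (circleMap c ρ0 θ)) := by
  set T : ℝ × ℝ → ℂ := fun q => circleMap c q.1 q.2 with hT
  set f : ℝ × ℝ → ℝ := fun q => q.1 * (Real.cos q.2 * W1 (T q) + Real.sin q.2 * W2 (T q)) with hf
  set g : ℝ × ℝ → ℝ := fun q => -Real.sin q.2 * W1 (T q) + Real.cos q.2 * W2 (T q) with hg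
  have hTd := differentiable_circleMap_prod c
  have hbox : Icc (ρ0, α) (R, β) = Icc ρ0 R ×ˢ Icc α β := (Icc_prod_Icc _ _ _ _).symm
  have hW1 : ∀ q ∈ Icc ρ0 R ×ˢ Icc α β, DifferentiableAt ℝ (fun q => W1 (T q)) q :=
    fun q hq => (hd1 q.1 hq.1 q.2 hq.2).comp q (hTd q)
  have hW2 : ∀ q ∈ Icc ρ0 R ×ˢ Icc α β, DifferentiableAt ℝ (fun q => W2 (T q)) q :=
    fun q hq => (hd2 q.1 hq.1 q.2 hq.2).comp q (hTd q)
  have hfd : ∀ q ∈ Icc ρ0 R ×ˢ Icc α β, DifferentiableAt ℝ f q := by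
    intro q hq
    have h1 := hW1 q hq
    have h2 := hW2 q hq
    have h3 : DifferentiableAt ℝ (fun q : ℝ × ℝ => Real.cos q.2) q := by fun_prop
    have h4 : DifferentiableAt ℝ (fun q : ℝ × ℝ => Real.sin q.2) q := by fun_prop
    exact differentiableAt_fst.mul ((h3.mul h1).add (h4.mul h2))
  have hgd : ∀ q ∈ Icc ρ0 R ×ˢ Icc α β, DifferentiableAt ℝ g q := by
    intro q hq
    have h1 := hW1 q hq
    have h2 := hW2 q hq
    have h3 : DifferentiableAt ℝ (fun q : ℝ × ℝ => Real.cos q.2) q := by fun_prop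
    have h4 : DifferentiableAt ℝ (fun q : ℝ × ℝ => -Real.sin q.2) q := by fun_prop
    exact (h4.mul h1).add (h3.mul h2)
  have hdiv : ∀ q ∈ Icc ρ0 R ×ˢ Icc α β,
      fderiv ℝ f q (1, 0) + fderiv ℝ g q (0, 1) = q.1 * H (T q) := by
    rintro ⟨ρ, θ⟩ hq
    have hw1 := (hd1 ρ hq.1 θ hq.2).hasFDerivAt
    have hw2 := (hd2 ρ hq.1 θ hq.2).hasFDerivAt
    have e1 : fderiv ℝ f (ρ, θ) (1, 0) = (1 * (Real.cos θ * W1 (circleMap c ρ θ) +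
        Real.sin θ * W2 (circleMap c ρ θ)) + ρ * (Real.cos θ * fderiv ℝ W1 (circleMap c ρ θ)
          ((Real.cos θ : ℂ) + Real.sin θ * Complex.I) + Real.sin θ *
          fderiv ℝ W2 (circleMap c ρ θ) ((Real.cos θ : ℂ) + Real.sin θ * Complex.I))) := by
      have hl : HasDerivAt (fun ρ : ℝ => (ρ, θ)) ((1 : ℝ), (0 : ℝ)) ρ :=
        (hasDerivAt_id ρ).prodMk (hasDerivAt_const ρ θ)
      have hA := (hfd (ρ, θ) hq).hasFDerivAt.comp_hasDerivAt ρ hl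
      have r1 := hw1.comp_hasDerivAt ρ (hasDerivAt_circleMap_radius c ρ θ)
      have r2 := hw2.comp_hasDerivAt ρ (hasDerivAt_circleMap_radius c ρ θ)
      have hB := (hasDerivAt_id ρ).mul ((r1.const_mul (Real.cos θ)).add
        (r2.const_mul (Real.sin θ)))
      exact hA.unique hB
    have e2 : fderiv ℝ g (ρ, θ) (0, 1) = (-Real.cos θ * W1 (circleMap c ρ θ) +
        -Real.sin θ * fderiv ℝ W1 (circleMap c ρ θ)
          ((ρ : ℂ) * (-(Real.sin θ : ℂ) + Real.cos θ * Complex.I))) +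
        (-Real.sin θ * W2 (circleMap c ρ θ) + Real.cos θ *
          fderiv ℝ W2 (circleMap c ρ θ)
          ((ρ : ℂ) * (-(Real.sin θ : ℂ) + Real.cos θ * Complex.I))) := by
      have hl : HasDerivAt (fun θ : ℝ => (ρ, θ)) ((0 : ℝ), (1 : ℝ)) θ :=
        (hasDerivAt_const θ ρ).prodMk (hasDerivAt_id θ)
      have hA := (hgd (ρ, θ) hq).hasFDerivAt.comp_hasDerivAt θ hl
      have r1 := hw1.comp_hasDerivAt θ (hasDerivAt_circleMap_angle c ρ θ)
      have r2 := hw2.comp_hasDerivAt θ (hasDerivAt_circleMap_angle c ρ θ)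
      have hB := ((Real.hasDerivAt_sin θ).neg.mul r1).add ((Real.hasDerivAt_cos θ).mul r2)
      exact hA.unique hB
    have e3 : ((ρ : ℂ) * (-(Real.sin θ : ℂ) + Real.cos θ * Complex.I)) =
        ((-(ρ * Real.sin θ) : ℝ) : ℂ) + ((ρ * Real.cos θ : ℝ) : ℂ) * Complex.I := by
      push_cast; ring
    rw [e1, e2, e3, fderiv_apply_eq, fderiv_apply_eq, fderiv_apply_eq, fderiv_apply_eq]
    show _ = ρ * H (circleMap c ρ θ)
    rw [← hH ρ hq.1 θ hq.2]
    linear_combination (ρ * fderiv ℝ W1 (circleMap c ρ θ) 1 +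
      ρ * fderiv ℝ W2 (circleMap c ρ θ) Complex.I) * Real.sin_sq_add_cos_sq θ
  have hHint : IntegrableOn (fun q : ℝ × ℝ => q.1 * H (T q)) (Icc ρ0 R ×ˢ Icc α β) :=
    ContinuousOn.integrableOn_compact (isCompact_Icc.prod isCompact_Icc)
      (continuousOn_fst.mul hHc)
  have hmeas : MeasurableSet (Icc ρ0 R ×ˢ Icc α β) := measurableSet_Icc.prod measurableSet_Icc
  have main := integral_divergence_prod_Icc_of_hasFDerivAt_of_le f g (fderiv ℝ f) (fderiv ℝ g)
    (ρ0, α) (R, β) ⟨hR, hαβ⟩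
    (by rw [hbox]; exact fun q hq => (hfd q hq).continuousAt.continuousWithinAt)
    (by rw [hbox]; exact fun q hq => (hgd q hq).continuousAt.continuousWithinAt)
    (fun q hq => (hfd q ⟨Ioo_subset_Icc_self hq.1, Ioo_subset_Icc_self hq.2⟩).hasFDerivAt)
    (fun q hq => (hgd q ⟨Ioo_subset_Icc_self hq.1, Ioo_subset_Icc_self hq.2⟩).hasFDerivAt)
    (by rw [hbox]; exact hHint.congr_fun (fun q hq => (hdiv q hq).symm) hmeas)
  rw [hbox, setIntegral_congr_fun hmeas hdiv] at main
  exact main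

/-- Polar coordinates centred at `c` for the integral over a set `S`, described by `T`. -/
lemma setIntegral_polar (H : ℂ → ℝ) (c : ℂ) {S : Set ℂ} {T : Set (ℝ × ℝ)} (hS : MeasurableSet S)
    (hT : MeasurableSet T) (hTt : T ⊆ Ioi (0 : ℝ) ×ˢ Ioo (-π) π)
    (hST : ∀ q ∈ Ioi (0 : ℝ) ×ˢ Ioo (-π) π, circleMap c q.1 q.2 ∈ S ↔ q ∈ T) :
    ∫ x in S, H x = ∫ q in T, q.1 * H (circleMap c q.1 q.2) := by
  rw [← integral_indicator hS, ← integral_add_left_eq_self _ c,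
    ← Complex.integral_comp_polarCoord_symm, polarCoord_target]
  have hm : MeasurableSet (Ioi (0 : ℝ) ×ˢ Ioo (-π) π) := measurableSet_Ioi.prod measurableSet_Ioo
  have : ∀ q ∈ Ioi (0 : ℝ) ×ˢ Ioo (-π) π,
      q.1 • S.indicator H (c + Complex.polarCoord.symm q) =
      T.indicator (fun q => q.1 * H (circleMap c q.1 q.2)) q := by
    intro q hq
    have e : c + Complex.polarCoord.symm q = circleMap c q.1 q.2 := by
      rw [Complex.polarCoord_symm_apply, circleMap_eq]
    rw [e]
    by_cases h : q ∈ T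
    · rw [indicator_of_mem h, indicator_of_mem ((hST q hq).2 h), smul_eq_mul]
    · rw [indicator_of_notMem h, indicator_of_notMem (fun h' => h ((hST q hq).1 h')), smul_zero]
  rw [setIntegral_congr_fun hm this, setIntegral_indicator hT, inter_eq_self_of_subset_right hTt]

lemma dist_circleMap_center (c : ℂ) {ρ : ℝ} (hρ : 0 ≤ ρ) (θ : ℝ) : dist (circleMap c ρ θ) c = ρ := by
  rw [dist_eq_norm, circleMap_sub_center, norm_circleMap_zero, abs_of_nonneg hρ]

lemma circleMap_re (c : ℂ) (ρ θ : ℝ) : (circleMap c ρ θ).re = c.re + ρ * Real.cos θ := by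
  simp [circleMap_eq, -Complex.ofReal_cos, -Complex.ofReal_sin]

lemma circleMap_im (c : ℂ) (ρ θ : ℝ) : (circleMap c ρ θ).im = c.im + ρ * Real.sin θ := by
  simp [circleMap_eq, -Complex.ofReal_cos, -Complex.ofReal_sin]

lemma setIntegral_closedBall_polar (H : ℂ → ℝ) (c : ℂ) (R : ℝ) :
    ∫ x in Metric.closedBall c R, H x =
      ∫ q in Icc 0 R ×ˢ Icc (-π) π, q.1 * H (circleMap c q.1 q.2) := by
  rw [setIntegral_polar H c (T := Ioc 0 R ×ˢ Ioo (-π) π) Metric.isClosed_closedBall.measurableSet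
    (measurableSet_Ioc.prod measurableSet_Ioo) (fun q hq => ⟨hq.1.1, hq.2⟩)]
  · exact setIntegral_congr_set (Measure.set_prod_ae_eq Ioc_ae_eq_Icc Ioo_ae_eq_Icc)
  · rintro ⟨ρ, θ⟩ ⟨h1, h2⟩
    simp only [mem_Ioi] at h1
    rw [Metric.mem_closedBall, dist_circleMap_center c h1.le]
    exact ⟨fun h => ⟨⟨h1, h⟩, h2⟩, fun h => h.1.2⟩

lemma isOpen_halfDisk (c : ℂ) (r : ℝ) : IsOpen (halfDisk c r) :=
  (isOpen_lt (continuous_id.dist continuous_const) continuous_const).inter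
    (isOpen_lt continuous_const Complex.continuous_re)

lemma measurableSet_halfDisk (c : ℂ) (r : ℝ) : MeasurableSet (halfDisk c r) :=
  (isOpen_halfDisk c r).measurableSet

lemma setIntegral_halfDisk_polar (H : ℂ → ℝ) (c : ℂ) (hc : c.re = 0) (R : ℝ) :
    ∫ x in halfDisk c R, H x =
      ∫ q in Ioo 0 R ×ˢ Ioo (-(π / 2)) (π / 2), q.1 * H (circleMap c q.1 q.2) := by
  have hπ := Real.pi_pos
  refine setIntegral_polar H c (measurableSet_halfDisk c R) (measurableSet_Ioo.prod measurableSet_Ioo)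
    (fun q hq => ⟨hq.1.1, by linarith [hq.2.1], by linarith [hq.2.2]⟩) ?_
  rintro ⟨ρ, θ⟩ ⟨h1, h2⟩
  simp only [mem_Ioi] at h1
  show dist (circleMap c ρ θ) c < R ∧ 0 < (circleMap c ρ θ).re ↔ _
  rw [dist_circleMap_center c h1.le, circleMap_re, hc, zero_add]
  constructor
  · rintro ⟨h, h'⟩
    have hcos : 0 < Real.cos θ := by
      by_contra hn
      push Not at hn
      exact absurd h' (not_lt.2 (mul_nonpos_of_nonneg_of_nonpos h1.le hn))
    refine ⟨⟨h1, h⟩, ?_, ?_⟩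
    · by_contra hn
      push Not at hn
      have := Real.cos_nonpos_of_pi_div_two_le_of_le (x := -θ) (by simp at hn; linarith)
        (by linarith [h2.1])
      rw [Real.cos_neg] at this
      linarith
    · by_contra hn
      push Not at hn
      have := Real.cos_nonpos_of_pi_div_two_le_of_le (x := θ) (by simpa using hn)
        (by linarith [h2.2])
      linarith
  · rintro ⟨h, hθ⟩
    exact ⟨h.2, mul_pos h1 (Real.cos_pos_of_mem_Ioo hθ)⟩

/-! ### Magnetic calculus and the Pohozaev field -/

lemma abPot1_eq (a x : ℂ) : abPot1 a x =
    -(x.im - a.im) / (2 * ((x.re - a.re) ^ 2 + (x.im - a.im) ^ 2)) := by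
  have h : (2 * ((‖x - a‖ : ℝ) : ℂ) ^ 2) =
      ((2 * ((x.re - a.re) ^ 2 + (x.im - a.im) ^ 2) : ℝ) : ℂ) := by
    rw [← Complex.ofReal_pow, Complex.sq_norm, Complex.normSq_apply]
    simp; ring
  rw [abPot1, abPot, h, Complex.div_ofReal_re]
  simp

lemma abPot2_eq (a x : ℂ) : abPot2 a x =
    (x.re - a.re) / (2 * ((x.re - a.re) ^ 2 + (x.im - a.im) ^ 2)) := by
  have h : (2 * ((‖x - a‖ : ℝ) : ℂ) ^ 2) =
      ((2 * ((x.re - a.re) ^ 2 + (x.im - a.im) ^ 2) : ℝ) : ℂ) := by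
    rw [← Complex.ofReal_pow, Complex.sq_norm, Complex.normSq_apply]
    simp; ring
  rw [abPot2, abPot, h, Complex.div_ofReal_im]
  simp

lemma sq_dist_pos {a x : ℂ} (h : x ≠ a) : 0 < (x.re - a.re) ^ 2 + (x.im - a.im) ^ 2 := by
  have : 0 < Complex.normSq (x - a) := Complex.normSq_pos.2 (sub_ne_zero.2 h)
  rw [Complex.normSq_apply] at this
  simp at this
  nlinarith

lemma differentiableAt_re (x : ℂ) : DifferentiableAt ℝ (fun z : ℂ => z.re) x :=
  Complex.reCLM.differentiableAt

lemma differentiableAt_im (x : ℂ) : DifferentiableAt ℝ (fun z : ℂ => z.im) x :=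
  Complex.imCLM.differentiableAt

lemma differentiableAt_abPot1 {a x : ℂ} (h : x ≠ a) : DifferentiableAt ℝ (abPot1 a) x := by
  have e : abPot1 a = fun x => -(x.im - a.im) / (2 * ((x.re - a.re) ^ 2 + (x.im - a.im) ^ 2)) :=
    funext (abPot1_eq a)
  rw [e]
  have h1 := differentiableAt_re x
  have h2 := differentiableAt_im x
  have hd : DifferentiableAt ℝ
      (fun x : ℂ => 2 * ((x.re - a.re) ^ 2 + (x.im - a.im) ^ 2)) x := by fun_prop
  have hn : DifferentiableAt ℝ (fun x : ℂ => -(x.im - a.im)) x := by fun_prop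
  have hne : 2 * ((x.re - a.re) ^ 2 + (x.im - a.im) ^ 2) ≠ 0 := by
    have := sq_dist_pos h; positivity
  simp only [div_eq_mul_inv]
  exact hn.mul (hd.inv hne)

lemma differentiableAt_abPot2 {a x : ℂ} (h : x ≠ a) : DifferentiableAt ℝ (abPot2 a) x := by
  have e : abPot2 a = fun x => (x.re - a.re) / (2 * ((x.re - a.re) ^ 2 + (x.im - a.im) ^ 2)) :=
    funext (abPot2_eq a)
  rw [e]
  have h1 := differentiableAt_re x
  have h2 := differentiableAt_im x
  have hd : DifferentiableAt ℝ
      (fun x : ℂ => 2 * ((x.re - a.re) ^ 2 + (x.im - a.im) ^ 2)) x := by fun_prop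
  have hn : DifferentiableAt ℝ (fun x : ℂ => x.re - a.re) x := by fun_prop
  have hne : 2 * ((x.re - a.re) ^ 2 + (x.im - a.im) ^ 2) ≠ 0 := by
    have := sq_dist_pos h; positivity
  simp only [div_eq_mul_inv]
  exact hn.mul (hd.inv hne)

lemma hasDerivAt_line (x v : ℂ) : HasDerivAt (fun t : ℝ => x + t * v) v 0 := by
  have := ((Complex.ofRealCLM.hasDerivAt (x := (0 : ℝ))).mul_const v).const_add x
  exact this.congr_deriv (by simp)

lemma hasDerivAt_comp_line {F : Type*} [NormedAddCommGroup F] [NormedSpace ℝ F] {f : ℂ → F}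
    {x : ℂ} (v : ℂ) (hf : DifferentiableAt ℝ f x) :
    HasDerivAt (fun t : ℝ => f (x + t * v)) (fderiv ℝ f x v) 0 := by
  have hx : x + ((0 : ℝ) : ℂ) * v = x := by simp
  have h : HasFDerivAt f (fderiv ℝ f x) (x + ((0 : ℝ) : ℂ) * v) := by rw [hx]; exact hf.hasFDerivAt
  exact h.comp_hasDerivAt (0 : ℝ) (hasDerivAt_line x v)

/-- The Aharonov–Bohm potential is irrotational away from its pole. -/
lemma curl_abPot {a x : ℂ} (h : x ≠ a) :
    fderiv ℝ (abPot2 a) x 1 = fderiv ℝ (abPot1 a) x Complex.I := by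
  have hpos := sq_dist_pos h
  have h1 := hasDerivAt_comp_line 1 (differentiableAt_abPot2 h)
  have h2 := hasDerivAt_comp_line Complex.I (differentiableAt_abPot1 h)
  simp only [abPot1_eq, abPot2_eq] at h1 h2
  simp at h1 h2
  set X := x.re - a.re
  set Y := x.im - a.im
  have l1 : HasDerivAt (fun t : ℝ => x.re + t - a.re) 1 0 :=
    ((hasDerivAt_id (0 : ℝ)).const_add x.re).sub_const a.re
  have l2 : HasDerivAt (fun t : ℝ => x.im + t - a.im) 1 0 :=
    ((hasDerivAt_id (0 : ℝ)).const_add x.im).sub_const a.im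
  have l2' : HasDerivAt (fun t : ℝ => a.im - (x.im + t)) (-1) 0 :=
    ((hasDerivAt_id (0 : ℝ)).const_add x.im).const_sub a.im
  have k1 := h1.unique (l1.div (((l1.pow 2).add_const (Y ^ 2)).const_mul 2)
    (by simp only [add_zero]; positivity))
  have k2 := h2.unique (l2'.div (((l2.pow 2).const_add (X ^ 2)).const_mul 2)
    (by simp only [add_zero]; positivity))
  rw [k1, k2]
  simp only [add_zero]
  have e : a.im - x.im = -Y := by simp [Y]
  have e1 : x.re - a.re = X := rfl
  have e2 : x.im - a.im = Y := rfl
  rw [e, e1, e2]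
  field_simp
  ring

section calculus

variable {a x : ℂ} {φ : ℂ → ℂ}

lemma differentiableAt_of_contDiffAt_two (h : ContDiffAt ℝ 2 φ x) : DifferentiableAt ℝ φ x :=
  h.differentiableAt (by norm_num)

lemma differentiableAt_fderiv_of_contDiffAt_two (h : ContDiffAt ℝ 2 φ x) :
    DifferentiableAt ℝ (fderiv ℝ φ) x :=
  (h.fderiv_right (m := 1) (by norm_num)).differentiableAt (by norm_num)

lemma differentiableAt_pd1 (h : ContDiffAt ℝ 2 φ x) : DifferentiableAt ℝ (pd1 φ) x :=
  (differentiableAt_fderiv_of_contDiffAt_two h).clm_apply (differentiableAt_const _)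

lemma differentiableAt_pd2 (h : ContDiffAt ℝ 2 φ x) : DifferentiableAt ℝ (pd2 φ) x :=
  (differentiableAt_fderiv_of_contDiffAt_two h).clm_apply (differentiableAt_const _)

lemma fderiv_pd_symm (h : ContDiffAt ℝ 2 φ x) :
    fderiv ℝ (pd1 φ) x Complex.I = fderiv ℝ (pd2 φ) x 1 := by
  have hd := differentiableAt_fderiv_of_contDiffAt_two h
  have e (v w : ℂ) : fderiv ℝ (fun y => fderiv ℝ φ y v) x w = fderiv ℝ (fderiv ℝ φ) x w v := by
    rw [fderiv_clm_apply hd (differentiableAt_const _)]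
    simp
  have hs : IsSymmSndFDerivAt ℝ φ x := h.isSymmSndFDerivAt (by simp)
  show fderiv ℝ (fun y => fderiv ℝ φ y 1) x Complex.I = fderiv ℝ (fun y => fderiv ℝ φ y Complex.I) x 1
  rw [e, e]
  exact hs.eq _ _

lemma differentiableAt_ofReal_comp {f : ℂ → ℝ} (h : DifferentiableAt ℝ f x) :
    DifferentiableAt ℝ (fun y => (f y : ℂ)) x :=
  Complex.ofRealCLM.differentiableAt.comp x h

lemma differentiableAt_mg1 (hx : x ≠ a) (h : ContDiffAt ℝ 2 φ x) :
    DifferentiableAt ℝ (mg1 a φ) x :=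
  ((differentiableAt_pd1 h).const_mul _).add
    ((differentiableAt_ofReal_comp (differentiableAt_abPot1 hx)).mul
      (differentiableAt_of_contDiffAt_two h))

lemma differentiableAt_mg2 (hx : x ≠ a) (h : ContDiffAt ℝ 2 φ x) :
    DifferentiableAt ℝ (mg2 a φ) x :=
  ((differentiableAt_pd2 h).const_mul _).add
    ((differentiableAt_ofReal_comp (differentiableAt_abPot2 hx)).mul
      (differentiableAt_of_contDiffAt_two h))

lemma fderiv_mg_aux {g : ℂ → ℂ} {A : ℂ → ℝ} (hg : DifferentiableAt ℝ g x)
    (hA : DifferentiableAt ℝ A x) (hφ : DifferentiableAt ℝ φ x) (v : ℂ) :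
    fderiv ℝ (fun y => Complex.I * g y + (A y : ℂ) * φ y) x v =
      Complex.I * fderiv ℝ g x v + ((fderiv ℝ A x v : ℝ) : ℂ) * φ x + (A x : ℂ) * fderiv ℝ φ x v := by
  have h1 := hasDerivAt_comp_line v
    ((hg.const_mul Complex.I).add ((differentiableAt_ofReal_comp hA).mul hφ))
  have h2 := ((hasDerivAt_comp_line v hg).const_mul Complex.I).add
    (((hasDerivAt_comp_line v hA).ofReal_comp).mul (hasDerivAt_comp_line v hφ))
  have := h1.unique h2
  simp only [Complex.ofReal_zero, zero_mul, add_zero] at this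
  refine Eq.trans ?_ (this.trans (by ring))
  rfl

/-- The magnetic Laplacian is the sum of the squares of the components of `i∇ + A`. -/
lemma mg_div (hx : x ≠ a) (h : ContDiffAt ℝ 2 φ x) :
    (Complex.I * fderiv ℝ (mg1 a φ) x 1 + abPot1 a x * mg1 a φ x) +
      (Complex.I * fderiv ℝ (mg2 a φ) x Complex.I + abPot2 a x * mg2 a φ x) = magLap a φ x := by
  have e1 := fderiv_mg_aux (differentiableAt_pd1 h) (differentiableAt_abPot1 hx)
    (differentiableAt_of_contDiffAt_two h) 1
  have e2 := fderiv_mg_aux (differentiableAt_pd2 h) (differentiableAt_abPot2 hx)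
    (differentiableAt_of_contDiffAt_two h) Complex.I
  change fderiv ℝ (mg1 a φ) x 1 = _ at e1
  change fderiv ℝ (mg2 a φ) x Complex.I = _ at e2
  rw [e1, e2, magLap, lapC, divAB, mg1, mg2]
  change _ = -(fderiv ℝ (pd1 φ) x 1 + fderiv ℝ (pd2 φ) x Complex.I) + _ + _ + _
  have p1 : fderiv ℝ φ x 1 = pd1 φ x := rfl
  have p2 : fderiv ℝ φ x Complex.I = pd2 φ x := rfl
  rw [p1, p2]
  push_cast
  linear_combination (fderiv ℝ (pd1 φ) x 1 + fderiv ℝ (pd2 φ) x Complex.I) * Complex.I_mul_I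

/-- The two components of `i∇ + A` commute, because `A` is irrotational. -/
lemma mg_curl (hx : x ≠ a) (h : ContDiffAt ℝ 2 φ x) :
    Complex.I * fderiv ℝ (mg2 a φ) x 1 + abPot1 a x * mg2 a φ x =
      Complex.I * fderiv ℝ (mg1 a φ) x Complex.I + abPot2 a x * mg1 a φ x := by
  have e1 := fderiv_mg_aux (differentiableAt_pd1 h) (differentiableAt_abPot1 hx)
    (differentiableAt_of_contDiffAt_two h) Complex.I
  have e2 := fderiv_mg_aux (differentiableAt_pd2 h) (differentiableAt_abPot2 hx)
    (differentiableAt_of_contDiffAt_two h) 1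
  change fderiv ℝ (mg1 a φ) x Complex.I = _ at e1
  change fderiv ℝ (mg2 a φ) x 1 = _ at e2
  rw [e1, e2, curl_abPot hx, fderiv_pd_symm h, mg1, mg2, pd1, pd2]
  ring

end calculus

/-- First component of the Pohozaev vector field
`Re[(i∇+A)φ · conj((i∇+A)φ·X)] − ½|(i∇+A)φ|²X + ½λp|φ|²X`, where `X = x − π(a)`. -/
def pohoField1 (a : ℂ) (φ : ℂ → ℂ) (lam : ℝ) (p : ℂ → ℝ) (x : ℂ) : ℝ :=
  pohoIntegrand a φ x 1 0 + 1 / 2 * lam * p x * ‖φ x‖ ^ 2 * (x - proj a).re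

/-- Second component of the Pohozaev vector field, see `pohoField1`. -/
def pohoField2 (a : ℂ) (φ : ℂ → ℂ) (lam : ℝ) (p : ℂ → ℝ) (x : ℂ) : ℝ :=
  pohoIntegrand a φ x 0 1 + 1 / 2 * lam * p x * ‖φ x‖ ^ 2 * (x - proj a).im

/-- `pohoField1` and `pohoField2` as a single real polynomial expression in the real and imaginary
parts `A + iB`, `C + iD` of the magnetic gradient and `E + iF` of the function. -/
def fieldPoly (lam A B C D E F P X Y : ℝ) : ℝ :=
  (A * (A * X + C * Y) + B * (B * X + D * Y)) - 1 / 2 * (A ^ 2 + B ^ 2 + C ^ 2 + D ^ 2) * X +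
    1 / 2 * lam * P * (E ^ 2 + F ^ 2) * X

lemma proj_re (a : ℂ) : (proj a).re = 0 := by simp [proj]
lemma proj_im (a : ℂ) : (proj a).im = a.im := by simp [proj]

lemma pohoField1_eq (a : ℂ) (φ : ℂ → ℂ) (lam : ℝ) (p : ℂ → ℝ) (x : ℂ) :
    pohoField1 a φ lam p x = fieldPoly lam (mg1 a φ x).re (mg1 a φ x).im (mg2 a φ x).re
      (mg2 a φ x).im (φ x).re (φ x).im (p x) x.re (x.im - a.im) := by
  simp only [pohoField1, pohoIntegrand, mgSq, fieldPoly, Complex.sq_norm, Complex.normSq_apply,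
    Complex.sub_re, Complex.sub_im, proj_re, proj_im]
  simp
  ring

lemma pohoField2_eq (a : ℂ) (φ : ℂ → ℂ) (lam : ℝ) (p : ℂ → ℝ) (x : ℂ) :
    pohoField2 a φ lam p x = fieldPoly lam (mg2 a φ x).re (mg2 a φ x).im (mg1 a φ x).re
      (mg1 a φ x).im (φ x).re (φ x).im (p x) (x.im - a.im) x.re := by
  simp only [pohoField2, pohoIntegrand, mgSq, fieldPoly, Complex.sq_norm, Complex.normSq_apply,
    Complex.sub_re, Complex.sub_im, proj_re, proj_im]
  simp
  ring

lemma hasDerivAt_fieldPoly (lam : ℝ) {A B C D E F P X Y : ℝ → ℝ} {t A' B' C' D' E' F' P' X' Y' : ℝ}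
    (hA : HasDerivAt A A' t) (hB : HasDerivAt B B' t) (hC : HasDerivAt C C' t)
    (hD : HasDerivAt D D' t) (hE : HasDerivAt E E' t) (hF : HasDerivAt F F' t)
    (hP : HasDerivAt P P' t) (hX : HasDerivAt X X' t) (hY : HasDerivAt Y Y' t) :
    HasDerivAt (fun t => fieldPoly lam (A t) (B t) (C t) (D t) (E t) (F t) (P t) (X t) (Y t))
      ((A' * (A t * X t + C t * Y t) + A t * (A' * X t + A t * X' + C' * Y t + C t * Y') +
        B' * (B t * X t + D t * Y t) + B t * (B' * X t + B t * X' + D' * Y t + D t * Y')) -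
        ((A t * A' + B t * B' + C t * C' + D t * D') * X t +
          1 / 2 * (A t ^ 2 + B t ^ 2 + C t ^ 2 + D t ^ 2) * X') +
        (1 / 2 * lam * P' * (E t ^ 2 + F t ^ 2) * X t + lam * P t * (E t * E' + F t * F') * X t +
          1 / 2 * lam * P t * (E t ^ 2 + F t ^ 2) * X')) t := by
  have h := (((hA.mul ((hA.mul hX).add (hC.mul hY))).add
    (hB.mul ((hB.mul hX).add (hD.mul hY)))).sub
    ((((((hA.pow 2).add (hB.pow 2)).add (hC.pow 2)).add (hD.pow 2)).const_mul (1 / 2)).mul hX)).add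
    (((hP.const_mul (1 / 2 * lam)).mul ((hE.pow 2).add (hF.pow 2))).mul hX)
  refine h.congr_deriv ?_
  simp
  ring

lemma differentiableAt_fieldPoly (lam : ℝ) {A B C D E F P X Y : ℂ → ℝ} {x : ℂ}
    (hA : DifferentiableAt ℝ A x) (hB : DifferentiableAt ℝ B x) (hC : DifferentiableAt ℝ C x)
    (hD : DifferentiableAt ℝ D x) (hE : DifferentiableAt ℝ E x) (hF : DifferentiableAt ℝ F x)
    (hP : DifferentiableAt ℝ P x) (hX : DifferentiableAt ℝ X x) (hY : DifferentiableAt ℝ Y x) :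
    DifferentiableAt ℝ
      (fun t => fieldPoly lam (A t) (B t) (C t) (D t) (E t) (F t) (P t) (X t) (Y t)) x := by
  unfold fieldPoly
  fun_prop

section field

variable {a x : ℂ} {φ : ℂ → ℂ} {lam : ℝ} {p : ℂ → ℝ}

lemma differentiableAt_pohoField1 (hx : x ≠ a) (h : ContDiffAt ℝ 2 φ x)
    (hp : DifferentiableAt ℝ p x) : DifferentiableAt ℝ (pohoField1 a φ lam p) x := by
  have e : pohoField1 a φ lam p = _ := funext (pohoField1_eq a φ lam p)
  rw [e]
  have h1 := differentiableAt_mg1 hx h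
  have h2 := differentiableAt_mg2 hx h
  have h3 := differentiableAt_of_contDiffAt_two h
  exact differentiableAt_fieldPoly lam ((differentiableAt_re _).comp x h1)
    ((differentiableAt_im _).comp x h1) ((differentiableAt_re _).comp x h2)
    ((differentiableAt_im _).comp x h2) ((differentiableAt_re _).comp x h3)
    ((differentiableAt_im _).comp x h3) hp (differentiableAt_re x)
    ((differentiableAt_im x).sub_const _)

lemma differentiableAt_pohoField2 (hx : x ≠ a) (h : ContDiffAt ℝ 2 φ x)
    (hp : DifferentiableAt ℝ p x) : DifferentiableAt ℝ (pohoField2 a φ lam p) x := by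
  have e : pohoField2 a φ lam p = _ := funext (pohoField2_eq a φ lam p)
  rw [e]
  have h1 := differentiableAt_mg1 hx h
  have h2 := differentiableAt_mg2 hx h
  have h3 := differentiableAt_of_contDiffAt_two h
  exact differentiableAt_fieldPoly lam ((differentiableAt_re _).comp x h2)
    ((differentiableAt_im _).comp x h2) ((differentiableAt_re _).comp x h1)
    ((differentiableAt_im _).comp x h1) ((differentiableAt_re _).comp x h3)
    ((differentiableAt_im _).comp x h3) hp ((differentiableAt_im x).sub_const _)
    (differentiableAt_re x)

lemma hasDerivAt_re_comp {f : ℝ → ℂ} {f' : ℂ} {t : ℝ} (h : HasDerivAt f f' t) :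
    HasDerivAt (fun t => (f t).re) f'.re t :=
  (Complex.reCLM.hasFDerivAt.comp_hasDerivAt t h)

lemma hasDerivAt_im_comp {f : ℝ → ℂ} {f' : ℂ} {t : ℝ} (h : HasDerivAt f f' t) :
    HasDerivAt (fun t => (f t).im) f'.im t :=
  (Complex.imCLM.hasFDerivAt.comp_hasDerivAt t h)

/-- The density `λ|φ|²(p + ∇p·(x − π(a))/2)`, which is the divergence of the Pohozaev field. -/
def pohoDens (a : ℂ) (φ : ℂ → ℂ) (lam : ℝ) (p : ℂ → ℝ) (x : ℂ) : ℝ :=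
  lam * (‖φ x‖ ^ 2 * (p x + fderiv ℝ p x (x - proj a) / 2))

/-- The divergence of the Pohozaev field. The terms with second derivatives of `φ` cancel by
`mg_curl` and by the equation in the form `mg_div`. -/
lemma pohoField_div (hx : x ≠ a) (h : ContDiffAt ℝ 2 φ x) (hp : DifferentiableAt ℝ p x)
    (heq : magLap a φ x = ((lam * p x : ℝ) : ℂ) * φ x) :
    fderiv ℝ (pohoField1 a φ lam p) x 1 + fderiv ℝ (pohoField2 a φ lam p) x Complex.I =
      pohoDens a φ lam p x := by
  have h1 := differentiableAt_mg1 hx h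
  have h2 := differentiableAt_mg2 hx h
  have h3 := differentiableAt_of_contDiffAt_two h
  have e1 := hasDerivAt_comp_line 1 (differentiableAt_pohoField1 (lam := lam) hx h hp)
  simp only [pohoField1_eq] at e1
  have d1 := e1.unique (hasDerivAt_fieldPoly lam
      (hasDerivAt_re_comp (hasDerivAt_comp_line 1 h1))
      (hasDerivAt_im_comp (hasDerivAt_comp_line 1 h1))
      (hasDerivAt_re_comp (hasDerivAt_comp_line 1 h2))
      (hasDerivAt_im_comp (hasDerivAt_comp_line 1 h2))
      (hasDerivAt_re_comp (hasDerivAt_comp_line 1 h3))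
      (hasDerivAt_im_comp (hasDerivAt_comp_line 1 h3))
      (hasDerivAt_comp_line 1 hp) (hasDerivAt_re_comp (hasDerivAt_line x 1))
      ((hasDerivAt_im_comp (hasDerivAt_line x 1)).sub_const a.im))
  have e2 := hasDerivAt_comp_line Complex.I (differentiableAt_pohoField2 (lam := lam) hx h hp)
  simp only [pohoField2_eq] at e2
  have d2 := e2.unique (hasDerivAt_fieldPoly lam
      (hasDerivAt_re_comp (hasDerivAt_comp_line Complex.I h2))
      (hasDerivAt_im_comp (hasDerivAt_comp_line Complex.I h2))
      (hasDerivAt_re_comp (hasDerivAt_comp_line Complex.I h1))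
      (hasDerivAt_im_comp (hasDerivAt_comp_line Complex.I h1))
      (hasDerivAt_re_comp (hasDerivAt_comp_line Complex.I h3))
      (hasDerivAt_im_comp (hasDerivAt_comp_line Complex.I h3))
      (hasDerivAt_comp_line Complex.I hp)
      ((hasDerivAt_im_comp (hasDerivAt_line x Complex.I)).sub_const a.im)
      (hasDerivAt_re_comp (hasDerivAt_line x Complex.I)))
  have hpX : fderiv ℝ p x (x - proj a) =
      x.re * fderiv ℝ p x 1 + (x.im - a.im) * fderiv ℝ p x Complex.I := by
    rw [← fderiv_apply_eq]
    congr 1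
    apply Complex.ext <;> simp [proj_re, proj_im]
  have R1 := mg_div hx h
  rw [heq] at R1
  have R2 := mg_curl hx h
  have m1 : mg1 a φ x = Complex.I * fderiv ℝ φ x 1 + (abPot1 a x : ℂ) * φ x := rfl
  have m2 : mg2 a φ x = Complex.I * fderiv ℝ φ x Complex.I + (abPot2 a x : ℂ) * φ x := rfl
  have R1r := congrArg Complex.re R1
  have R1i := congrArg Complex.im R1
  have R2r := congrArg Complex.re R2
  have R2i := congrArg Complex.im R2
  have m1r := congrArg Complex.re m1
  have m1i := congrArg Complex.im m1
  have m2r := congrArg Complex.re m2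
  have m2i := congrArg Complex.im m2
  rw [d1, d2, pohoDens, hpX, Complex.sq_norm, Complex.normSq_apply]
  simp only [Complex.ofReal_zero, zero_mul, add_zero, Complex.one_re, Complex.one_im,
    Complex.I_re, Complex.I_im]
  simp at R1r R1i R2r R2i m1r m1i m2r m2i
  generalize fderiv ℝ (mg1 a φ) x 1 = W11 at *
  generalize fderiv ℝ (mg1 a φ) x Complex.I = W21 at *
  generalize fderiv ℝ (mg2 a φ) x 1 = W12 at *
  generalize fderiv ℝ (mg2 a φ) x Complex.I = W22 at *
  generalize fderiv ℝ φ x 1 = F1 at *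
  generalize fderiv ℝ φ x Complex.I = F2 at *
  generalize mg1 a φ x = w1 at *
  generalize mg2 a φ x = w2 at *
  generalize abPot1 a x = A1 at *
  generalize abPot2 a x = A2 at *
  have f1r : F1.re = w1.im - A1 * (φ x).im := by linarith
  have f1i : F1.im = A1 * (φ x).re - w1.re := by linarith
  have f2r : F2.re = w2.im - A2 * (φ x).im := by linarith
  have f2i : F2.im = A2 * (φ x).re - w2.re := by linarith
  rw [f1r, f1i, f2r, f2i]
  generalize x.im - a.im = Y at *
  linear_combination (w1.re * x.re + w2.re * Y) * R1i - (w1.im * x.re + w2.im * Y) * R1r +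
    (w1.re * Y - w2.re * x.re) * R2i - (w1.im * Y - w2.im * x.re) * R2r

end field

/-! ### Gauge transform and bounds near the flat side -/

lemma dist_proj_sq (a x : ℂ) : dist x (proj a) ^ 2 = x.re ^ 2 + (x.im - a.im) ^ 2 := by
  rw [Complex.dist_eq, Complex.sq_norm, Complex.normSq_apply]
  simp [proj_re, proj_im]
  ring

lemma dist_proj_lt_iff {a x : ℂ} {r : ℝ} (hr : 0 < r) :
    dist x (proj a) < r ↔ x.re ^ 2 + (x.im - a.im) ^ 2 < r ^ 2 := by
  rw [← dist_proj_sq, sq_lt_sq₀ dist_nonneg hr.le]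

lemma mem_closure_halfDisk {c x : ℂ} {r : ℝ} (h : dist x c < r) (hx : 0 ≤ x.re) :
    x ∈ closure (halfDisk c r) := by
  have hcont : Continuous (fun t : ℝ => x + (t : ℂ)) := by fun_prop
  have ht : Tendsto (fun t : ℝ => x + (t : ℂ)) (nhdsWithin 0 (Ioi 0)) (nhds x) := by
    have := (hcont.tendsto 0).mono_left (nhdsWithin_le_nhds (s := Ioi 0))
    simpa using this
  refine mem_closure_of_tendsto ht ?_
  have h1 : ∀ᶠ y in nhds x, dist y c < r :=
    (continuous_id.dist continuous_const).continuousAt.eventually (gt_mem_nhds h)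
  filter_upwards [ht.eventually h1, self_mem_nhdsWithin] with t h2 h3
  refine ⟨h2, ?_⟩
  have : 0 < t := h3
  simp; linarith

/-- Half of a polar angle around `a`, smooth on the half-plane to the left of `a`; its gradient is
the Aharonov–Bohm potential. -/
def gaugeAngle (a x : ℂ) : ℝ := Real.arctan ((x.im - a.im) / (x.re - a.re)) / 2

/-- The unimodular factor `e^{-iΘ}`, with `Θ = gaugeAngle a`, that turns the magnetic gradient into
an ordinary one: `e^{-iΘ}(i∇ + A)φ = i∇(e^{-iΘ}φ)`. -/
def gaugeFactor (a x : ℂ) : ℂ := Complex.exp (-(Complex.I * (gaugeAngle a x : ℂ)))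

lemma norm_gaugeFactor (a x : ℂ) : ‖gaugeFactor a x‖ = 1 := by
  rw [gaugeFactor, Complex.norm_exp]
  simp

section gauge
variable {a x : ℂ}

lemma differentiableAt_gaugeAngle (h : x.re ≠ a.re) : DifferentiableAt ℝ (gaugeAngle a) x := by
  have h1 := differentiableAt_re x
  have h2 := differentiableAt_im x
  have hd : DifferentiableAt ℝ (fun x : ℂ => x.re - a.re) x := by fun_prop
  have hn : DifferentiableAt ℝ (fun x : ℂ => x.im - a.im) x := by fun_prop
  have : DifferentiableAt ℝ (fun x : ℂ => (x.im - a.im) / (x.re - a.re)) x := by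
    simp only [div_eq_mul_inv]
    exact hn.mul (hd.inv (sub_ne_zero.2 h))
  have h3 := this.arctan.const_mul (2⁻¹ : ℝ)
  refine h3.congr_of_eventuallyEq (Eventually.of_forall fun y => ?_)
  simp only [gaugeAngle]; ring

lemma fderiv_gaugeAngle_one (h : x.re ≠ a.re) : fderiv ℝ (gaugeAngle a) x 1 = abPot1 a x := by
  have h1 := hasDerivAt_comp_line 1 (differentiableAt_gaugeAngle h)
  simp only [gaugeAngle] at h1
  simp at h1
  have l1 : HasDerivAt (fun t : ℝ => x.re + t - a.re) 1 0 :=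
    ((hasDerivAt_id (0 : ℝ)).const_add x.re).sub_const a.re
  have hne : x.re - a.re ≠ 0 := sub_ne_zero.2 h
  have k := h1.unique ((((hasDerivAt_const (0 : ℝ) (x.im - a.im)).div l1
    (by simpa using hne)).arctan).div_const 2)
  have hxa : x ≠ a := fun e => h (by rw [e])
  have hpos := sq_dist_pos hxa
  rw [k, abPot1_eq]
  simp only [add_zero, Pi.div_apply]
  have : 1 + ((x.im - a.im) / (x.re - a.re)) ^ 2 ≠ 0 := by positivity
  have e : 1 + ((x.im - a.im) / (x.re - a.re)) ^ 2 =
    ((x.re - a.re) ^ 2 + (x.im - a.im) ^ 2) / (x.re - a.re) ^ 2 := by field_simp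
  rw [e]
  field_simp
  ring

lemma fderiv_gaugeAngle_I (h : x.re ≠ a.re) :
    fderiv ℝ (gaugeAngle a) x Complex.I = abPot2 a x := by
  have h1 := hasDerivAt_comp_line Complex.I (differentiableAt_gaugeAngle h)
  simp only [gaugeAngle] at h1
  simp at h1
  have l1 : HasDerivAt (fun t : ℝ => x.im + t - a.im) 1 0 :=
    ((hasDerivAt_id (0 : ℝ)).const_add x.im).sub_const a.im
  have hne : x.re - a.re ≠ 0 := sub_ne_zero.2 h
  have k := h1.unique (((l1.div_const (x.re - a.re)).arctan).div_const 2)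
  have hxa : x ≠ a := fun e => h (by rw [e])
  have hpos := sq_dist_pos hxa
  rw [k, abPot2_eq]
  simp only [add_zero]
  have e : 1 + ((x.im - a.im) / (x.re - a.re)) ^ 2 =
    ((x.re - a.re) ^ 2 + (x.im - a.im) ^ 2) / (x.re - a.re) ^ 2 := by field_simp
  rw [e]
  field_simp

lemma differentiableAt_gaugeFactor (h : x.re ≠ a.re) : DifferentiableAt ℝ (gaugeFactor a) x :=
  ((differentiableAt_ofReal_comp (differentiableAt_gaugeAngle h)).const_mul Complex.I).neg.cexp

/-- Leibniz rule for the gauge transform; with `∇Θ = A` the bracket is `-i` times the magnetic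
derivative of `f`. -/
lemma fderiv_gaugeFactor_mul {f : ℂ → ℂ} (h : x.re ≠ a.re) (hf : DifferentiableAt ℝ f x) (v : ℂ) :
    fderiv ℝ (fun y => gaugeFactor a y * f y) x v =
      gaugeFactor a x * (fderiv ℝ f x v - Complex.I * (fderiv ℝ (gaugeAngle a) x v : ℂ) * f x) := by
  have h1 := hasDerivAt_comp_line v ((differentiableAt_gaugeFactor h).mul hf)
  have h2 := ((((hasDerivAt_comp_line v (differentiableAt_gaugeAngle h)).ofReal_comp.const_mul
    Complex.I).fun_neg).cexp).mul (hasDerivAt_comp_line v hf)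
  have := h1.unique h2
  simp only [Complex.ofReal_zero, zero_mul, add_zero] at this
  refine Eq.trans ?_ (this.trans ?_)
  · rfl
  · rw [gaugeFactor]; ring

end gauge

lemma hasDerivAt_mk_fst {F : Type*} [NormedAddCommGroup F] [NormedSpace ℝ F] {f : ℂ → F}
    {s y : ℝ} (hf : DifferentiableAt ℝ f ⟨s, y⟩) :
    HasDerivAt (fun t : ℝ => f ⟨t, y⟩) (fderiv ℝ f ⟨s, y⟩ 1) s := by
  have hl : HasDerivAt (fun t : ℝ => (⟨t, y⟩ : ℂ)) 1 s := by
    have := (Complex.ofRealCLM.hasDerivAt (x := s)).add_const ((y : ℂ) * Complex.I)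
    refine (this.congr_deriv (by simp)).congr_of_eventuallyEq (Eventually.of_forall fun t => ?_)
    apply Complex.ext <;> simp
  exact hf.hasFDerivAt.comp_hasDerivAt s hl

lemma hasDerivAt_mk_snd {F : Type*} [NormedAddCommGroup F] [NormedSpace ℝ F] {f : ℂ → F}
    {s y : ℝ} (hf : DifferentiableAt ℝ f ⟨s, y⟩) :
    HasDerivAt (fun t : ℝ => f ⟨s, t⟩) (fderiv ℝ f ⟨s, y⟩ Complex.I) y := by
  have hl : HasDerivAt (fun t : ℝ => (⟨s, t⟩ : ℂ)) Complex.I y := by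
    have := ((Complex.ofRealCLM.hasDerivAt (x := y)).mul_const Complex.I).const_add (s : ℂ)
    refine (this.congr_deriv (by simp)).congr_of_eventuallyEq (Eventually.of_forall fun t => ?_)
    apply Complex.ext <;> simp
  exact hf.hasFDerivAt.comp_hasDerivAt y hl

/-- Near the flat part of the boundary the magnetic gradient is bounded, and its tangential
component vanishes linearly. -/
lemma flat_bound {a : ℂ} (ha : 0 < a.re) {lam r r₀ : ℝ} (hlam : 0 < lam) (hr : 0 < r) (hrr₀ : r < r₀)
    {p : ℂ → ℝ} (hp : Differentiable ℝ p) {P : ℝ} (hP : ∀ x, |p x| ≤ P)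
    {Cg : ℝ} (hCg : ∀ x, ‖fderiv ℝ p x‖ ≤ Cg) {φ : ℂ → ℂ}
    (hcont : ContinuousOn φ (closure (halfDisk (proj a) r₀)))
    (hbc : ∀ x ∈ closure (halfDisk (proj a) r₀), x.re = 0 → φ x = 0)
    (hC2 : ∀ x ∈ halfDisk (proj a) r₀ \ {a}, ContDiffAt ℝ 2 φ x)
    (heq : ∀ x ∈ halfDisk (proj a) r₀ \ {a}, magLap a φ x = ((lam * p x : ℝ) : ℂ) * φ x) :
    ∃ L > 0, ∃ δ > 0, ∀ x : ℂ, 0 < x.re → x.re < δ → |x.im - a.im| ≤ r →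
      ‖mg1 a φ x‖ ≤ L ∧ ‖mg2 a φ x‖ ≤ L * x.re := by
  obtain ⟨R', hR, hR'⟩ := exists_between hrr₀
  have hr₀ : 0 < r₀ := hr.trans hrr₀
  -- a strip so thin that it stays inside the half-disk and to the left of the pole
  obtain ⟨d, hd0, hda, hdr⟩ : ∃ d > 0, d < a.re ∧ d ^ 2 + R' ^ 2 < r₀ ^ 2 := by
    have h1 : 0 < r₀ ^ 2 - R' ^ 2 := by nlinarith
    refine ⟨min (a.re / 2) (√((r₀ ^ 2 - R' ^ 2) / 2)), by positivity, ?_, ?_⟩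
    · exact (min_le_left _ _).trans_lt (by linarith)
    · have := pow_le_pow_left₀ (by positivity) (min_le_right (a.re / 2) (√((r₀ ^ 2 - R' ^ 2) / 2))) 2
      rw [Real.sq_sqrt (by positivity)] at this
      linarith
  have hsq {y : ℝ} (hy : y ∈ Icc (a.im - R') (a.im + R')) : (y - a.im) ^ 2 ≤ R' ^ 2 := by
    apply sq_le_sq' <;> linarith [hy.1, hy.2]
  have hdist {s y : ℝ} (hs : s ∈ Icc 0 d) (hy : y ∈ Icc (a.im - R') (a.im + R')) :
      dist (⟨s, y⟩ : ℂ) (proj a) < r₀ := by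
    rw [dist_proj_lt_iff hr₀]
    have := pow_le_pow_left₀ hs.1 hs.2 2
    have := hsq hy
    simp only
    linarith
  have hcl {s y : ℝ} (hs : s ∈ Icc 0 d) (hy : y ∈ Icc (a.im - R') (a.im + R')) :
      (⟨s, y⟩ : ℂ) ∈ closure (halfDisk (proj a) r₀) := mem_closure_halfDisk (hdist hs hy) hs.1
  have hin {s y : ℝ} (hs : s ∈ Ioo 0 d) (hy : y ∈ Ioo (a.im - R') (a.im + R')) :
      (⟨s, y⟩ : ℂ) ∈ halfDisk (proj a) r₀ \ {a} := by
    refine ⟨⟨hdist (Ioo_subset_Icc_self hs) (Ioo_subset_Icc_self hy), hs.1⟩, fun e => ?_⟩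
    have e : s = a.re := congrArg Complex.re (mem_singleton_iff.1 e)
    linarith [hs.2]
  have hne {s : ℝ} (y : ℝ) (hs : s ∈ Ioo 0 d) : (⟨s, y⟩ : ℂ).re ≠ a.re := by
    simp only; linarith [hs.2]
  set u : ℂ → ℂ := fun x => gaugeFactor a x * φ x with hu
  set U1 : ℂ → ℂ := fun x => gaugeFactor a x * (-Complex.I * mg1 a φ x) with hU1
  set U2 : ℂ → ℂ := fun x => gaugeFactor a x * (-Complex.I * mg2 a φ x) with hU2
  have hucont : ContinuousOn (fun q : ℝ × ℝ => u ⟨q.1, q.2⟩)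
      (Icc 0 d ×ˢ Icc (a.im - R') (a.im + R')) := by
    have hmk : Continuous (fun q : ℝ × ℝ => (⟨q.1, q.2⟩ : ℂ)) :=
      Complex.equivRealProdCLM.symm.continuous
    refine ContinuousOn.mul ?_ (hcont.comp hmk.continuousOn fun q hq => hcl hq.1 hq.2)
    intro q hq
    have : (⟨q.1, q.2⟩ : ℂ).re ≠ a.re := by simp only; linarith [hq.1.2]
    exact (ContinuousAt.comp (f := fun q : ℝ × ℝ => (⟨q.1, q.2⟩ : ℂ)) (x := q)
      (differentiableAt_gaugeFactor this).continuousAt hmk.continuousAt).continuousWithinAt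
  have diffu {s y : ℝ} (hs : s ∈ Ioo 0 d) (hy : y ∈ Ioo (a.im - R') (a.im + R')) :
      DifferentiableAt ℝ u ⟨s, y⟩ :=
    (differentiableAt_gaugeFactor (hne y hs)).mul (differentiableAt_of_contDiffAt_two (hC2 _ (hin hs hy)))
  have diffU1 {s y : ℝ} (hs : s ∈ Ioo 0 d) (hy : y ∈ Ioo (a.im - R') (a.im + R')) :
      DifferentiableAt ℝ U1 ⟨s, y⟩ :=
    (differentiableAt_gaugeFactor (hne y hs)).mul
      ((differentiableAt_mg1 (hin hs hy).2 (hC2 _ (hin hs hy))).const_mul _)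
  have diffU2 {s y : ℝ} (hs : s ∈ Ioo 0 d) (hy : y ∈ Ioo (a.im - R') (a.im + R')) :
      DifferentiableAt ℝ U2 ⟨s, y⟩ :=
    (differentiableAt_gaugeFactor (hne y hs)).mul
      ((differentiableAt_mg2 (hin hs hy).2 (hC2 _ (hin hs hy))).const_mul _)
  have du1 {s y : ℝ} (hs : s ∈ Ioo 0 d) (hy : y ∈ Ioo (a.im - R') (a.im + R')) :
      fderiv ℝ u ⟨s, y⟩ 1 = U1 ⟨s, y⟩ := by
    rw [hu, fderiv_gaugeFactor_mul (hne y hs)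
      (differentiableAt_of_contDiffAt_two (hC2 _ (hin hs hy))), fderiv_gaugeAngle_one (hne y hs)]
    simp only [hU1, mg1, pd1]
    linear_combination (gaugeFactor a ⟨s, y⟩ * fderiv ℝ φ ⟨s, y⟩ 1) * Complex.I_mul_I
  have du2 {s y : ℝ} (hs : s ∈ Ioo 0 d) (hy : y ∈ Ioo (a.im - R') (a.im + R')) :
      fderiv ℝ u ⟨s, y⟩ Complex.I = U2 ⟨s, y⟩ := by
    rw [hu, fderiv_gaugeFactor_mul (hne y hs)
      (differentiableAt_of_contDiffAt_two (hC2 _ (hin hs hy))), fderiv_gaugeAngle_I (hne y hs)]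
    simp only [hU2, mg2, pd2]
    linear_combination (gaugeFactor a ⟨s, y⟩ * fderiv ℝ φ ⟨s, y⟩ Complex.I) * Complex.I_mul_I
  have hpde {s y : ℝ} (hs : s ∈ Ioo 0 d) (hy : y ∈ Ioo (a.im - R') (a.im + R')) :
      fderiv ℝ U1 ⟨s, y⟩ 1 + fderiv ℝ U2 ⟨s, y⟩ Complex.I =
        -(((lam * p ⟨s, y⟩ : ℝ) : ℂ) * u ⟨s, y⟩) := by
    have m1 := differentiableAt_mg1 (hin hs hy).2 (hC2 _ (hin hs hy))
    have m2 := differentiableAt_mg2 (hin hs hy).2 (hC2 _ (hin hs hy))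
    rw [hU1, hU2, fderiv_gaugeFactor_mul (hne y hs) (m1.const_mul _),
      fderiv_gaugeFactor_mul (hne y hs) (m2.const_mul _), fderiv_gaugeAngle_one (hne y hs),
      fderiv_gaugeAngle_I (hne y hs), fderiv_const_mul m1, fderiv_const_mul m2]
    have h1 := mg_div (hin hs hy).2 (hC2 _ (hin hs hy))
    rw [heq _ (hin hs hy)] at h1
    simp only [hu, smul_apply, smul_eq_mul]
    linear_combination (-gaugeFactor a ⟨s, y⟩) * h1 + gaugeFactor a ⟨s, y⟩ * (abPot1 a ⟨s, y⟩ * mg1 a φ ⟨s, y⟩ +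
      abPot2 a ⟨s, y⟩ * mg2 a φ ⟨s, y⟩) * Complex.I_mul_I
  have hq (s y : ℝ) : |lam * p ⟨s, y⟩| ≤ lam * P := by
    rw [abs_mul, abs_of_pos hlam]; exact mul_le_mul_of_nonneg_left (hP _) hlam.le
  have hqL (s y y' : ℝ) : |lam * p ⟨s, y'⟩ - lam * p ⟨s, y⟩| ≤ lam * Cg * |y' - y| := by
    rw [← mul_sub, abs_mul, abs_of_pos hlam, mul_assoc]
    refine mul_le_mul_of_nonneg_left ?_ hlam.le
    have := Convex.norm_image_sub_le_of_norm_fderiv_le (𝕜 := ℝ) (f := p) (s := univ) (C := Cg)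
      (fun x _ => hp x) (fun x _ => hCg x) convex_univ (mem_univ (⟨s, y⟩ : ℂ))
      (mem_univ (⟨s, y'⟩ : ℂ))
    have e : ‖(⟨s, y'⟩ : ℂ) - ⟨s, y⟩‖ = |y' - y| := by
      have : (⟨s, y'⟩ : ℂ) - ⟨s, y⟩ = ((y' - y : ℝ) : ℂ) * Complex.I := by
        apply Complex.ext <;> simp
      rw [this]; simp only [norm_mul, Complex.norm_real, Complex.norm_I, mul_one, Real.norm_eq_abs]
    rwa [e] at this
  have hzero {y : ℝ} (hy : y ∈ Icc (a.im - R') (a.im + R')) : u ⟨0, y⟩ = 0 := by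
    simp only [hu]
    rw [hbc _ (hcl ⟨le_rfl, hd0.le⟩ hy) rfl, mul_zero]
  obtain ⟨L1, hL1, δ1, hδ1, hδd1, hb1⟩ := strip_bound
    (v := fun s y => (u ⟨s, y⟩).re) (v1 := fun s y => (U1 ⟨s, y⟩).re)
    (v11 := fun s y => (fderiv ℝ U1 ⟨s, y⟩ 1).re) (v2 := fun s y => (U2 ⟨s, y⟩).re)
    (v22 := fun s y => (fderiv ℝ U2 ⟨s, y⟩ Complex.I).re) (q := fun s y => lam * p ⟨s, y⟩)
    (c := a.im) (R := r) (R' := R') (d := d) (Qm := lam * P) (Lq := lam * Cg) hd0 hR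
    (Complex.continuous_re.comp_continuousOn hucont)
    (fun y hy => by simp [hzero hy])
    (fun s hs y hy => by
      have := hasDerivAt_re_comp (hasDerivAt_mk_fst (diffu hs hy)); rwa [du1 hs hy] at this)
    (fun s hs y hy => hasDerivAt_re_comp (hasDerivAt_mk_fst (diffU1 hs hy)))
    (fun s hs y hy => by
      have := hasDerivAt_re_comp (hasDerivAt_mk_snd (diffu hs hy)); rwa [du2 hs hy] at this)
    (fun s hs y hy => hasDerivAt_re_comp (hasDerivAt_mk_snd (diffU2 hs hy)))
    (fun s hs y hy => by
      have := congrArg Complex.re (hpde hs hy)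
      rwa [Complex.add_re, Complex.neg_re, Complex.re_ofReal_mul] at this)
    hq hqL
  obtain ⟨L2, hL2, δ2, hδ2, hδd2, hb2⟩ := strip_bound
    (v := fun s y => (u ⟨s, y⟩).im) (v1 := fun s y => (U1 ⟨s, y⟩).im)
    (v11 := fun s y => (fderiv ℝ U1 ⟨s, y⟩ 1).im) (v2 := fun s y => (U2 ⟨s, y⟩).im)
    (v22 := fun s y => (fderiv ℝ U2 ⟨s, y⟩ Complex.I).im) (q := fun s y => lam * p ⟨s, y⟩)
    (c := a.im) (R := r) (R' := R') (d := d) (Qm := lam * P) (Lq := lam * Cg) hd0 hR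
    (Complex.continuous_im.comp_continuousOn hucont)
    (fun y hy => by simp [hzero hy])
    (fun s hs y hy => by
      have := hasDerivAt_im_comp (hasDerivAt_mk_fst (diffu hs hy)); rwa [du1 hs hy] at this)
    (fun s hs y hy => hasDerivAt_im_comp (hasDerivAt_mk_fst (diffU1 hs hy)))
    (fun s hs y hy => by
      have := hasDerivAt_im_comp (hasDerivAt_mk_snd (diffu hs hy)); rwa [du2 hs hy] at this)
    (fun s hs y hy => hasDerivAt_im_comp (hasDerivAt_mk_snd (diffU2 hs hy)))
    (fun s hs y hy => by
      have := congrArg Complex.im (hpde hs hy)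
      rwa [Complex.add_im, Complex.neg_im, Complex.im_ofReal_mul] at this)
    hq hqL
  refine ⟨L1 + L2, by positivity, min δ1 δ2, lt_min hδ1 hδ2, fun x hx0 hxδ hxr => ?_⟩
  have hy : x.im ∈ Icc (a.im - r) (a.im + r) := by
    rw [abs_le] at hxr; constructor <;> linarith
  have k1 := hb1 x.re ⟨hx0, hxδ.trans_le (min_le_left _ _)⟩ x.im hy
  have k2 := hb2 x.re ⟨hx0, hxδ.trans_le (min_le_right _ _)⟩ x.im hy
  have n1 : ‖U1 x‖ = ‖mg1 a φ x‖ := by simp [hU1, norm_gaugeFactor]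
  have n2 : ‖U2 x‖ = ‖mg2 a φ x‖ := by simp [hU2, norm_gaugeFactor]
  rw [← n1, ← n2]
  constructor
  · exact (Complex.norm_le_abs_re_add_abs_im _).trans (add_le_add k1.1 k2.1)
  · rw [add_mul]
    exact (Complex.norm_le_abs_re_add_abs_im _).trans (add_le_add k1.2 k2.2)

/-! ### Divergence theorems on the half-disk and the disk -/

/-- Integrals over the increasing boxes `[t, r] × [-(π/2 - t), π/2 - t]` exhaust the integral over
the half-disk in polar coordinates as `t = s/(n+1) → 0`. -/
lemma tendsto_polar_boxes {f : ℝ × ℝ → ℝ} {r s : ℝ} (hs : 0 < s)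
    (hf : IntegrableOn f (Ioo 0 r ×ˢ Ioo (-(π / 2)) (π / 2))) :
    Tendsto (fun n : ℕ => ∫ q in Icc (s / (n + 1)) r ×ˢ
        Icc (-(π / 2 - s / (n + 1))) (π / 2 - s / (n + 1)), f q) atTop
      (nhds (∫ q in Ioo 0 r ×ˢ Ioo (-(π / 2)) (π / 2), f q)) := by
  have hae : (Ioo 0 r ×ˢ Ioo (-(π / 2)) (π / 2) : Set (ℝ × ℝ)) =ᵐ[volume]
      (Ioc 0 r ×ˢ Ioo (-(π / 2)) (π / 2) : Set (ℝ × ℝ)) :=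
    Measure.set_prod_ae_eq Ioo_ae_eq_Ioc (ae_eq_refl _)
  have hlim : Tendsto (fun n : ℕ => s / ((n : ℝ) + 1)) atTop (nhds 0) :=
    tendsto_const_div_atTop_nhds_zero_nat s |>.comp (tendsto_add_atTop_nat 1) |>.congr
      fun n => by simp
  have hanti : ∀ {m n : ℕ}, m ≤ n → s / ((n : ℝ) + 1) ≤ s / ((m : ℝ) + 1) := fun {m n} h => by
    have : (m : ℝ) ≤ n := by exact_mod_cast h
    gcongr
  have hU : (⋃ n : ℕ, Icc (s / ((n : ℝ) + 1)) r ×ˢ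
      Icc (-(π / 2 - s / ((n : ℝ) + 1))) (π / 2 - s / ((n : ℝ) + 1)) : Set (ℝ × ℝ)) =
      Ioc 0 r ×ˢ Ioo (-(π / 2)) (π / 2) := by
    ext ⟨ρ, θ⟩
    simp only [mem_iUnion, mem_prod, mem_Icc, mem_Ioc, mem_Ioo]
    constructor
    · rintro ⟨n, ⟨h1, h2⟩, h3, h4⟩
      have : 0 < s / ((n : ℝ) + 1) := by positivity
      refine ⟨⟨?_, ?_⟩, ?_, ?_⟩ <;> linarith
    · rintro ⟨⟨h1, h2⟩, h3, h4⟩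
      have hm : 0 < min ρ (min (θ + π / 2) (π / 2 - θ)) :=
        lt_min h1 (lt_min (by linarith) (by linarith))
      obtain ⟨n, hn⟩ := (hlim.eventually (gt_mem_nhds hm)).exists
      rw [lt_min_iff, lt_min_iff] at hn
      refine ⟨n, ⟨?_, ?_⟩, ?_, ?_⟩ <;> linarith [hn.1, hn.2.1, hn.2.2]
  rw [setIntegral_congr_set hae, ← hU]
  refine tendsto_setIntegral_of_monotone (fun n => measurableSet_Icc.prod measurableSet_Icc) ?_ ?_
  · intro m n h
    have := hanti h
    exact prod_mono (Icc_subset_Icc this le_rfl) (Icc_subset_Icc (by linarith) (by linarith))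
  · rw [hU]
    exact hf.congr_set_ae hae.symm

lemma tendsto_arc_integral {f : ℝ → ℝ} {s : ℝ} (hs : 0 < s) (hsπ : s < π / 2)
    (hf : IntegrableOn f (Ioo (-(π / 2)) (π / 2))) :
    Tendsto (fun n : ℕ => ∫ θ in (-(π / 2 - s / (n + 1)))..(π / 2 - s / (n + 1)), f θ) atTop
      (nhds (∫ θ in Ioo (-(π / 2)) (π / 2), f θ)) := by
  have hlim : Tendsto (fun n : ℕ => s / ((n : ℝ) + 1)) atTop (nhds 0) :=
    tendsto_const_div_atTop_nhds_zero_nat s |>.comp (tendsto_add_atTop_nat 1) |>.congr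
      fun n => by simp
  have hanti : ∀ {m n : ℕ}, m ≤ n → s / ((n : ℝ) + 1) ≤ s / ((m : ℝ) + 1) := fun {m n} h => by
    have : (m : ℝ) ≤ n := by exact_mod_cast h
    gcongr
  have hU : (⋃ n : ℕ, Ioc (-(π / 2 - s / ((n : ℝ) + 1))) (π / 2 - s / ((n : ℝ) + 1)) : Set ℝ) =
      Ioo (-(π / 2)) (π / 2) := by
    ext θ
    simp only [mem_iUnion, mem_Ioc, mem_Ioo]
    constructor
    · rintro ⟨n, h3, h4⟩
      have : 0 < s / ((n : ℝ) + 1) := by positivity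
      constructor <;> linarith
    · rintro ⟨h3, h4⟩
      have hm : 0 < min (θ + π / 2) (π / 2 - θ) := lt_min (by linarith) (by linarith)
      obtain ⟨n, hn⟩ := (hlim.eventually (gt_mem_nhds hm)).exists
      rw [lt_min_iff] at hn
      refine ⟨n, ?_, ?_⟩ <;> linarith [hn.1, hn.2]
  rw [← hU]
  have hle (n : ℕ) : -(π / 2 - s / ((n : ℝ) + 1)) ≤ π / 2 - s / ((n : ℝ) + 1) := by
    have := hanti (Nat.zero_le n)
    simp at this
    linarith
  simp only [fun n : ℕ => intervalIntegral.integral_of_le (f := f) (μ := volume) (hle n)]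
  refine tendsto_setIntegral_of_monotone (fun n => measurableSet_Ioc) ?_ ?_
  · intro m n h
    have := hanti h
    exact Ioc_subset_Ioc (by linarith) (by linarith)
  · rwa [hU]

/-- Divergence theorem on a half-disk for a field which is merely bounded near the flat side and
whose angular component vanishes there. -/
lemma halfDisk_divergence {W1 W2 H : ℂ → ℝ} {c : ℂ} (hc : c.re = 0) {r r₀ B K δ : ℝ} (hr : 0 < r)
    (hrr₀ : r < r₀) (hd1 : ∀ x ∈ halfDisk c r₀, DifferentiableAt ℝ W1 x)
    (hd2 : ∀ x ∈ halfDisk c r₀, DifferentiableAt ℝ W2 x)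
    (hH : ∀ x ∈ halfDisk c r₀, fderiv ℝ W1 x 1 + fderiv ℝ W2 x Complex.I = H x)
    (hHc : ContinuousOn H (halfDisk c r₀)) (hB : ∀ x ∈ halfDisk c r, |H x| ≤ B) (hδ : 0 < δ)
    (hflat : ∀ x : ℂ, 0 < x.re → x.re < δ → |x.im - c.im| ≤ r → |W1 x| ≤ K ∧ |W2 x| ≤ K ∧
      |x.re * W2 x - (x.im - c.im) * W1 x| ≤ K * x.re) :
    ∫ x in halfDisk c r, H x = ∫ θ in Ioo (-(π / 2)) (π / 2),
      r * (Real.cos θ * W1 (circleMap c r θ) + Real.sin θ * W2 (circleMap c r θ)) := by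
  have hπ := Real.pi_pos
  have hmem {ρ θ : ℝ} (h1 : 0 < ρ) (h2 : ρ < r₀) (hθ : θ ∈ Ioo (-(π / 2)) (π / 2)) :
      circleMap c ρ θ ∈ halfDisk c r₀ := by
    refine ⟨by rwa [dist_circleMap_center c h1.le], ?_⟩
    rw [circleMap_re, hc, zero_add]
    exact mul_pos h1 (Real.cos_pos_of_mem_Ioo hθ)
  have hmem' {ρ θ : ℝ} (h1 : 0 < ρ) (h2 : ρ < r) (hθ : θ ∈ Ioo (-(π / 2)) (π / 2)) :
      circleMap c ρ θ ∈ halfDisk c r :=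
    ⟨by rwa [dist_circleMap_center c h1.le], (hmem h1 (h2.trans hrr₀) hθ).2⟩
  have him {ρ θ : ℝ} (h1 : 0 < ρ) (h2 : ρ ≤ r) : |(circleMap c ρ θ).im - c.im| ≤ r := by
    rw [circleMap_im, add_sub_cancel_left, abs_mul, abs_of_pos h1]
    calc ρ * |Real.sin θ| ≤ ρ * 1 := by gcongr; exact Real.abs_sin_le_one θ
      _ ≤ r := by linarith
  -- pointwise consequences of the bounds at the flat side
  have hK : 0 ≤ K := by
    have := (hflat ⟨δ / 2, c.im⟩ (by simpa using hδ) (by simpa using hδ) (by simpa using hr.le)).1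
    exact (abs_nonneg _).trans this
  have hrad {ρ θ : ℝ} (h1 : 0 < ρ) (h2 : ρ ≤ r) (hθ : θ ∈ Ioo (-(π / 2)) (π / 2))
      (hs : ρ * Real.cos θ < δ) :
      |Real.cos θ * W1 (circleMap c ρ θ) + Real.sin θ * W2 (circleMap c ρ θ)| ≤ 2 * K := by
    have hm := hmem h1 (h2.trans_lt hrr₀) hθ
    obtain ⟨k1, k2, -⟩ := hflat _ hm.2 (by rwa [circleMap_re, hc, zero_add]) (him h1 h2)
    calc _ ≤ |Real.cos θ| * |W1 (circleMap c ρ θ)| + |Real.sin θ| * |W2 (circleMap c ρ θ)| := by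
          rw [← abs_mul, ← abs_mul]; exact abs_add_le _ _
      _ ≤ 1 * K + 1 * K := by
          gcongr
          · exact Real.abs_cos_le_one θ
          · exact Real.abs_sin_le_one θ
      _ = 2 * K := by ring
  have hang {ρ θ : ℝ} (h1 : 0 < ρ) (h2 : ρ ≤ r) (hθ : θ ∈ Ioo (-(π / 2)) (π / 2))
      (hs : ρ * Real.cos θ < δ) :
      |-Real.sin θ * W1 (circleMap c ρ θ) + Real.cos θ * W2 (circleMap c ρ θ)| ≤
        K * Real.cos θ := by
    have hm := hmem h1 (h2.trans_lt hrr₀) hθ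
    obtain ⟨-, -, k⟩ := hflat _ hm.2 (by rwa [circleMap_re, hc, zero_add]) (him h1 h2)
    rw [circleMap_re, circleMap_im, hc, zero_add, add_sub_cancel_left] at k
    have e : ρ * Real.cos θ * W2 (circleMap c ρ θ) - ρ * Real.sin θ * W1 (circleMap c ρ θ) =
        ρ * (-Real.sin θ * W1 (circleMap c ρ θ) + Real.cos θ * W2 (circleMap c ρ θ)) := by ring
    rw [e, abs_mul, abs_of_pos h1] at k
    have : ρ * |-Real.sin θ * W1 (circleMap c ρ θ) + Real.cos θ * W2 (circleMap c ρ θ)| ≤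
        ρ * (K * Real.cos θ) := by linarith
    exact le_of_mul_le_mul_left this h1
  have hcm : Continuous fun q : ℝ × ℝ => circleMap c q.1 q.2 :=
    (differentiable_circleMap_prod c).continuous
  -- integrability of the two limiting integrands
  have hint2 : IntegrableOn (fun q : ℝ × ℝ => q.1 * H (circleMap c q.1 q.2))
      (Ioo 0 r ×ˢ Ioo (-(π / 2)) (π / 2)) := by
    have hms : MeasurableSet (Ioo 0 r ×ˢ Ioo (-(π / 2)) (π / 2) : Set (ℝ × ℝ)) :=
      measurableSet_Ioo.prod measurableSet_Ioo
    refine IntegrableOn.of_bound (C := r * B) ?_ ?_ ?_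
    · rw [Measure.volume_eq_prod, Measure.prod_prod]
      exact ENNReal.mul_lt_top (by simp) (by simp)
    · refine ContinuousOn.aestronglyMeasurable ?_ hms
      refine continuous_fst.continuousOn.mul (hHc.comp hcm.continuousOn ?_)
      rintro ⟨ρ, θ⟩ ⟨h1, h2⟩
      exact hmem h1.1 (h1.2.trans hrr₀) h2
    · refine ae_restrict_of_forall_mem hms ?_
      rintro ⟨ρ, θ⟩ ⟨h1, h2⟩
      have hb := hB _ (hmem' h1.1 h1.2 h2)
      simp only at h1 ⊢
      rw [Real.norm_eq_abs, abs_mul, abs_of_pos h1.1]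
      exact mul_le_mul h1.2.le hb (abs_nonneg _) hr.le
  set f : ℝ → ℝ := fun θ => r * (Real.cos θ * W1 (circleMap c r θ) +
    Real.sin θ * W2 (circleMap c r θ)) with hf
  have hfcont {θ : ℝ} (hθ : θ ∈ Ioo (-(π / 2)) (π / 2)) : ContinuousAt f θ := by
    have hm := hmem hr hrr₀ hθ
    have hcc : ContinuousAt (circleMap c r) θ := (continuous_circleMap c r).continuousAt
    exact continuousAt_const.mul
      ((Real.continuous_cos.continuousAt.mul ((hd1 _ hm).continuousAt.comp hcc)).add
        (Real.continuous_sin.continuousAt.mul ((hd2 _ hm).continuousAt.comp hcc)))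
  have hint1 : IntegrableOn f (Ioo (-(π / 2)) (π / 2)) := by
    set S : Set ℝ := {θ ∈ Icc (-(π / 2)) (π / 2) | δ ≤ r * Real.cos θ} with hS
    have hScomp : IsCompact S := by
      refine isCompact_Icc.of_isClosed_subset ?_ (fun θ h => h.1)
      exact isClosed_Icc.inter (isClosed_le continuous_const
        (continuous_const.mul Real.continuous_cos))
    have hSsub : ∀ θ ∈ S, θ ∈ Ioo (-(π / 2)) (π / 2) := by
      rintro θ ⟨⟨h1, h2⟩, h3⟩
      constructor
      · refine lt_of_le_of_ne h1 fun e => ?_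
        rw [← e, Real.cos_neg, Real.cos_pi_div_two] at h3
        linarith
      · refine lt_of_le_of_ne h2 fun e => ?_
        rw [e, Real.cos_pi_div_two] at h3
        linarith
    obtain ⟨C, hC⟩ := hScomp.exists_bound_of_continuousOn
      (f := f) fun θ hθ => (hfcont (hSsub θ hθ)).continuousWithinAt
    refine IntegrableOn.of_bound (C := max C (r * (2 * K))) (by simp) ?_ ?_
    · exact ContinuousOn.aestronglyMeasurable
        (fun θ hθ => (hfcont hθ).continuousWithinAt) measurableSet_Ioo
    · refine ae_restrict_of_forall_mem measurableSet_Ioo fun θ hθ => ?_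
      by_cases h : r * Real.cos θ < δ
      · refine le_trans ?_ (le_max_right _ _)
        rw [hf, Real.norm_eq_abs, abs_mul, abs_of_pos hr]
        exact mul_le_mul_of_nonneg_left (hrad hr le_rfl hθ h) hr.le
      · exact (hC θ ⟨Ioo_subset_Icc_self hθ, not_lt.1 h⟩).trans (le_max_left _ _)
  obtain ⟨s, hs0, hs⟩ : ∃ s > 0, s < r ∧ s < π / 2 ∧ s < δ ∧ r * s < δ := by
    have : 0 < min (min r (π / 2)) (min δ (δ / r)) := by positivity
    obtain ⟨s, h1, h2⟩ := exists_between this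
    simp only [lt_min_iff] at h2
    exact ⟨s, h1, h2.1.1, h2.1.2, h2.2.1, by rw [mul_comm]; exact (lt_div_iff₀ hr).1 h2.2.2⟩
  obtain ⟨hsr, hsπ, hsδ, hrsδ⟩ := hs
  set t : ℕ → ℝ := fun n => s / ((n : ℝ) + 1) with ht
  have ht0 (n : ℕ) : 0 < t n := by simp only [ht]; positivity
  have hts (n : ℕ) : t n ≤ s := by
    simp only [ht]
    exact div_le_self hs0.le (by linarith [(Nat.cast_nonneg n : (0 : ℝ) ≤ n)])
  have htlim : Tendsto t atTop (nhds 0) :=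
    tendsto_const_div_atTop_nhds_zero_nat s |>.comp (tendsto_add_atTop_nat 1) |>.congr
      fun n => by simp [ht]
  set side : ℝ → ℕ → ℝ := fun β n => ∫ ρ in t n..r,
    (-Real.sin β * W1 (circleMap c ρ β) + Real.cos β * W2 (circleMap c ρ β)) with hside
  set inner : ℕ → ℝ := fun n => ∫ θ in (-(π / 2 - t n))..(π / 2 - t n),
    t n * (Real.cos θ * W1 (circleMap c (t n) θ) + Real.sin θ * W2 (circleMap c (t n) θ)) with hinner
  have hβ (n : ℕ) : π / 2 - t n ∈ Ioo (-(π / 2)) (π / 2) :=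
    ⟨by linarith [hts n], by linarith [ht0 n]⟩
  have hα (n : ℕ) : -(π / 2 - t n) ∈ Ioo (-(π / 2)) (π / 2) :=
    ⟨by linarith [ht0 n], by linarith [hts n]⟩
  have hdiv (n : ℕ) : ∫ q in Icc (t n) r ×ˢ Icc (-(π / 2 - t n)) (π / 2 - t n),
      q.1 * H (circleMap c q.1 q.2) = side (π / 2 - t n) n - side (-(π / 2 - t n)) n +
        (∫ θ in (-(π / 2 - t n))..(π / 2 - t n), f θ) - inner n := by
    have hm : ∀ ρ ∈ Icc (t n) r, ∀ θ ∈ Icc (-(π / 2 - t n)) (π / 2 - t n),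
        circleMap c ρ θ ∈ halfDisk c r₀ := fun ρ hρ θ hθ =>
      hmem ((ht0 n).trans_le hρ.1) (hρ.2.trans_lt hrr₀)
        ⟨(hα n).1.trans_le hθ.1, hθ.2.trans_lt (hβ n).2⟩
    exact polar_divergence W1 W2 H c ((hts n).trans hsr.le) (by linarith [hts n])
      (fun ρ hρ θ hθ => hd1 _ (hm ρ hρ θ hθ)) (fun ρ hρ θ hθ => hd2 _ (hm ρ hρ θ hθ))
      (fun ρ hρ θ hθ => hH _ (hm ρ hρ θ hθ))
      (hHc.comp hcm.continuousOn fun q hq => hm q.1 hq.1 q.2 hq.2)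
  have hsidebd (β : ℝ) (n : ℕ) (hβ : β ∈ Ioo (-(π / 2)) (π / 2)) (hcos : Real.cos β ≤ t n) :
      ‖side β n‖ ≤ K * t n * r := by
    have := intervalIntegral.norm_integral_le_of_norm_le_const (a := t n) (b := r) (C := K * t n)
      (f := fun ρ => (-Real.sin β * W1 (circleMap c ρ β) + Real.cos β * W2 (circleMap c ρ β)))
      fun ρ hρ => by
        rw [uIoc_of_le ((hts n).trans hsr.le)] at hρ
        have hρ0 : 0 < ρ := (ht0 n).trans hρ.1
        refine (hang hρ0 hρ.2 hβ ?_).trans (mul_le_mul_of_nonneg_left hcos hK)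
        have hcp := Real.cos_pos_of_mem_Ioo hβ
        calc ρ * Real.cos β ≤ r * s := mul_le_mul hρ.2 (hcos.trans (hts n)) hcp.le hr.le
          _ < δ := hrsδ
    refine this.trans ?_
    have h2 : |r - t n| ≤ r := by
      rw [abs_of_nonneg (by linarith [hts n])]; linarith [ht0 n]
    exact mul_le_mul_of_nonneg_left h2 (mul_nonneg hK (ht0 n).le)
  have hcosβ (n : ℕ) : Real.cos (π / 2 - t n) ≤ t n := by
    rw [Real.cos_pi_div_two_sub]; exact Real.sin_le (ht0 n).le
  have hzero : Tendsto (fun n => K * t n * r) atTop (nhds 0) := by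
    simpa using (htlim.const_mul K).mul_const r
  have hside1 : Tendsto (fun n => side (π / 2 - t n) n) atTop (nhds 0) :=
    squeeze_zero_norm (fun n => hsidebd _ n (hβ n) (hcosβ n)) hzero
  have hside2 : Tendsto (fun n => side (-(π / 2 - t n)) n) atTop (nhds 0) :=
    squeeze_zero_norm (fun n => hsidebd _ n (hα n) (by rw [Real.cos_neg]; exact hcosβ n)) hzero
  have hinner0 : Tendsto inner atTop (nhds 0) := by
    have hz : Tendsto (fun n => t n * (2 * K) * π) atTop (nhds 0) := by
      simpa using (htlim.mul_const (2 * K)).mul_const π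
    refine squeeze_zero_norm (fun n => ?_) hz
    have hle : -(π / 2 - t n) ≤ π / 2 - t n := by linarith [hts n]
    refine (intervalIntegral.norm_integral_le_of_norm_le_const (C := t n * (2 * K)) ?_).trans ?_
    · intro θ hθ
      rw [uIoc_of_le hle] at hθ
      have hθ' : θ ∈ Ioo (-(π / 2)) (π / 2) :=
        ⟨(hα n).1.trans hθ.1, hθ.2.trans_lt (hβ n).2⟩
      rw [Real.norm_eq_abs, abs_mul, abs_of_pos (ht0 n)]
      refine mul_le_mul_of_nonneg_left
        (hrad (ht0 n) ((hts n).trans hsr.le) hθ' ?_) (ht0 n).le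
      calc t n * Real.cos θ ≤ t n * 1 := by
            exact mul_le_mul_of_nonneg_left (Real.cos_le_one θ) (ht0 n).le
        _ < δ := by linarith [hts n]
    · refine mul_le_mul_of_nonneg_left ?_ (mul_nonneg (ht0 n).le (by positivity))
      rw [abs_of_nonneg (by linarith)]
      linarith [ht0 n]
  have hL := tendsto_polar_boxes hs0 hint2
  have hR := ((hside1.sub hside2).add (tendsto_arc_integral hs0 hsπ hint1)).sub hinner0
  rw [setIntegral_halfDisk_polar H c hc r]
  refine (tendsto_nhds_unique (hL.congr hdiv) hR).trans ?_
  simp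

/-- Divergence theorem on a closed disk. -/
lemma closedBall_divergence {W1 W2 H : ℂ → ℝ} {c : ℂ} {R : ℝ} (hR : 0 ≤ R)
    (hd1 : ∀ x ∈ Metric.closedBall c R, DifferentiableAt ℝ W1 x)
    (hd2 : ∀ x ∈ Metric.closedBall c R, DifferentiableAt ℝ W2 x)
    (hH : ∀ x ∈ Metric.closedBall c R, fderiv ℝ W1 x 1 + fderiv ℝ W2 x Complex.I = H x)
    (hHc : ContinuousOn H (Metric.closedBall c R)) :
    ∫ x in Metric.closedBall c R, H x = ∫ θ in Ioc 0 (2 * π),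
      R * (Real.cos θ * W1 (circleMap c R θ) + Real.sin θ * W2 (circleMap c R θ)) := by
  have hπ := Real.pi_pos
  have hm : ∀ ρ ∈ Icc 0 R, ∀ θ : ℝ, circleMap c ρ θ ∈ Metric.closedBall c R := fun ρ hρ θ => by
    rw [Metric.mem_closedBall, dist_circleMap_center c hρ.1]; exact hρ.2
  have hcm : Continuous fun q : ℝ × ℝ => circleMap c q.1 q.2 :=
    (differentiable_circleMap_prod c).continuous
  rw [setIntegral_closedBall_polar, polar_divergence W1 W2 H c hR (by linarith)
    (fun ρ hρ θ _ => hd1 _ (hm ρ hρ θ)) (fun ρ hρ θ _ => hd2 _ (hm ρ hρ θ))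
    (fun ρ hρ θ _ => hH _ (hm ρ hρ θ)) (hHc.comp hcm.continuousOn fun q hq => hm q.1 hq.1 q.2)]
  have e (ρ : ℝ) : circleMap c ρ (-π) = circleMap c ρ π := by
    simp [circleMap_eq, -Complex.ofReal_cos, -Complex.ofReal_sin]
  simp only [e, Real.sin_neg, Real.cos_neg, Real.sin_pi, neg_zero]
  simp only [sub_self, zero_add, zero_mul, intervalIntegral.integral_zero, sub_zero]
  rw [← intervalIntegral.integral_of_le (by linarith)]
  have hper : Function.Periodic (fun θ => R * (Real.cos θ * W1 (circleMap c R θ) +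
      Real.sin θ * W2 (circleMap c R θ))) (2 * π) := by
    intro θ
    simp only [Real.cos_add_two_pi, Real.sin_add_two_pi, periodic_circleMap c R θ]
  have := hper.intervalIntegral_add_eq (-π) 0
  rw [zero_add, show -π + 2 * π = π by ring] at this
  exact this

/-! ### Fluxes of the Pohozaev field -/

/-- Divergence theorem on the half-disk minus a small disk around the point `a` where the field is
singular. The field is multiplied by a smooth cutoff vanishing near `a` and equal to `1` off
`D_ε(a)`, so that the two previous divergence theorems apply. -/
lemma punctured_divergence {V1 V2 D : ℂ → ℝ} {c a : ℂ} (hc : c.re = 0) {r r₀ B K δ ε : ℝ}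
    (hr : 0 < r) (hrr₀ : r < r₀) (hε : 0 < ε) (hball : Metric.closedBall a ε ⊆ halfDisk c r)
    (hd1 : ∀ x ∈ halfDisk c r₀ \ {a}, DifferentiableAt ℝ V1 x)
    (hd2 : ∀ x ∈ halfDisk c r₀ \ {a}, DifferentiableAt ℝ V2 x)
    (hD : ∀ x ∈ halfDisk c r₀ \ {a}, fderiv ℝ V1 x 1 + fderiv ℝ V2 x Complex.I = D x)
    (hDc : ContinuousOn D (halfDisk c r₀)) (hB : ∀ x ∈ halfDisk c r, |D x| ≤ B) (hδ : 0 < δ)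
    (hflat : ∀ x : ℂ, 0 < x.re → x.re < δ → |x.im - c.im| ≤ r → |V1 x| ≤ K ∧ |V2 x| ≤ K ∧
      |x.re * V2 x - (x.im - c.im) * V1 x| ≤ K * x.re) :
    (∫ θ in Ioo (-(π / 2)) (π / 2),
      r * (Real.cos θ * V1 (circleMap c r θ) + Real.sin θ * V2 (circleMap c r θ))) -
      (∫ θ in Ioc 0 (2 * π),
        ε * (Real.cos θ * V1 (circleMap a ε θ) + Real.sin θ * V2 (circleMap a ε θ))) =
      ∫ x in halfDisk c r \ Metric.closedBall a ε, D x := by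
  have hsub : halfDisk c r ⊆ halfDisk c r₀ := fun x hx => ⟨hx.1.trans hrr₀, hx.2⟩
  set b : ContDiffBump a := ⟨ε / 2, ε, by positivity, by linarith⟩ with hb
  set χ : ℂ → ℝ := fun x => 1 - b x with hχ
  have hχs : ContDiff ℝ 1 χ := contDiff_const.sub b.contDiff
  have hχd (x : ℂ) : DifferentiableAt ℝ χ x := hχs.differentiable (by norm_num) x
  have hχc : Continuous χ := hχs.continuous
  have hχ' (v : ℂ) : Continuous fun x => fderiv ℝ χ x v :=
    (hχs.continuous_fderiv (by norm_num)).clm_apply continuous_const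
  have hχ1 : ∀ x, ε ≤ dist x a → χ x = 1 := fun x hx => by
    simp [hχ, b.zero_of_le_dist hx]
  have hχ0 : ∀ᶠ x in nhds a, χ x = 0 := by
    filter_upwards [b.eventuallyEq_one] with x hx
    simp [hχ, hx]
  have hopen : IsOpen (halfDisk c r₀) := isOpen_halfDisk c r₀
  set W1 : ℂ → ℝ := fun x => χ x * V1 x with hW1
  set W2 : ℂ → ℝ := fun x => χ x * V2 x with hW2
  set H : ℂ → ℝ := fun x => χ x * D x + fderiv ℝ χ x 1 * V1 x + fderiv ℝ χ x Complex.I * V2 x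
    with hHdef
  have hW10 : W1 =ᶠ[nhds a] fun _ => 0 := hχ0.mono fun x hx => by simp [hW1, hx]
  have hW20 : W2 =ᶠ[nhds a] fun _ => 0 := hχ0.mono fun x hx => by simp [hW2, hx]
  have hH0 : H =ᶠ[nhds a] fun _ => 0 := by
    filter_upwards [hχ0.eventually_nhds] with x hx
    have hf : fderiv ℝ χ x = 0 := by
      have : χ =ᶠ[nhds x] fun _ => 0 := hx
      rw [this.fderiv_eq]; simp
    simp [hHdef, hx.self_of_nhds, hf]
  have hdW1 : ∀ x ∈ halfDisk c r₀, DifferentiableAt ℝ W1 x := fun x hx => by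
    by_cases h : x = a
    · rw [h]; exact (differentiableAt_const (0 : ℝ)).congr_of_eventuallyEq hW10
    · exact (hχd x).mul (hd1 x ⟨hx, h⟩)
  have hdW2 : ∀ x ∈ halfDisk c r₀, DifferentiableAt ℝ W2 x := fun x hx => by
    by_cases h : x = a
    · rw [h]; exact (differentiableAt_const (0 : ℝ)).congr_of_eventuallyEq hW20
    · exact (hχd x).mul (hd2 x ⟨hx, h⟩)
  have hdiv : ∀ x ∈ halfDisk c r₀, fderiv ℝ W1 x 1 + fderiv ℝ W2 x Complex.I = H x := fun x hx => by
    by_cases h : x = a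
    · rw [h, hW10.fderiv_eq, hW20.fderiv_eq, hH0.self_of_nhds]; simp
    · have e1 := fderiv_fun_mul (hχd x) (hd1 x ⟨hx, h⟩)
      have e2 := fderiv_fun_mul (hχd x) (hd2 x ⟨hx, h⟩)
      rw [hW1, hW2, e1, e2]
      simp only [add_apply, smul_apply, smul_eq_mul, hHdef]
      linear_combination χ x * hD x ⟨hx, h⟩
  have hHc : ContinuousOn H (halfDisk c r₀) := fun x hx => by
    by_cases h : x = a
    · rw [h]
      exact (continuousAt_const.congr hH0.symm).continuousWithinAt
    · have k1 := (hd1 x ⟨hx, h⟩).continuousAt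
      have k2 := (hd2 x ⟨hx, h⟩).continuousAt
      have k3 := hDc.continuousAt (hopen.mem_nhds hx)
      exact (((hχc.continuousAt.mul k3).add ((hχ' 1).continuousAt.mul k1)).add
        ((hχ' Complex.I).continuousAt.mul k2)).continuousWithinAt
  have hHD : ∀ x, x ∉ Metric.closedBall a ε → H x = D x := fun x hx => by
    have hn : χ =ᶠ[nhds x] fun _ => 1 := by
      filter_upwards [Metric.isClosed_closedBall.isOpen_compl.mem_nhds hx] with y hy
      rw [mem_compl_iff, Metric.mem_closedBall, not_le] at hy
      exact hχ1 y hy.le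
    have hf : fderiv ℝ χ x = 0 := by rw [hn.fderiv_eq]; simp
    simp [hHdef, hn.self_of_nhds, hf]
  obtain ⟨C, hC⟩ := (isCompact_closedBall a ε).exists_bound_of_continuousOn
    (hHc.mono (hball.trans hsub))
  have hHB : ∀ x ∈ halfDisk c r, |H x| ≤ max B C := fun x hx => by
    by_cases h : x ∈ Metric.closedBall a ε
    · exact (hC x h).trans (le_max_right _ _)
    · rw [hHD x h]; exact (hB x hx).trans (le_max_left _ _)
  have hae : ε < a.re := by
    have : a - (ε : ℂ) ∈ Metric.closedBall a ε := by
      simp [Metric.mem_closedBall, abs_of_pos hε]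
    have := (hball this).2
    simp at this
    exact this
  -- near the flat side the cutoff is `1`
  have hflatW : ∀ x : ℂ, 0 < x.re → x.re < min δ (a.re - ε) → |x.im - c.im| ≤ r → |W1 x| ≤ K ∧
      |W2 x| ≤ K ∧ |x.re * W2 x - (x.im - c.im) * W1 x| ≤ K * x.re := fun x h1 h2 h3 => by
    have hd : ε ≤ dist x a := by
      have h4 := Complex.abs_re_le_norm (x - a)
      rw [Complex.dist_eq]
      rw [Complex.sub_re] at h4
      have h5 : x.re < a.re - ε := h2.trans_le (min_le_right _ _)
      have := neg_abs_le (x.re - a.re)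
      linarith
    simp only [hW1, hW2, hχ1 x hd, one_mul]
    exact hflat x h1 (h2.trans_le (min_le_left _ _)) h3
  have I1 := halfDisk_divergence hc hr hrr₀ hdW1 hdW2 hdiv hHc hHB
    (lt_min hδ (by linarith)) hflatW
  have hbs := hball.trans hsub
  have I2 := closedBall_divergence hε.le (fun x hx => hdW1 x (hbs hx)) (fun x hx => hdW2 x (hbs hx))
    (fun x hx => hdiv x (hbs hx)) (hHc.mono hbs)
  have hHint : IntegrableOn H (halfDisk c r) := by
    refine IntegrableOn.of_bound (C := max B C) ?_ ?_ ?_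
    · exact (measure_mono (fun x hx => hx.1 : halfDisk c r ⊆ Metric.ball c r)).trans_lt
        measure_ball_lt_top
    · exact (hHc.mono hsub).aestronglyMeasurable (measurableSet_halfDisk c r)
    · exact ae_restrict_of_forall_mem (measurableSet_halfDisk c r) hHB
  have I3 := setIntegral_sdiff (μ := volume) Metric.isClosed_closedBall.measurableSet hHint hball
  have I4 : ∫ x in halfDisk c r \ Metric.closedBall a ε, H x =
      ∫ x in halfDisk c r \ Metric.closedBall a ε, D x :=
    setIntegral_congr_fun ((measurableSet_halfDisk c r).diff
      Metric.isClosed_closedBall.measurableSet) fun x hx => hHD x hx.2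
  have hball_out : ∀ x, x ∉ Metric.ball a ε → χ x = 1 := fun x hx => hχ1 x (not_lt.1 hx)
  -- on both boundary curves the cutoff is `1`
  have J1 (θ : ℝ) : χ (circleMap c r θ) = 1 := by
    refine hball_out _ fun h => ?_
    have h1 := (hball (Metric.ball_subset_closedBall h)).1
    rw [dist_circleMap_center c hr.le] at h1
    exact lt_irrefl _ h1
  have J2 (θ : ℝ) : χ (circleMap a ε θ) = 1 := hχ1 _ (dist_circleMap_center a hε.le θ).ge
  simp only [hW1, hW2, J1, one_mul] at I1
  simp only [hW1, hW2, J2, one_mul] at I2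
  rw [← I4, I3, I1, I2]

/-- The bounds on the magnetic gradient near the flat side, restated for the Pohozaev field. The
angular component is small because `X = x − π(a)` is radial and `(i∇+A)φ·X` vanishes linearly. -/
lemma pohoField_flat {a : ℂ} {φ : ℂ → ℂ} {lam r L P M : ℝ} {p : ℂ → ℝ} (hlam : 0 < lam) (hL : 0 < L)
    {x : ℂ} (hx0 : 0 < x.re) (hx1 : x.re ≤ 1) (hxr : |x.im - a.im| ≤ r)
    (h1 : ‖mg1 a φ x‖ ≤ L) (h2 : ‖mg2 a φ x‖ ≤ L * x.re) (hp : |p x| ≤ P) (hφ : ‖φ x‖ ≤ M) :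
    |pohoField1 a φ lam p x| ≤ 2 * (1 + r) ^ 2 * (L ^ 2 + lam * P * M ^ 2) ∧
    |pohoField2 a φ lam p x| ≤ 2 * (1 + r) ^ 2 * (L ^ 2 + lam * P * M ^ 2) ∧
      |x.re * pohoField2 a φ lam p x - (x.im - a.im) * pohoField1 a φ lam p x| ≤
        2 * (1 + r) ^ 2 * (L ^ 2 + lam * P * M ^ 2) * x.re := by
  have hr0 : 0 ≤ r := (abs_nonneg _).trans hxr
  have hP0 : 0 ≤ P := (abs_nonneg _).trans hp
  have hM0 : 0 ≤ M := (norm_nonneg _).trans hφ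
  set w1 := mg1 a φ x with hw1
  set w2 := mg2 a φ x with hw2
  set Y := x.im - a.im with hY
  set S : ℂ := w1 * (x.re : ℂ) + w2 * (Y : ℂ) with hS
  set G : ℝ := -(1 / 2) * mgSq a φ x + 1 / 2 * lam * p x * ‖φ x‖ ^ 2 with hG
  set N : ℝ := L ^ 2 + lam * P * M ^ 2 with hN
  have e1 : pohoField1 a φ lam p x = (w1 * (starRingEnd ℂ) S).re + G * x.re := by
    simp only [pohoField1, pohoIntegrand, Complex.sub_re, Complex.sub_im, proj_re, proj_im,
      sub_zero, Complex.ofReal_one, Complex.ofReal_zero, mul_one, mul_zero, add_zero, hG]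
    rw [← hw1, ← hw2, ← hY, ← hS]
    ring
  have e2 : pohoField2 a φ lam p x = (w2 * (starRingEnd ℂ) S).re + G * Y := by
    simp only [pohoField2, pohoIntegrand, Complex.sub_re, Complex.sub_im, proj_re, proj_im,
      sub_zero, Complex.ofReal_one, Complex.ofReal_zero, mul_one, mul_zero, zero_add, hG]
    rw [← hw1, ← hw2, ← hY, ← hS]
    ring
  have e3 : x.re * pohoField2 a φ lam p x - Y * pohoField1 a φ lam p x =
      (((x.re : ℂ) * w2 - (Y : ℂ) * w1) * (starRingEnd ℂ) S).re := by
    have e : ((x.re : ℂ) * w2 - (Y : ℂ) * w1) * (starRingEnd ℂ) S =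
        (x.re : ℂ) * (w2 * (starRingEnd ℂ) S) - (Y : ℂ) * (w1 * (starRingEnd ℂ) S) := by ring
    rw [e1, e2, e, Complex.sub_re, Complex.re_ofReal_mul, Complex.re_ofReal_mul]
    ring
  have h2' : ‖w2‖ ≤ L := h2.trans (by nlinarith)
  have hSn : ‖S‖ ≤ L * (1 + r) * x.re := by
    calc ‖S‖ ≤ ‖w1 * (x.re : ℂ)‖ + ‖w2 * (Y : ℂ)‖ := norm_add_le _ _
      _ = ‖w1‖ * x.re + ‖w2‖ * |Y| := by
          rw [norm_mul, norm_mul, Complex.norm_real, Complex.norm_real, Real.norm_eq_abs,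
            Real.norm_eq_abs, abs_of_pos hx0]
      _ ≤ L * x.re + L * x.re * r := by gcongr
      _ = L * (1 + r) * x.re := by ring
  have hSn' : ‖S‖ ≤ L * (1 + r) := hSn.trans (mul_le_of_le_one_right (by positivity) hx1)
  have hGn : |G| ≤ N := by
    have m1 : 0 ≤ mgSq a φ x := by unfold mgSq; positivity
    have m2 : mgSq a φ x ≤ 2 * L ^ 2 := by
      have k1 := pow_le_pow_left₀ (norm_nonneg w1) h1 2
      have k2 := pow_le_pow_left₀ (norm_nonneg w2) h2' 2
      unfold mgSq
      rw [← hw1, ← hw2]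
      linarith
    have m3 : |1 / 2 * lam * p x * ‖φ x‖ ^ 2| ≤ 1 / 2 * lam * P * M ^ 2 := by
      rw [abs_mul, abs_mul, abs_of_pos (by positivity : 0 < 1 / 2 * lam), abs_pow, abs_norm]
      gcongr
    have m4 : 0 ≤ lam * P * M ^ 2 := by positivity
    have := abs_le.1 m3
    rw [abs_le]
    constructor <;> linarith [this.1, this.2]
  have hconj (w : ℂ) : |(w * (starRingEnd ℂ) S).re| ≤ ‖w‖ * ‖S‖ := by
    refine (Complex.abs_re_le_norm _).trans ?_
    rw [norm_mul, RCLike.norm_conj]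
  have hLN : L ^ 2 ≤ N := by
    have : 0 ≤ lam * P * M ^ 2 := by positivity
    linarith
  have hN0 : 0 ≤ N := (sq_nonneg L).trans hLN
  have hfin : L * (L * (1 + r)) + N * (1 + r) ≤ 2 * (1 + r) ^ 2 * N := by
    nlinarith [mul_nonneg hN0 hr0, mul_nonneg (mul_nonneg hN0 hr0) hr0,
      mul_le_mul_of_nonneg_right hLN hr0]
  refine ⟨?_, ?_, ?_⟩
  · rw [e1]
    refine le_trans ?_ hfin
    calc _ ≤ |(w1 * (starRingEnd ℂ) S).re| + |G * x.re| := abs_add_le _ _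
      _ ≤ ‖w1‖ * ‖S‖ + |G| * |x.re| := by rw [abs_mul G]; gcongr; exact hconj _
      _ ≤ L * (L * (1 + r)) + N * (1 + r) := by
          gcongr
          rw [abs_of_pos hx0]; linarith
  · rw [e2]
    refine le_trans ?_ hfin
    calc _ ≤ |(w2 * (starRingEnd ℂ) S).re| + |G * Y| := abs_add_le _ _
      _ ≤ ‖w2‖ * ‖S‖ + |G| * |Y| := by rw [abs_mul G]; gcongr; exact hconj _
      _ ≤ L * (L * (1 + r)) + N * (1 + r) := by
          gcongr
          linarith
  · rw [e3]
    have hw : ‖(x.re : ℂ) * w2 - (Y : ℂ) * w1‖ ≤ L * (1 + r) := by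
      calc _ ≤ ‖(x.re : ℂ) * w2‖ + ‖(Y : ℂ) * w1‖ := norm_sub_le _ _
        _ = x.re * ‖w2‖ + |Y| * ‖w1‖ := by
            rw [norm_mul, norm_mul, Complex.norm_real, Complex.norm_real, Real.norm_eq_abs,
              Real.norm_eq_abs, abs_of_pos hx0]
        _ ≤ 1 * L + r * L := by gcongr
        _ = L * (1 + r) := by ring
    calc _ ≤ (L * (1 + r)) * (L * (1 + r) * x.re) :=
          (hconj _).trans (mul_le_mul hw hSn (norm_nonneg _) (by positivity))
      _ = (1 + r) ^ 2 * L ^ 2 * x.re := by ring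
      _ ≤ 2 * (1 + r) ^ 2 * N * x.re := by
          refine mul_le_mul_of_nonneg_right ?_ hx0.le
          nlinarith [mul_le_mul_of_nonneg_left hLN (sq_nonneg (1 + r)),
            mul_nonneg (sq_nonneg (1 + r)) hN0]

/-- The component of the Pohozaev field in the direction `(s, t)`; on `∂D_ε(a)` its first summand is
the integrand defining `M_a`. -/
lemma pohoField_normal (a : ℂ) (φ : ℂ → ℂ) (lam : ℝ) (p : ℂ → ℝ) (x : ℂ) (s t : ℝ) :
    s * pohoField1 a φ lam p x + t * pohoField2 a φ lam p x = pohoIntegrand a φ x s t +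
      1 / 2 * lam * p x * ‖φ x‖ ^ 2 * ((x - proj a).re * s + (x - proj a).im * t) := by
  simp only [pohoField1, pohoField2, pohoIntegrand]
  simp
  ring

/-- The normal component of the Pohozaev field on a circle centred at `π(a)`. -/
lemma pohoField_arc (a : ℂ) (φ : ℂ → ℂ) (lam : ℝ) (p : ℂ → ℝ) (r θ : ℝ) :
    r * (Real.cos θ * pohoField1 a φ lam p (circleMap (proj a) r θ) +
      Real.sin θ * pohoField2 a φ lam p (circleMap (proj a) r θ)) =
    -(r / 2) * (r * (mgSq a φ (circleMap (proj a) r θ) -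
            2 * ‖mg1 a φ (circleMap (proj a) r θ) * (Real.cos θ : ℂ) +
                  mg2 a φ (circleMap (proj a) r θ) * (Real.sin θ : ℂ)‖ ^ 2 -
            lam * p (circleMap (proj a) r θ) * ‖φ (circleMap (proj a) r θ)‖ ^ 2)) := by
  rw [pohoField_normal]
  have hre : (circleMap (proj a) r θ - proj a).re = r * Real.cos θ := by
    rw [Complex.sub_re, circleMap_re]; ring
  have him : (circleMap (proj a) r θ - proj a).im = r * Real.sin θ := by
    rw [Complex.sub_im, circleMap_im]; ring
  simp only [pohoIntegrand, hre, him]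
  generalize circleMap (proj a) r θ = x
  have e : mg1 a φ x * ((r * Real.cos θ : ℝ) : ℂ) + mg2 a φ x * ((r * Real.sin θ : ℝ) : ℂ) =
      (r : ℂ) * (mg1 a φ x * (Real.cos θ : ℂ) + mg2 a φ x * (Real.sin θ : ℂ)) := by
    push_cast; ring
  rw [e]
  generalize mg1 a φ x * (Real.cos θ : ℂ) + mg2 a φ x * (Real.sin θ : ℂ) = w
  have e2 : (w * (starRingEnd ℂ) ((r : ℂ) * w)).re = r * ‖w‖ ^ 2 := by
    rw [Complex.sq_norm, Complex.normSq_apply]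
    simp
    ring
  rw [e2]
  linear_combination (r * (1 / 2 * lam * p x * ‖φ x‖ ^ 2 * r - 1 / 2 * mgSq a φ x * r)) *
    Real.sin_sq_add_cos_sq θ

/-! ### The identity -/

/-- Pohozaev-type identity: under the standing hypotheses, the vanishing expansion of
order `1/2` at `a`, and denoting by `Ma` the (existing) limit of the `∂D_ε(a)`
boundary integrals, for every `a₁ < r < r₀` one has
`(r/2)∫_{∂D_r⁺}{|(i∇+A_a)φ|² − 2|(i∇+A_a)φ·ν|² − λp|φ|²}dσ
  + λ∫_{D_r⁺}|φ|²(p + ∇p·(x−π(a))/2)dx + M_a = 0`. -/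
theorem pohozaev_identity
    (a : ℂ) (ha : 0 < a.re)
    (lam r₀ : ℝ) (hlam : 0 < lam) (har₀ : a.re < r₀)
    (p : ℂ → ℝ) (hp : ContDiff ℝ 1 p) (hppos : ∀ x, 0 < p x)
    (hpbdd : BddAbove (Set.range p))
    (hpgrad : ∃ Cg : ℝ, ∀ x, ‖fderiv ℝ p x‖ ≤ Cg)
    (hsmall : 2 * lam * sSup (Set.range p) * r₀ ^ 2 < 1)
    (φ : ℂ → ℂ)
    (hcont : ContinuousOn φ (closure (halfDisk (proj a) r₀)))
    (hbc : ∀ x ∈ closure (halfDisk (proj a) r₀), x.re = 0 → φ x = 0)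
    (hC2 : ContDiffOn ℝ 2 φ (halfDisk (proj a) r₀ \ {a}))
    (heq : ∀ x ∈ halfDisk (proj a) r₀ \ {a},
      magLap a φ x = ((lam * p x : ℝ) : ℂ) * φ x)
    (hint : IntegrableOn (mgSq a φ) (halfDisk (proj a) r₀))
    (c₁ d₁ : ℝ) (hcd : ¬(c₁ = 0 ∧ d₁ = 0))
    (hexp : (fun x => φ x - modelHalf a c₁ d₁ x) =o[nhdsWithin a {a}ᶜ]
      fun x => Real.sqrt ‖x - a‖)
    (hexp' : (fun x => fderiv ℝ φ x - fderiv ℝ (modelHalf a c₁ d₁) x)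
      =o[nhdsWithin a {a}ᶜ] fun x => (Real.sqrt ‖x - a‖)⁻¹)
    (Ma : ℝ) (hMa : Tendsto (pohoBdry a φ) (nhdsWithin 0 (Set.Ioi 0)) (nhds Ma)) :
    ∀ r : ℝ, a.re < r → r < r₀ →
      (r / 2) * (∫ θ in Ioo (-(π / 2)) (π / 2), r *
          (mgSq a φ (circleMap (proj a) r θ) -
            2 * ‖mg1 a φ (circleMap (proj a) r θ) * (Real.cos θ : ℂ) +
                  mg2 a φ (circleMap (proj a) r θ) * (Real.sin θ : ℂ)‖ ^ 2 -
            lam * p (circleMap (proj a) r θ) * ‖φ (circleMap (proj a) r θ)‖ ^ 2)) +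
        lam * (∫ x in halfDisk (proj a) r,
          ‖φ x‖ ^ 2 * (p x + fderiv ℝ p x (x - proj a) / 2)) + Ma = 0 := by
  intro r har hr
  have hr0 : 0 < r := ha.trans har
  have hr₀0 : 0 < r₀ := hr0.trans hr
  obtain ⟨Cg, hCg⟩ := hpgrad
  have hpd : Differentiable ℝ p := hp.differentiable (by norm_num)
  set P : ℝ := sSup (Set.range p) with hPdef
  have hP : ∀ x, |p x| ≤ P := fun x => by
    rw [abs_of_pos (hppos x)]; exact le_csSup hpbdd (mem_range_self x)
  have hP0 : 0 ≤ P := (abs_nonneg _).trans (hP 0)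
  have hUopen : IsOpen (halfDisk (proj a) r₀ \ {a}) :=
    (isOpen_halfDisk _ _).sdiff isClosed_singleton
  have hC2' : ∀ x ∈ halfDisk (proj a) r₀ \ {a}, ContDiffAt ℝ 2 φ x := fun x hx =>
    hC2.contDiffAt (hUopen.mem_nhds hx)
  have hcomp : IsCompact (closure (halfDisk (proj a) r₀)) := by
    have hb : Bornology.IsBounded (halfDisk (proj a) r₀) :=
      Metric.isBounded_ball.subset (fun x hx => hx.1 : halfDisk (proj a) r₀ ⊆ Metric.ball (proj a) r₀)
    exact hb.isCompact_closure
  obtain ⟨M, hM⟩ := hcomp.exists_bound_of_continuousOn hcont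
  have hsubr : halfDisk (proj a) r ⊆ halfDisk (proj a) r₀ := fun x hx => ⟨hx.1.trans hr, hx.2⟩
  -- the divergence of the Pohozaev field is continuous up to the boundary
  have hDcl : ContinuousOn (pohoDens a φ lam p) (closure (halfDisk (proj a) r₀)) := by
    have h1 : Continuous fun x : ℂ => p x + fderiv ℝ p x (x - proj a) / 2 :=
      hp.continuous.add (((hp.continuous_fderiv (by norm_num)).clm_apply
        (continuous_id.sub continuous_const)).div_const 2)
    exact continuousOn_const.mul ((hcont.norm.pow 2).mul h1.continuousOn)
  obtain ⟨B, hB⟩ := hcomp.exists_bound_of_continuousOn hDcl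
  have hDr : ∀ x ∈ halfDisk (proj a) r, |pohoDens a φ lam p x| ≤ B := fun x hx =>
    hB x (subset_closure (hsubr hx))
  -- bounds on the field near the flat side
  obtain ⟨L, hL, δ₀, hδ₀, hflat₀⟩ := flat_bound ha hlam hr0 hr hpd hP hCg hcont hbc hC2' heq
  obtain ⟨δ, hδ, hδ1, hδδ, hδr⟩ : ∃ δ > 0, δ ≤ 1 ∧ δ ≤ δ₀ ∧ δ ^ 2 + r ^ 2 < r₀ ^ 2 := by
    have h1 : 0 < r₀ ^ 2 - r ^ 2 := by nlinarith
    refine ⟨min (min 1 δ₀) (√((r₀ ^ 2 - r ^ 2) / 2)), by positivity,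
      (min_le_left _ _).trans (min_le_left _ _), (min_le_left _ _).trans (min_le_right _ _), ?_⟩
    have := pow_le_pow_left₀ (by positivity)
      (min_le_right (min 1 δ₀) (√((r₀ ^ 2 - r ^ 2) / 2))) 2
    rw [Real.sq_sqrt (by positivity)] at this
    linarith
  have hflat : ∀ x : ℂ, 0 < x.re → x.re < δ → |x.im - (proj a).im| ≤ r →
      |pohoField1 a φ lam p x| ≤ 2 * (1 + r) ^ 2 * (L ^ 2 + lam * P * M ^ 2) ∧
      |pohoField2 a φ lam p x| ≤ 2 * (1 + r) ^ 2 * (L ^ 2 + lam * P * M ^ 2) ∧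
      |x.re * pohoField2 a φ lam p x - (x.im - (proj a).im) * pohoField1 a φ lam p x| ≤
        2 * (1 + r) ^ 2 * (L ^ 2 + lam * P * M ^ 2) * x.re := fun x h1 h2 h3 => by
    rw [proj_im] at h3 ⊢
    obtain ⟨k1, k2⟩ := hflat₀ x h1 (h2.trans_le hδδ) h3
    have hxm : x ∈ halfDisk (proj a) r₀ := by
      refine ⟨(dist_proj_lt_iff hr₀0).2 ?_, h1⟩
      have := sq_le_sq' (by linarith [(abs_le.1 h3).1]) (abs_le.1 h3).2
      have := pow_le_pow_left₀ h1.le h2.le 2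
      linarith
    exact pohoField_flat hlam hL h1 (h2.le.trans hδ1) h3 k1 k2 (hP x) (hM x (subset_closure hxm))
  have ham : a ∈ halfDisk (proj a) r := by
    refine ⟨(dist_proj_lt_iff hr0).2 ?_, ha⟩
    rw [sub_self]
    nlinarith
  set G : ℝ := ∫ θ in Ioo (-(π / 2)) (π / 2),
    r * (Real.cos θ * pohoField1 a φ lam p (circleMap (proj a) r θ) +
      Real.sin θ * pohoField2 a φ lam p (circleMap (proj a) r θ)) with hG
  -- the part of the flux through `∂D_ε(a)` which does not enter `M_a`
  set extra : ℝ → ℝ := fun ε => ∫ θ in Ioc 0 (2 * π), ε *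
    (1 / 2 * lam * p (circleMap a ε θ) * ‖φ (circleMap a ε θ)‖ ^ 2 *
      ((circleMap a ε θ - proj a).re * Real.cos θ + (circleMap a ε θ - proj a).im * Real.sin θ))
    with hextra
  obtain ⟨ε₀, hε₀, hε₀ball⟩ := Metric.nhds_basis_closedBall.mem_iff.1
    ((isOpen_halfDisk (proj a) r).mem_nhds ham)
  have hsmallε : ∀ᶠ ε in nhdsWithin (0 : ℝ) (Ioi 0), 0 < ε ∧ ε ≤ ε₀ := by
    have h1 : ∀ᶠ ε in nhdsWithin (0 : ℝ) (Ioi 0), ε ≤ ε₀ :=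
      nhdsWithin_le_nhds (Iic_mem_nhds hε₀)
    filter_upwards [h1, self_mem_nhdsWithin] with ε h1 h2 using ⟨h2, h1⟩
  have hid : ∀ ε, 0 < ε → ε ≤ ε₀ → G - (pohoBdry a φ ε + extra ε) =
      (∫ x in halfDisk (proj a) r, pohoDens a φ lam p x) -
        ∫ x in Metric.closedBall a ε, pohoDens a φ lam p x := fun ε hε hεε => by
    have hball : Metric.closedBall a ε ⊆ halfDisk (proj a) r :=
      (Metric.closedBall_subset_closedBall hεε).trans hε₀ball
    have key := punctured_divergence (proj_re a) hr0 hr hε hball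
      (fun x hx => differentiableAt_pohoField1 (lam := lam) hx.2 (hC2' x hx) (hpd x))
      (fun x hx => differentiableAt_pohoField2 (lam := lam) hx.2 (hC2' x hx) (hpd x))
      (fun x hx => pohoField_div hx.2 (hC2' x hx) (hpd x) (heq x hx))
      (hDcl.mono subset_closure) hDr hδ hflat
    have hDint : IntegrableOn (pohoDens a φ lam p) (halfDisk (proj a) r) :=
      (hDcl.integrableOn_compact hcomp).mono_set (hsubr.trans subset_closure)
    rw [setIntegral_sdiff Metric.isClosed_closedBall.measurableSet hDint hball, ← hG] at key
    rw [← key]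
    congr 1
    have hcm : ∀ θ : ℝ, circleMap a ε θ ∈ halfDisk (proj a) r₀ \ {a} := fun θ => by
      refine ⟨hsubr (hball ?_), circleMap_ne_center hε.ne'⟩
      rw [Metric.mem_closedBall, dist_circleMap_center a hε.le]
    have hcc : Continuous (circleMap a ε) := continuous_circleMap a ε
    have hφc : Continuous fun θ => φ (circleMap a ε θ) := continuous_iff_continuousAt.2 fun θ =>
      ((hC2' _ (hcm θ)).continuousAt.comp hcc.continuousAt :)
    have hV1 : Continuous fun θ => pohoField1 a φ lam p (circleMap a ε θ) :=
      continuous_iff_continuousAt.2 fun θ => ((differentiableAt_pohoField1 (hcm θ).2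
        (hC2' _ (hcm θ)) (hpd _)).continuousAt.comp hcc.continuousAt :)
    have hV2 : Continuous fun θ => pohoField2 a φ lam p (circleMap a ε θ) :=
      continuous_iff_continuousAt.2 fun θ => ((differentiableAt_pohoField2 (hcm θ).2
        (hC2' _ (hcm θ)) (hpd _)).continuousAt.comp hcc.continuousAt :)
    have c1 : Continuous fun θ => ε * (Real.cos θ * pohoField1 a φ lam p (circleMap a ε θ) +
        Real.sin θ * pohoField2 a φ lam p (circleMap a ε θ)) :=
      continuous_const.mul ((Real.continuous_cos.mul hV1).add (Real.continuous_sin.mul hV2))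
    have c2 : Continuous fun θ => ε *
        (1 / 2 * lam * p (circleMap a ε θ) * ‖φ (circleMap a ε θ)‖ ^ 2 *
        ((circleMap a ε θ - proj a).re * Real.cos θ +
          (circleMap a ε θ - proj a).im * Real.sin θ)) := by
      have hpc : Continuous fun θ => p (circleMap a ε θ) := hp.continuous.comp hcc
      have hre : Continuous fun θ => (circleMap a ε θ - proj a).re :=
        Complex.continuous_re.comp (hcc.sub continuous_const)
      have him : Continuous fun θ => (circleMap a ε θ - proj a).im :=
        Complex.continuous_im.comp (hcc.sub continuous_const)
      exact continuous_const.mul (((continuous_const.mul hpc).mul (hφc.norm.pow 2)).mul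
        ((hre.mul Real.continuous_cos).add (him.mul Real.continuous_sin)))
    rw [← eq_sub_iff_add_eq, pohoBdry, hextra]
    simp only
    rw [← integral_sub c1.integrableOn_Ioc c2.integrableOn_Ioc]
    refine integral_congr_ae (Eventually.of_forall fun θ => ?_)
    simp only
    rw [pohoField_normal]
    ring
  have hextra0 : Tendsto extra (nhdsWithin 0 (Ioi 0)) (nhds 0) := by
    set C : ℝ := 1 / 2 * lam * P * M ^ 2 * (r₀ + r₀) with hC
    have hz : Tendsto (fun ε : ℝ => ε * C * (2 * π)) (nhdsWithin 0 (Ioi 0)) (nhds 0) := by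
      have : Continuous fun ε : ℝ => ε * C * (2 * π) := by fun_prop
      simpa using (this.tendsto 0).mono_left nhdsWithin_le_nhds
    refine squeeze_zero_norm' ?_ hz
    filter_upwards [hsmallε] with ε hε
    have hball : Metric.closedBall a ε ⊆ halfDisk (proj a) r :=
      (Metric.closedBall_subset_closedBall hε.2).trans hε₀ball
    have hbd := norm_setIntegral_le_of_norm_le_const (μ := volume) (s := Ioc 0 (2 * π))
      (C := ε * C) (f := fun θ => ε *
        (1 / 2 * lam * p (circleMap a ε θ) * ‖φ (circleMap a ε θ)‖ ^ 2 *
        ((circleMap a ε θ - proj a).re * Real.cos θ +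
          (circleMap a ε θ - proj a).im * Real.sin θ))) measure_Ioc_lt_top fun θ _ => by
        have hx : circleMap a ε θ ∈ halfDisk (proj a) r₀ := hsubr (hball (by
          rw [Metric.mem_closedBall, dist_circleMap_center a hε.1.le]))
        generalize circleMap a ε θ = x at hx ⊢
        have hn : ‖x - proj a‖ ≤ r₀ := by rw [← Complex.dist_eq]; exact hx.1.le
        have q1 := (Complex.abs_re_le_norm (x - proj a)).trans hn
        have q2 := (Complex.abs_im_le_norm (x - proj a)).trans hn
        have q3 := hM x (subset_closure hx)
        have q4 : |(x - proj a).re * Real.cos θ + (x - proj a).im * Real.sin θ| ≤ r₀ + r₀ := by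
          refine (abs_add_le _ _).trans ?_
          rw [abs_mul, abs_mul]
          exact add_le_add
            ((mul_le_of_le_one_right (abs_nonneg _) (Real.abs_cos_le_one θ)).trans q1)
            ((mul_le_of_le_one_right (abs_nonneg _) (Real.abs_sin_le_one θ)).trans q2)
        rw [Real.norm_eq_abs, abs_mul, abs_of_pos hε.1, abs_mul, abs_mul, abs_mul,
          abs_of_pos (by positivity : 0 < 1 / 2 * lam), abs_pow, abs_norm, hC]
        refine mul_le_mul_of_nonneg_left ?_ hε.1.le
        have := hP x
        gcongr
    refine hbd.trans_eq ?_
    simp [Measure.real, Real.pi_pos.le]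
  have hball0 : Tendsto (fun ε => ∫ x in Metric.closedBall a ε, pohoDens a φ lam p x)
      (nhdsWithin 0 (Ioi 0)) (nhds 0) := by
    have hz : Tendsto (fun ε : ℝ => B * (ε ^ 2 * π)) (nhdsWithin 0 (Ioi 0)) (nhds 0) := by
      have : Continuous fun ε : ℝ => B * (ε ^ 2 * π) := by fun_prop
      simpa using (this.tendsto 0).mono_left nhdsWithin_le_nhds
    refine squeeze_zero_norm' ?_ hz
    filter_upwards [hsmallε] with ε hε
    have hball : Metric.closedBall a ε ⊆ halfDisk (proj a) r :=
      (Metric.closedBall_subset_closedBall hε.2).trans hε₀ball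
    refine (norm_setIntegral_le_of_norm_le_const (C := B) measure_closedBall_lt_top
      fun x hx => hDr x (hball hx)).trans_eq ?_
    rw [Measure.real, Complex.volume_closedBall, ENNReal.toReal_mul, ENNReal.toReal_pow,
      ENNReal.toReal_ofReal hε.1.le]
    rfl
  have hlim1 : Tendsto (fun ε => G - (pohoBdry a φ ε + extra ε)) (nhdsWithin 0 (Ioi 0))
      (nhds (G - (Ma + 0))) := tendsto_const_nhds.sub (hMa.add hextra0)
  have hlim2 : Tendsto (fun ε => G - (pohoBdry a φ ε + extra ε)) (nhdsWithin 0 (Ioi 0))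
      (nhds ((∫ x in halfDisk (proj a) r, pohoDens a φ lam p x) - 0)) :=
    (tendsto_const_nhds.sub hball0).congr' (hsmallε.mono fun ε hε => (hid ε hε.1 hε.2).symm)
  have hfin := tendsto_nhds_unique hlim1 hlim2
  simp only [hG, pohoField_arc, pohoDens, integral_const_mul] at hfin ⊢
  linarith

end
end
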